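/- arXiv:1212.1377 — 3 statements merged into one kernel-verified Lean document; each statement's English description precedes it below -/
import Mathlib

section
/- In the antithetic Milstein setting, define the path averages X^c_ave = N^{−1} Σ_{n=0}^{N−1} (1/2)(X^c_n + X^c_{n+1}), X^f_ave = N^{−1} Σ_{n=0}^{N−1} (1/4)(X^f_n + 2X^f_{n+1/2} + X^f_{n+1}), and X^a_ave = N^{−1} Σ_{n=0}^{N−1} (1/4)(X^a_n + 2X^a_{n+1/2} + X^a_{n+1}) (these equal T^{−1}∫₀^T of the respective piecewise linear interpolants). Let P : ℝ^d → ℝ be twice continuously differentiable with uniformly bounded first and second derivatives. Then there exists a constant K, independent of N, such that for every N ≥ 1 (with Δt = T/N), E[ ( (1/2)(P(X^f_ave) + P(X^a_ave)) − P(X^c_ave) )² ] ≤ K · Δt². -/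
open MeasureTheory ProbabilityTheory

/-- `h_{ijk}(x) = ½ ∑_l g_{lj}(x) ∂g_{ik}/∂x_l (x)`. -/
noncomputable def milsteinH {d m : ℕ} (g : (Fin d → ℝ) → Fin d → Fin m → ℝ)
    (x : Fin d → ℝ) (i : Fin d) (j k : Fin m) : ℝ :=
  1 / 2 * ∑ l : Fin d, g x l j * fderiv ℝ (fun y => g y i k) x (Pi.single l 1)

/-- One step of the Milstein scheme with the Lévy areas omitted:
`x_i ↦ x_i + f_i(x) dt + ∑_j g_{ij}(x) dw_j + ∑_{j,k} h_{ijk}(x)(dw_j dw_k − δ_{jk} dt)`. -/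
noncomputable def milsteinStep {d m : ℕ} (f : (Fin d → ℝ) → Fin d → ℝ)
    (g : (Fin d → ℝ) → Fin d → Fin m → ℝ) (dt : ℝ)
    (x : Fin d → ℝ) (dw : Fin m → ℝ) : Fin d → ℝ :=
  fun i => x i + f x i * dt + (∑ j : Fin m, g x i j * dw j)
    + ∑ j : Fin m, ∑ k : Fin m,
        milsteinH g x i j k * (dw j * dw k - if j = k then dt else 0)

/-- Scales `s`, `v`, `z` used to measure the size of quantities. -/
structure AMGauge (ι : Type*) where
  s : ι → ℝ
  v : ι → ℝ
  z : ι → ℝ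
  S0 : ℝ
  s_pos : ∀ p, 0 < s p
  s_le : ∀ p, s p ≤ S0
  s_le_v : ∀ p, s p ≤ v p
  one_le_z : ∀ p, 1 ≤ z p

/-- `X = O(s^a v^b z^q)` for some `q`, uniformly. -/
def AMBO {ι E : Type*} [NormedAddCommGroup E] (G : AMGauge ι) (X : ι → E) (a : ℤ) (b : ℕ) : Prop :=
  ∃ (q : ℕ) (C : ℝ), 0 ≤ C ∧ ∀ p, ‖X p‖ ≤ C * (G.s p ^ a * G.v p ^ b * G.z p ^ q)

namespace AMBO

variable {ι E F : Type*} [NormedAddCommGroup E] [NormedAddCommGroup F] {G : AMGauge ι}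

theorem v_pos (G : AMGauge ι) (p : ι) : 0 < G.v p := (G.s_pos p).trans_le (G.s_le_v p)
theorem z_pos (G : AMGauge ι) (p : ι) : 0 < G.z p := one_pos.trans_le (G.one_le_z p)

theorem g_nonneg (G : AMGauge ι) (a : ℤ) (b q : ℕ) (p : ι) :
    0 ≤ G.s p ^ a * G.v p ^ b * G.z p ^ q := by
  have := G.s_pos p; have := v_pos G p; have := z_pos G p; positivity

theorem g_mono (G : AMGauge ι) (a : ℤ) (b : ℕ) {q q' : ℕ} (h : q ≤ q') (p : ι) :
    G.s p ^ a * G.v p ^ b * G.z p ^ q ≤ G.s p ^ a * G.v p ^ b * G.z p ^ q' := by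
  have := G.s_pos p; have := v_pos G p
  exact mul_le_mul_of_nonneg_left (pow_le_pow_right₀ (G.one_le_z p) h) (by positivity)

theorem of_le {X : ι → E} {Y : ι → F} {a : ℤ} {b : ℕ} (hY : AMBO G Y a b) (K : ℝ)
    (h : ∀ p, ‖X p‖ ≤ K * ‖Y p‖) : AMBO G X a b := by
  obtain ⟨q, C, hC, hY⟩ := hY
  refine ⟨q, |K| * C, by positivity, fun p => (h p).trans ?_⟩
  calc K * ‖Y p‖ ≤ |K| * ‖Y p‖ := by gcongr; exact le_abs_self K
    _ ≤ |K| * (C * (G.s p ^ a * G.v p ^ b * G.z p ^ q)) := by gcongr; exact hY p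
    _ = _ := by ring

theorem add {X Y : ι → E} {a : ℤ} {b : ℕ} (hX : AMBO G X a b) (hY : AMBO G Y a b) :
    AMBO G (fun p => X p + Y p) a b := by
  obtain ⟨q, C, hC, hX⟩ := hX
  obtain ⟨q', C', hC', hY⟩ := hY
  refine ⟨max q q', C + C', by positivity, fun p => (norm_add_le _ _).trans ?_⟩
  rw [add_mul]
  exact add_le_add
    ((hX p).trans (mul_le_mul_of_nonneg_left (g_mono G a b (le_max_left _ _) p) hC))
    ((hY p).trans (mul_le_mul_of_nonneg_left (g_mono G a b (le_max_right _ _) p) hC'))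

theorem neg {X : ι → E} {a : ℤ} {b : ℕ} (hX : AMBO G X a b) : AMBO G (fun p => - X p) a b :=
  hX.of_le 1 (fun p => by simp)

theorem sub {X Y : ι → E} {a : ℤ} {b : ℕ} (hX : AMBO G X a b) (hY : AMBO G Y a b) :
    AMBO G (fun p => X p - Y p) a b := by
  simpa only [sub_eq_add_neg] using hX.add hY.neg

theorem mul {X Y : ι → ℝ} {a a' : ℤ} {b b' : ℕ} (hX : AMBO G X a b) (hY : AMBO G Y a' b') :
    AMBO G (fun p => X p * Y p) (a + a') (b + b') := by
  obtain ⟨q, C, hC, hX⟩ := hX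
  obtain ⟨q', C', hC', hY⟩ := hY
  refine ⟨q + q', C * C', by positivity, fun p => ?_⟩
  rw [norm_mul]
  have h1 := g_nonneg G a b q p
  calc ‖X p‖ * ‖Y p‖ ≤ (C * (G.s p ^ a * G.v p ^ b * G.z p ^ q)) *
        (C' * (G.s p ^ a' * G.v p ^ b' * G.z p ^ q')) :=
        mul_le_mul (hX p) (hY p) (norm_nonneg _) (by positivity)
    _ = _ := by rw [zpow_add₀ (G.s_pos p).ne', pow_add, pow_add]; ring

theorem const (e : E) : AMBO G (fun _ => e) 0 0 := ⟨0, ‖e‖, norm_nonneg _, fun p => by simp⟩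

theorem const_mul {X : ι → ℝ} {a : ℤ} {b : ℕ} (c : ℝ) (hX : AMBO G X a b) :
    AMBO G (fun p => c * X p) a b := hX.of_le |c| (fun p => by simp)

theorem zero {a : ℤ} {b : ℕ} : AMBO G (fun _ => (0 : E)) a b :=
  ⟨0, 0, le_rfl, fun p => by simp⟩

theorem sum {κ : Type*} (t : Finset κ) {X : κ → ι → E} {a : ℤ} {b : ℕ}
    (hX : ∀ k, AMBO G (X k) a b) : AMBO G (fun p => ∑ k ∈ t, X k p) a b := by
  classical
  induction t using Finset.induction_on with
  | empty => simpa using zero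
  | insert k t hk ih => simpa [Finset.sum_insert hk] using (hX k).add ih

theorem scale : AMBO G G.s 1 0 :=
  ⟨0, 1, zero_le_one, fun p => by simp [abs_of_pos (G.s_pos p)]⟩

theorem weaken {X : ι → E} {a : ℤ} {b : ℕ} (hX : AMBO G X a b) (a' : ℤ) (b' : ℕ) (hb : b ≤ b')
    (hab : a' + b' ≤ a + b) : AMBO G X a' b' := by
  obtain ⟨q, C, hC, hX⟩ := hX
  obtain ⟨k, rfl⟩ := Nat.exists_eq_add_of_le hb
  obtain ⟨r, hr⟩ : ∃ r : ℕ, a = a' + k + r := by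
    refine ⟨(a - a' - k).toNat, ?_⟩
    push_cast at hab
    omega
  refine ⟨q, C * |G.S0| ^ r, by positivity, fun p => (hX p).trans ?_⟩
  have hs := G.s_pos p
  have hv := v_pos G p
  have hz := z_pos G p
  have h0 : G.s p ≤ |G.S0| := (G.s_le p).trans (le_abs_self _)
  rw [hr, zpow_add₀ hs.ne', zpow_add₀ hs.ne', zpow_natCast, zpow_natCast]
  calc C * (G.s p ^ a' * G.s p ^ k * G.s p ^ r * G.v p ^ b * G.z p ^ q)
      ≤ C * (G.s p ^ a' * G.v p ^ k * |G.S0| ^ r * G.v p ^ b * G.z p ^ q) := by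
        gcongr
        exact G.s_le_v p
    _ = _ := by rw [pow_add]; ring

theorem norm {X : ι → E} {a : ℤ} {b : ℕ} (hX : AMBO G X a b) : AMBO G (fun p => ‖X p‖) a b :=
  hX.of_le 1 (fun p => by simp)

theorem pi {n : Type*} [Fintype n] {X : ι → n → ℝ} {a : ℤ} {b : ℕ}
    (hX : ∀ i, AMBO G (fun p => X p i) a b) : AMBO G X a b := by
  refine (sum Finset.univ (fun i => (hX i).norm)).of_le 1 (fun p => ?_)
  have h0 : 0 ≤ ∑ i, ‖X p i‖ := Finset.sum_nonneg (fun _ _ => norm_nonneg _)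
  rw [one_mul, Real.norm_of_nonneg h0, pi_norm_le_iff_of_nonneg h0]
  exact fun i => Finset.single_le_sum (f := fun i => ‖X p i‖) (fun _ _ => norm_nonneg _)
    (Finset.mem_univ i)

theorem apply {n : Type*} [Fintype n] {X : ι → n → E} {a : ℤ} {b : ℕ}
    (hX : AMBO G X a b) (i : n) : AMBO G (fun p => X p i) a b :=
  hX.of_le 1 (fun p => by simpa using norm_le_pi_norm (X p) i)

end AMBO

theorem am_fderiv_lip {E F : Type*} [NormedAddCommGroup E] [NormedSpace ℝ E] [NormedAddCommGroup F]
    [NormedSpace ℝ F] {f : E → F} (hf : ContDiff ℝ 2 f) {C : ℝ}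
    (hf2 : ∀ x, ‖iteratedFDeriv ℝ 2 f x‖ ≤ C) (x y : E) :
    ‖fderiv ℝ f y - fderiv ℝ f x‖ ≤ C * ‖y - x‖ := by
  refine Convex.norm_image_sub_le_of_norm_fderiv_le (𝕜 := ℝ) (s := Set.univ) (fun z _ => ?_)
    (fun z _ => ?_) convex_univ (Set.mem_univ _) (Set.mem_univ _)
  · exact (hf.fderiv_right (m := 1) (by norm_num)).differentiable (by norm_num) z
  · rw [← norm_iteratedFDeriv_one, norm_iteratedFDeriv_fderiv]
    exact hf2 z

theorem am_lip {E F : Type*} [NormedAddCommGroup E] [NormedSpace ℝ E] [NormedAddCommGroup F]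
    [NormedSpace ℝ F] {f : E → F} (hf : ContDiff ℝ 2 f) {C : ℝ}
    (hf1 : ∀ x, ‖fderiv ℝ f x‖ ≤ C) (x y : E) : ‖f y - f x‖ ≤ C * ‖y - x‖ :=
  Convex.norm_image_sub_le_of_norm_fderiv_le (𝕜 := ℝ) (s := Set.univ)
    (fun z _ => hf.differentiable (by norm_num) z)
    (fun z _ => hf1 z) convex_univ (Set.mem_univ _) (Set.mem_univ _)

theorem am_taylor {E F : Type*} [NormedAddCommGroup E] [NormedSpace ℝ E] [NormedAddCommGroup F]
    [NormedSpace ℝ F] {f : E → F} (hf : ContDiff ℝ 2 f) {C : ℝ}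
    (hf2 : ∀ x, ‖iteratedFDeriv ℝ 2 f x‖ ≤ C) (x y : E) :
    ‖f y - f x - fderiv ℝ f x (y - x)‖ ≤ C * ‖y - x‖ ^ 2 := by
  have hC : 0 ≤ C := (norm_nonneg _).trans (hf2 x)
  have := Convex.norm_image_sub_le_of_norm_fderiv_le' (𝕜 := ℝ) (f := f) (C := C * ‖y - x‖)
    (s := Metric.closedBall x ‖y - x‖) (x := x) (y := y) (φ := fderiv ℝ f x)
    (fun z _ => hf.differentiable (by norm_num) z)
    (fun z hz => (am_fderiv_lip hf hf2 x z).trans (by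
      gcongr; simpa [dist_eq_norm] using hz))
    (convex_closedBall _ _) (by simp) (by simp [dist_eq_norm])
  calc _ ≤ _ := this
    _ = _ := by ring

theorem am_mid {E F : Type*} [NormedAddCommGroup E] [NormedSpace ℝ E] [NormedAddCommGroup F]
    [NormedSpace ℝ F] {f : E → F} (hf : ContDiff ℝ 2 f) {C : ℝ}
    (hf1 : ∀ x, ‖fderiv ℝ f x‖ ≤ C)
    (hf2 : ∀ x, ‖iteratedFDeriv ℝ 2 f x‖ ≤ C) (a b c : E) :
    ‖f a + f b - (2 : ℝ) • f c‖ ≤ C * ‖a + b - (2 : ℝ) • c‖ + C * ‖a - b‖ ^ 2 := by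
  have hC : 0 ≤ C := (norm_nonneg _).trans (hf2 a)
  set x : E := (1 / 2 : ℝ) • (a + b) with hx
  have ha : a - x = (1 / 2 : ℝ) • (a - b) := by rw [hx]; module
  have hb : b - x = -((1 / 2 : ℝ) • (a - b)) := by rw [hx]; module
  have h1 := am_taylor hf hf2 x a
  have h2 := am_taylor hf hf2 x b
  have h3 := am_lip hf hf1 c x
  have h4 : x - c = (1 / 2 : ℝ) • (a + b - (2 : ℝ) • c) := by rw [hx]; module
  rw [h4, norm_smul] at h3
  rw [ha] at h1
  rw [hb, map_neg, norm_neg] at h2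
  have e : f a + f b - (2 : ℝ) • f c =
     (f a - f x - (fderiv ℝ f x) ((1 / 2 : ℝ) • (a - b)))
     + (f b - f x - -(fderiv ℝ f x) ((1 / 2 : ℝ) • (a - b))) + (2 : ℝ) • (f x - f c) := by module
  rw [e]
  rw [norm_smul] at h1 h2
  have h5 := norm_add₃_le (a := f a - f x - (fderiv ℝ f x) ((1 / 2 : ℝ) • (a - b)))
    (b := f b - f x - -(fderiv ℝ f x) ((1 / 2 : ℝ) • (a - b))) (c := (2 : ℝ) • (f x - f c))
  rw [norm_smul (2 : ℝ)] at h5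
  norm_num at h1 h2 h3 h5 ⊢
  have : 0 ≤ C * ‖a - b‖ ^ 2 := by positivity
  nlinarith

/-- Regularity assumptions on the coefficients. -/
structure AMCoef {d m : ℕ} (f : (Fin d → ℝ) → Fin d → ℝ)
    (g : (Fin d → ℝ) → Fin d → Fin m → ℝ) (C : ℝ) : Prop where
  hf : ContDiff ℝ 2 f
  hg : ContDiff ℝ 2 g
  hf1 : ∀ x, ‖fderiv ℝ f x‖ ≤ C
  hf2 : ∀ x, ‖iteratedFDeriv ℝ 2 f x‖ ≤ C
  hg1 : ∀ x, ‖fderiv ℝ g x‖ ≤ C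
  hg2 : ∀ x, ‖iteratedFDeriv ℝ 2 g x‖ ≤ C

section
variable {ι E F : Type*} [NormedAddCommGroup E] [NormedSpace ℝ E] [NormedAddCommGroup F]
  [NormedSpace ℝ F] {G : AMGauge ι}

theorem AMBO.lip {φ : E → F} (hf : ContDiff ℝ 2 φ) {C : ℝ}
    (hf1 : ∀ x, ‖fderiv ℝ φ x‖ ≤ C) {x y : ι → E} {a : ℤ} {b : ℕ}
    (h : AMBO G (fun p => y p - x p) a b) : AMBO G (fun p => φ (y p) - φ (x p)) a b :=
  h.of_le C (fun _ => am_lip hf hf1 _ _)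

theorem AMBO.growth {φ : E → F} (hf : ContDiff ℝ 2 φ) {C : ℝ}
    (hf1 : ∀ x, ‖fderiv ℝ φ x‖ ≤ C) {x : ι → E}
    (h : AMBO G x (-1) 1) : AMBO G (fun p => φ (x p)) (-1) 1 := by
  have h1 : AMBO G (fun p => φ (x p) - φ 0) (-1) 1 :=
    AMBO.lip hf hf1 (x := fun _ => 0) (by simpa using h)
  have h2 := h1.add ((AMBO.const (φ 0)).weaken (-1) 1 (by norm_num) (by norm_num))
  simpa using h2

theorem AMBO.fderiv_bdd {φ : E → F} {C : ℝ}
    (hf1 : ∀ x, ‖fderiv ℝ φ x‖ ≤ C) {x u : ι → E} {a : ℤ} {b : ℕ}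
    (h : AMBO G u a b) : AMBO G (fun p => fderiv ℝ φ (x p) (u p)) a b :=
  h.of_le C (fun p => (ContinuousLinearMap.le_opNorm _ _).trans (by gcongr; exact hf1 _))

theorem AMBO.fderiv_lip {φ : E → F} (hf : ContDiff ℝ 2 φ) {C : ℝ}
    (hf2 : ∀ x, ‖iteratedFDeriv ℝ 2 φ x‖ ≤ C) {x y : ι → E} (u : E) {a : ℤ} {b : ℕ}
    (h : AMBO G (fun p => y p - x p) a b) :
    AMBO G (fun p => fderiv ℝ φ (y p) u - fderiv ℝ φ (x p) u) a b := by
  refine h.of_le (C * ‖u‖) (fun p => ?_)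
  rw [← sub_apply]
  refine (ContinuousLinearMap.le_opNorm _ _).trans ?_
  calc _ ≤ (C * ‖y p - x p‖) * ‖u‖ := by gcongr; exact am_fderiv_lip hf hf2 _ _
    _ = _ := by ring

theorem AMBO.taylor {φ : E → F} (hf : ContDiff ℝ 2 φ) {C : ℝ}
    (hf2 : ∀ x, ‖iteratedFDeriv ℝ 2 φ x‖ ≤ C) {x y : ι → E}
    (h : AMBO G (fun p => y p - x p) 0 1) :
    AMBO G (fun p => φ (y p) - φ (x p) - fderiv ℝ φ (x p) (y p - x p)) 0 2 := by
  refine AMBO.of_le (by simpa using h.norm.mul h.norm) C (fun p => ?_)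
  refine (am_taylor hf hf2 _ _).trans (le_of_eq ?_)
  simp [sq]

theorem AMBO.mid {φ : E → F} (hf : ContDiff ℝ 2 φ) {C : ℝ}
    (hf1 : ∀ x, ‖fderiv ℝ φ x‖ ≤ C)
    (hf2 : ∀ x, ‖iteratedFDeriv ℝ 2 φ x‖ ≤ C) {x y c : ι → E}
    (h : AMBO G (fun p => x p - y p) 0 1)
    (hE : AMBO G (fun p => x p + y p - (2 : ℝ) • c p) 0 2) :
    AMBO G (fun p => φ (x p) + φ (y p) - (2 : ℝ) • φ (c p)) 0 2 := by
  have h1 : AMBO G (fun p => ‖x p - y p‖ * ‖x p - y p‖) 0 2 := by simpa using h.norm.mul h.norm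
  refine AMBO.of_le (hE.norm.add h1) C (fun p => ?_)
  refine (am_mid hf hf1 hf2 _ _ _).trans (le_of_eq ?_)
  rw [Real.norm_of_nonneg (by positivity)]
  ring

end

theorem am_fderiv_entry {d m : ℕ} {g : (Fin d → ℝ) → Fin d → Fin m → ℝ} (hg : ContDiff ℝ 2 g)
    (x u : Fin d → ℝ) (i : Fin d) (k : Fin m) :
    fderiv ℝ (fun y => g y i k) x u = fderiv ℝ g x u i k := by
  have h := (hg.differentiable (by norm_num) x).hasFDerivAt
  have h1 := hasFDerivAt_pi'.1 h i
  have h2 := hasFDerivAt_pi'.1 h1 k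
  rw [h2.fderiv]
  rfl

theorem am_clm_expand {d : ℕ} {F : Type*} [NormedAddCommGroup F] [NormedSpace ℝ F]
    (L : (Fin d → ℝ) →L[ℝ] F) (u : Fin d → ℝ) : L u = ∑ l, u l • L (Pi.single l 1) := by
  conv_lhs => rw [pi_eq_sum_univ' u]
  rw [map_sum]
  refine Finset.sum_congr rfl (fun l _ => ?_)
  rw [map_smul]

theorem am_H_eq {d m : ℕ} {g : (Fin d → ℝ) → Fin d → Fin m → ℝ} (hg : ContDiff ℝ 2 g)
    (x : Fin d → ℝ) (i : Fin d) (j k : Fin m) :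
    milsteinH g x i j k = 1 / 2 * ∑ l, g x l j * fderiv ℝ g x (Pi.single l 1) i k := by
  simp only [milsteinH, am_fderiv_entry hg]

theorem am_H_two {d m : ℕ} {g : (Fin d → ℝ) → Fin d → Fin m → ℝ} (hg : ContDiff ℝ 2 g)
    (x : Fin d → ℝ) (i : Fin d) (j k : Fin m) :
    fderiv ℝ g x (fun l => g x l j) i k = 2 * milsteinH g x i j k := by
  rw [am_H_eq hg, am_clm_expand]
  simp [Finset.sum_apply]

section
variable {ι : Type*} {G : AMGauge ι} {d m : ℕ} {f : (Fin d → ℝ) → Fin d → ℝ}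
    {g : (Fin d → ℝ) → Fin d → Fin m → ℝ} {C : ℝ}

theorem AMBO.H (hc : AMCoef f g C) {x : ι → Fin d → ℝ} (hx : AMBO G x (-1) 1)
    (i : Fin d) (j k : Fin m) : AMBO G (fun p => milsteinH g (x p) i j k) (-1) 1 := by
  simp only [am_H_eq hc.hg]
  refine AMBO.const_mul _ (AMBO.sum _ (fun l => ?_))
  have h1 := ((AMBO.growth hc.hg hc.hg1 hx).apply l).apply j
  have h2 := ((AMBO.fderiv_bdd (φ := g) (x := x) hc.hg1
    (AMBO.const (G := G) (Pi.single l 1 : Fin d → ℝ))).apply i).apply k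
  simpa using h1.mul h2

theorem AMBO.H_sub (hc : AMCoef f g C) {x y : ι → Fin d → ℝ} (hx : AMBO G x (-1) 1)
    (hyx : AMBO G (fun p => y p - x p) 0 1)
    (i : Fin d) (j k : Fin m) :
    AMBO G (fun p => milsteinH g (y p) i j k - milsteinH g (x p) i j k) (-1) 2 := by
  simp only [am_H_eq hc.hg, ← mul_sub, ← Finset.sum_sub_distrib]
  refine AMBO.const_mul _ (AMBO.sum _ (fun l => ?_))
  have h1 := ((AMBO.growth hc.hg hc.hg1 hx).apply l).apply j
  have h2 := ((AMBO.fderiv_bdd (φ := g) (x := y) hc.hg1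
    (AMBO.const (G := G) (Pi.single l 1 : Fin d → ℝ))).apply i).apply k
  have h3 := ((AMBO.lip hc.hg hc.hg1 hyx).apply l).apply j
  have h4 := ((AMBO.fderiv_lip hc.hg hc.hg2 (Pi.single l 1) hyx).apply i).apply k
  have h5 := ((h3.mul h2).weaken (-1) 2 (by norm_num) (by norm_num)).add (h1.mul h4)
  refine h5.of_le 1 (fun p => ?_)
  rw [one_mul]
  refine le_of_eq (congrArg _ ?_)
  simp only [Pi.sub_apply]
  ring

theorem AMBO.sq_scale : AMBO G (fun p => G.s p ^ 2) 2 0 := by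
  have := (AMBO.scale (G := G)).mul AMBO.scale
  simpa [sq] using this

theorem AMBO.quad {u w : ι → Fin m → ℝ} (hu : AMBO G u 1 0) (hw : AMBO G w 1 0) (c : ℝ)
    (j k : Fin m) :
    AMBO G (fun p => u p j * w p k - if j = k then c * G.s p ^ 2 else 0) 2 0 := by
  have h1 := (hu.apply j).mul (hw.apply k)
  refine AMBO.sub (by simpa using h1) ?_
  by_cases h : j = k
  · simpa [h] using AMBO.const_mul c AMBO.sq_scale
  · simpa [h] using AMBO.zero

end

/-- Components of the derivative of `f` applied to the columns of `g`. -/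
noncomputable def amJac {d m : ℕ} (f : (Fin d → ℝ) → Fin d → ℝ)
    (g : (Fin d → ℝ) → Fin d → Fin m → ℝ) (x : Fin d → ℝ) (i : Fin d) (j : Fin m) : ℝ :=
  fderiv ℝ f x (fun l => g x l j) i

/-- drift part of two fine steps -/
noncomputable def amB {d m : ℕ} (f : (Fin d → ℝ) → Fin d → ℝ)
    (g : (Fin d → ℝ) → Fin d → Fin m → ℝ) (s : ℝ) (x : Fin d → ℝ) (wa : Fin m → ℝ)
    (i : Fin d) : ℝ :=
  s ^ 2 * (f x i + (f (milsteinStep f g (s ^ 2) x wa) i - ∑ j, amJac f g x i j * wa j))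

/-- martingale part of two fine steps -/
noncomputable def amM {d m : ℕ} (f : (Fin d → ℝ) → Fin d → ℝ)
    (g : (Fin d → ℝ) → Fin d → Fin m → ℝ) (s : ℝ) (x : Fin d → ℝ) (wa wb : Fin m → ℝ)
    (i : Fin d) : ℝ :=
  (∑ j, (g x i j + s ^ 2 * amJac f g x i j) * wa j)
    + (∑ j, ∑ k, milsteinH g x i j k * (wa j * wa k - if j = k then s ^ 2 else 0))
    + (∑ j, g (milsteinStep f g (s ^ 2) x wa) i j * wb j)
    + ∑ j, ∑ k, milsteinH g (milsteinStep f g (s ^ 2) x wa) i j k *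
        (wb j * wb k - if j = k then s ^ 2 else 0)

/-- martingale part of a coarse step -/
noncomputable def amMc {d m : ℕ} (g : (Fin d → ℝ) → Fin d → Fin m → ℝ) (s : ℝ) (x : Fin d → ℝ)
    (wa wb : Fin m → ℝ) (i : Fin d) : ℝ :=
  (∑ j, g x i j * (wa j + wb j))
    + ∑ j, ∑ k, milsteinH g x i j k *
        ((wa j + wb j) * (wa k + wb k) - if j = k then 2 * s ^ 2 else 0)

theorem am_fine_eq {d m : ℕ} (f : (Fin d → ℝ) → Fin d → ℝ)
    (g : (Fin d → ℝ) → Fin d → Fin m → ℝ) (s : ℝ) (x : Fin d → ℝ) (wa wb : Fin m → ℝ)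
    (i : Fin d) :
    milsteinStep f g (s ^ 2) (milsteinStep f g (s ^ 2) x wa) wb i
      = x i + amB f g s x wa i + amM f g s x wa wb i := by
  have h : ∀ y w, milsteinStep f g (s ^ 2) y w i = y i + f y i * s ^ 2 + (∑ j, g y i j * w j)
    + ∑ j, ∑ k, milsteinH g y i j k * (w j * w k - if j = k then s ^ 2 else 0) :=
    fun _ _ => rfl
  rw [h (milsteinStep f g (s ^ 2) x wa) wb, h x wa, amB, amM]
  simp only [add_mul, Finset.sum_add_distrib, mul_assoc, ← Finset.mul_sum]
  ring

theorem am_coarse_eq {d m : ℕ} (f : (Fin d → ℝ) → Fin d → ℝ)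
    (g : (Fin d → ℝ) → Fin d → Fin m → ℝ) (s : ℝ) (x : Fin d → ℝ) (wa wb : Fin m → ℝ)
    (i : Fin d) :
    milsteinStep f g (2 * s ^ 2) x (wa + wb) i
      = x i + 2 * s ^ 2 * f x i + amMc g s x wa wb i := by
  simp only [milsteinStep, amMc, Pi.add_apply]
  ring

/-- remainder in the martingale part -/
noncomputable def amR {d m : ℕ} (f : (Fin d → ℝ) → Fin d → ℝ)
    (g : (Fin d → ℝ) → Fin d → Fin m → ℝ) (s : ℝ) (x : Fin d → ℝ) (wa wb : Fin m → ℝ)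
    (i : Fin d) : ℝ :=
  s ^ 2 * (∑ j, amJac f g x i j * wa j)
    + (∑ j, (g (milsteinStep f g (s ^ 2) x wa) i j - g x i j
        - fderiv ℝ g x (fun l => ∑ k, g x l k * wa k) i j) * wb j)
    + ∑ j, ∑ k, (milsteinH g (milsteinStep f g (s ^ 2) x wa) i j k - milsteinH g x i j k) *
        (wb j * wb k - if j = k then s ^ 2 else 0)

theorem am_sum_vec {d m : ℕ} (A : Fin d → Fin m → ℝ) (w : Fin m → ℝ) :
    (fun l => ∑ k, A l k * w k) = ∑ k, w k • (fun l => A l k) := by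
  ext l
  simp [Finset.sum_apply, mul_comm]

theorem am_M_eq {d m : ℕ} {f : (Fin d → ℝ) → Fin d → ℝ}
    {g : (Fin d → ℝ) → Fin d → Fin m → ℝ} (hg : ContDiff ℝ 2 g) (s : ℝ) (x : Fin d → ℝ)
    (wa wb : Fin m → ℝ) (i : Fin d) :
    amM f g s x wa wb i = (∑ j, g x i j * (wa j + wb j))
      + (∑ j, ∑ k, milsteinH g x i j k *
        ((wa j * wa k - if j = k then s ^ 2 else 0) + (wb j * wb k - if j = k then s ^ 2 else 0)
          + 2 * (wa j * wb k)))
      + amR f g s x wa wb i := by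
  have h : ∑ j, fderiv ℝ g x (fun l => ∑ k, g x l k * wa k) i j * wb j
      = ∑ j, ∑ k, milsteinH g x i j k * (2 * (wa j * wb k)) := by
    rw [Finset.sum_comm]
    refine Finset.sum_congr rfl (fun k _ => ?_)
    rw [am_sum_vec, map_sum, Finset.sum_apply, Finset.sum_apply, Finset.sum_mul]
    refine Finset.sum_congr rfl (fun j _ => ?_)
    rw [map_smul]
    simp only [Pi.smul_apply, smul_eq_mul, am_H_two hg]
    ring
  rw [amM, amR]
  simp only [mul_add, add_mul, sub_mul, Finset.sum_add_distrib, Finset.sum_sub_distrib, h,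
    mul_assoc, ← Finset.mul_sum]
  ring

section
variable {ι : Type*} {G : AMGauge ι} {d m : ℕ} {f : (Fin d → ℝ) → Fin d → ℝ}
    {g : (Fin d → ℝ) → Fin d → Fin m → ℝ} {C : ℝ}

theorem AMBO.quad1 {u w : ι → Fin m → ℝ} (hu : AMBO G u 1 0) (hw : AMBO G w 1 0)
    (j k : Fin m) :
    AMBO G (fun p => u p j * w p k - if j = k then G.s p ^ 2 else 0) 2 0 := by
  simpa only [one_mul] using AMBO.quad hu hw 1 j k

theorem AMBO.gw (hc : AMCoef f g C) {x : ι → Fin d → ℝ} (hx : AMBO G x (-1) 1)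
    {w : ι → Fin m → ℝ} (hw : AMBO G w 1 0) (i : Fin d) :
    AMBO G (fun p => ∑ j, g (x p) i j * w p j) 0 1 :=
  AMBO.sum _ (fun j => by
    simpa using (((AMBO.growth hc.hg hc.hg1 hx).apply i).apply j).mul (hw.apply j))

/-- step minus its linear-in-noise part -/
theorem AMBO.step_lin (hc : AMCoef f g C) {x : ι → Fin d → ℝ} (hx : AMBO G x (-1) 1)
    {w : ι → Fin m → ℝ} (hw : AMBO G w 1 0) :
    AMBO G (fun p => milsteinStep f g (G.s p ^ 2) (x p) (w p) - x p
      - (fun i => ∑ j, g (x p) i j * w p j)) 1 1 := by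
  refine AMBO.pi (fun i => ?_)
  have h1 := ((AMBO.growth hc.hf hc.hf1 hx).apply i).mul AMBO.sq_scale
  have h2 : AMBO G (fun p => ∑ j, ∑ k, milsteinH g (x p) i j k *
      (w p j * w p k - if j = k then G.s p ^ 2 else 0)) 1 1 :=
    AMBO.sum _ (fun j => AMBO.sum _ (fun k => (AMBO.H hc hx i j k).mul (AMBO.quad1 hw hw j k)))
  refine (AMBO.add h1 h2).of_le 1 (fun p => ?_)
  rw [one_mul]
  refine le_of_eq (congrArg _ ?_)
  simp only [milsteinStep, Pi.sub_apply]
  ring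

theorem AMBO.step (hc : AMCoef f g C) {x : ι → Fin d → ℝ} (hx : AMBO G x (-1) 1)
    {w : ι → Fin m → ℝ} (hw : AMBO G w 1 0) :
    AMBO G (fun p => milsteinStep f g (G.s p ^ 2) (x p) (w p) - x p) 0 1 := by
  have h1 := (AMBO.step_lin hc hx hw).weaken 0 1 le_rfl (by norm_num)
  have h2 : AMBO G (fun p => (fun i => ∑ j, g (x p) i j * w p j : Fin d → ℝ)) 0 1 :=
    AMBO.pi (fun i => AMBO.gw hc hx hw i)
  simpa using h1.add h2

theorem AMBO.jac (hc : AMCoef f g C) {x : ι → Fin d → ℝ} (hx : AMBO G x (-1) 1) (i : Fin d)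
    (j : Fin m) : AMBO G (fun p => amJac f g (x p) i j) (-1) 1 :=
  (AMBO.fderiv_bdd hc.hf1 (AMBO.pi (fun l =>
    ((AMBO.growth hc.hg hc.hg1 hx).apply l).apply j))).apply i

theorem AMBO.jacw (hc : AMCoef f g C) {x : ι → Fin d → ℝ} (hx : AMBO G x (-1) 1)
    {w : ι → Fin m → ℝ} (hw : AMBO G w 1 0) (i : Fin d) :
    AMBO G (fun p => ∑ j, amJac f g (x p) i j * w p j) 0 1 :=
  AMBO.sum _ (fun j => by simpa using (AMBO.jac hc hx i j).mul (hw.apply j))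

theorem am_jac_sum (x : Fin d → ℝ) (w : Fin m → ℝ) (i : Fin d) :
    ∑ j, amJac f g x i j * w j = fderiv ℝ f x (fun l => ∑ k, g x l k * w k) i := by
  rw [am_sum_vec, map_sum, Finset.sum_apply]
  refine Finset.sum_congr rfl (fun j _ => ?_)
  rw [map_smul, Pi.smul_apply, smul_eq_mul, mul_comm, amJac]

/-- second order Taylor expansion along a step, keeping only the noise-linear part -/
theorem AMBO.step_taylor {F : Type*} [NormedAddCommGroup F] [NormedSpace ℝ F]
    (hc : AMCoef f g C) {φ : (Fin d → ℝ) → F} (hφ : ContDiff ℝ 2 φ)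
    (hφ1 : ∀ x, ‖fderiv ℝ φ x‖ ≤ C)
    (hφ2 : ∀ x, ‖iteratedFDeriv ℝ 2 φ x‖ ≤ C) {x : ι → Fin d → ℝ} (hx : AMBO G x (-1) 1)
    {w : ι → Fin m → ℝ} (hw : AMBO G w 1 0) :
    AMBO G (fun p => φ (milsteinStep f g (G.s p ^ 2) (x p) (w p)) - φ (x p)
      - fderiv ℝ φ (x p) (fun l => ∑ k, g (x p) l k * w p k)) 0 2 := by
  have h1 := AMBO.taylor hφ hφ2 (AMBO.step hc hx hw)
  have h2 := (AMBO.fderiv_bdd (φ := φ) (x := x) hφ1 (AMBO.step_lin hc hx hw)).weaken 0 2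
    (by norm_num) (by norm_num)
  refine (h1.add h2).of_le 1 (fun p => ?_)
  rw [one_mul]
  refine le_of_eq (congrArg _ ?_)
  simp only [map_sub]
  abel

theorem AMBO.B_two (hc : AMCoef f g C) {x : ι → Fin d → ℝ} (hx : AMBO G x (-1) 1)
    {w : ι → Fin m → ℝ} (hw : AMBO G w 1 0) (i : Fin d) :
    AMBO G (fun p => amB f g (G.s p) (x p) (w p) i - 2 * G.s p ^ 2 * f (x p) i) 2 2 := by
  have h1 := AMBO.sq_scale.mul ((AMBO.step_taylor hc hc.hf hc.hf1 hc.hf2 hx hw).apply i)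
  refine AMBO.of_le (by simpa using h1) 1 (fun p => ?_)
  rw [one_mul]
  refine le_of_eq (congrArg _ ?_)
  simp only [amB, am_jac_sum]
  ring

theorem AMBO.B_one (hc : AMCoef f g C) {x : ι → Fin d → ℝ} (hx : AMBO G x (-1) 1)
    {w : ι → Fin m → ℝ} (hw : AMBO G w 1 0) (i : Fin d) :
    AMBO G (fun p => amB f g (G.s p) (x p) (w p) i - 2 * G.s p ^ 2 * f (x p) i) 2 1 := by
  have h0 := (AMBO.lip hc.hf hc.hf1 (AMBO.step hc hx hw)).apply i
  have h1 := AMBO.sq_scale.mul (h0.sub (AMBO.jacw hc hx hw i))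
  refine AMBO.of_le (by simpa using h1) 1 (fun p => ?_)
  rw [one_mul]
  refine le_of_eq (congrArg _ ?_)
  simp only [amB]
  ring

theorem AMBO.R_two (hc : AMCoef f g C) {x : ι → Fin d → ℝ} (hx : AMBO G x (-1) 1)
    {wa wb : ι → Fin m → ℝ} (hwa : AMBO G wa 1 0) (hwb : AMBO G wb 1 0) (i : Fin d) :
    AMBO G (fun p => amR f g (G.s p) (x p) (wa p) (wb p) i) 1 2 := by
  have h1 := (AMBO.sq_scale.mul (AMBO.jacw hc hx hwa i)).weaken 1 2 (by norm_num) (by norm_num)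
  have h2 := fun j => (((AMBO.step_taylor hc hc.hg hc.hg1 hc.hg2 hx hwa).apply i).apply j).mul
    (hwb.apply j)
  have h3 := fun j k => (AMBO.H_sub hc hx (AMBO.step hc hx hwa) i j k).mul (AMBO.quad1 hwb hwb j k)
  exact (h1.add (AMBO.sum _ h2)).add (AMBO.sum _ (fun j => AMBO.sum _ (h3 j)))

theorem AMBO.R_one (hc : AMCoef f g C) {x : ι → Fin d → ℝ} (hx : AMBO G x (-1) 1)
    {wa wb : ι → Fin m → ℝ} (hwa : AMBO G wa 1 0) (hwb : AMBO G wb 1 0) (i : Fin d) :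
    AMBO G (fun p => amR f g (G.s p) (x p) (wa p) (wb p) i) 1 1 := by
  have h1 := (AMBO.sq_scale.mul (AMBO.jacw hc hx hwa i)).weaken 1 1 (by norm_num) (by norm_num)
  have hs := AMBO.step hc hx hwa
  have hx' : AMBO G (fun p => milsteinStep f g (G.s p ^ 2) (x p) (wa p)) (-1) 1 := by
    simpa using (hs.weaken (-1) 1 le_rfl (by norm_num)).add hx
  have h2 := fun j => (((((AMBO.lip hc.hg hc.hg1 hs).sub
    (AMBO.fderiv_bdd (φ := g) (x := x) hc.hg1 (AMBO.pi (fun i => AMBO.gw hc hx hwa i)))).apply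
      i).apply j).mul (hwb.apply j))
  have h3 := fun j k => ((AMBO.H hc hx' i j k).sub (AMBO.H hc hx i j k)).mul
    (AMBO.quad1 hwb hwb j k)
  exact (h1.add (AMBO.sum _ h2)).add (AMBO.sum _ (fun j => AMBO.sum _ (h3 j)))

end

/-- The Lyapunov function. -/
noncomputable def amV {d : ℕ} (s : ℝ) (xf xa xc : Fin d → ℝ) : ℝ :=
  (∑ i, ((xf i + xa i - 2 * xc i) ^ 2 + (xf i - xc i) ^ 4 + (xa i - xc i) ^ 4
    + (s * xf i) ^ 4 + (s * xa i) ^ 4 + (s * xc i) ^ 4)) + s ^ 4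

/-- coefficient of the fine martingale part -/
noncomputable def amCf {d : ℕ} (s : ℝ) (xf xa xc : Fin d → ℝ) (i : Fin d) : ℝ :=
  2 * (xf i + xa i - 2 * xc i) + 4 * (xf i - xc i) ^ 3 + 4 * (s * xf i) ^ 3 * s

/-- coefficient of the coarse martingale part -/
noncomputable def amCc {d : ℕ} (s : ℝ) (xf xa xc : Fin d → ℝ) (i : Fin d) : ℝ :=
  -4 * (xf i + xa i - 2 * xc i) - 4 * (xf i - xc i) ^ 3 - 4 * (xa i - xc i) ^ 3
    + 4 * (s * xc i) ^ 3 * s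

/-- total martingale increment -/
noncomputable def amMart {d m : ℕ} (f : (Fin d → ℝ) → Fin d → ℝ)
    (g : (Fin d → ℝ) → Fin d → Fin m → ℝ) (s : ℝ) (xf xa xc : Fin d → ℝ) (w1 w2 : Fin m → ℝ) : ℝ :=
  ∑ i, (amCf s xf xa xc i * amM f g s xf w1 w2 i + amCf s xa xf xc i * amM f g s xa w2 w1 i
    + amCc s xf xa xc i * amMc g s xc w1 w2 i)

section
variable {ι : Type*} {G : AMGauge ι}

theorem AMBO.congr {E : Type*} [NormedAddCommGroup E] {X Y : ι → E} {a : ℤ} {b : ℕ}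
    (hX : AMBO G X a b) (h : ∀ p, Y p = X p) : AMBO G Y a b := by
  rwa [show Y = X from funext h]

theorem AMBO.pow_two {X : ι → ℝ} {a : ℤ} {b : ℕ} (hX : AMBO G X a b) :
    AMBO G (fun p => X p ^ 2) (a + a) (b + b) := (hX.mul hX).congr (fun p => by ring)

theorem AMBO.pow_three {X : ι → ℝ} {a : ℤ} {b : ℕ} (hX : AMBO G X a b) :
    AMBO G (fun p => X p ^ 3) (a + a + a) (b + b + b) :=
  ((hX.mul hX).mul hX).congr (fun p => by ring)

theorem AMBO.ito_two {y B M : ι → ℝ} (hy : AMBO G y 0 2) (hB : AMBO G B 2 2) (hM : AMBO G M 1 2) :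
    AMBO G (fun p => (y p + B p + M p) ^ 2 - y p ^ 2 - 2 * y p * M p) 2 4 := by
  have h1 := (hy.mul hB).const_mul 2
  have h2 := ((hB.weaken 1 2 le_rfl (by norm_num)).add hM).pow_two
  exact (AMBO.add (by simpa using h1) (by simpa using h2)).congr (fun p => by ring)

theorem AMBO.ito_four {y B M : ι → ℝ} (hy : AMBO G y 0 1) (hB : AMBO G B 2 1) (hM : AMBO G M 1 1) :
    AMBO G (fun p => (y p + B p + M p) ^ 4 - y p ^ 4 - 4 * y p ^ 3 * M p) 2 4 := by
  have hI := (hB.weaken 1 1 le_rfl (by norm_num)).add hM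
  have h1 := (hy.pow_three.mul hB).const_mul 4
  have h2 := (hy.pow_two.mul hI.pow_two).const_mul 6
  have h3 := ((hy.mul hI.pow_three).const_mul 4).weaken 2 4 (by norm_num) (by norm_num)
  have h4 := ((hI.mul hI.pow_three)).weaken 2 4 (by norm_num) (by norm_num)
  exact ((AMBO.add (by simpa using h1) (by simpa using h2)).add (h3.add h4)).congr
    (fun p => by ring)

variable {d m : ℕ} {f : (Fin d → ℝ) → Fin d → ℝ}
    {g : (Fin d → ℝ) → Fin d → Fin m → ℝ} {C : ℝ}

/-- a fine path and a coarse path: first order bound on the martingale difference -/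
theorem AMBO.M_sub (hc : AMCoef f g C) {x y : ι → Fin d → ℝ} (hx : AMBO G x (-1) 1)
    (hy : AMBO G y (-1) 1) (hxy : AMBO G (fun p => x p - y p) 0 1)
    {wa wb : ι → Fin m → ℝ} (hwa : AMBO G wa 1 0) (hwb : AMBO G wb 1 0) (i : Fin d) :
    AMBO G (fun p => amM f g (G.s p) (x p) (wa p) (wb p) i - amMc g (G.s p) (y p) (wa p) (wb p) i)
      1 1 := by
  have h1 := fun j => (((AMBO.lip hc.hg hc.hg1 hxy).apply i).apply j).mul
    ((hwa.apply j).add (hwb.apply j))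
  have h2 := fun j k => (AMBO.H hc hx i j k).mul (((AMBO.quad1 hwa hwa j k).add
    (AMBO.quad1 hwb hwb j k)).add (((hwa.apply j).mul (hwb.apply k)).const_mul 2))
  have h3 := fun j k => (AMBO.H hc hy i j k).mul (AMBO.quad (hwa.add hwb) (hwa.add hwb) 2 j k)
  have h4 := AMBO.R_one hc hx hwa hwb i
  have h5 := (((AMBO.sum Finset.univ h1).add (AMBO.sum Finset.univ (fun j =>
    AMBO.sum Finset.univ (h2 j)))).sub (AMBO.sum Finset.univ (fun j =>
    AMBO.sum Finset.univ (h3 j)))).add h4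
  refine h5.congr (fun p => ?_)
  rw [am_M_eq hc.hg, amMc]
  simp only [Pi.sub_apply, Pi.add_apply, sub_mul, Finset.sum_sub_distrib]
  ring

theorem AMBO.M_growth (hc : AMCoef f g C) {x : ι → Fin d → ℝ} (hx : AMBO G x (-1) 1)
    {wa wb : ι → Fin m → ℝ} (hwa : AMBO G wa 1 0) (hwb : AMBO G wb 1 0) (i : Fin d) :
    AMBO G (fun p => amMc g (G.s p) (x p) (wa p) (wb p) i) 0 1 := by
  have h1 := fun j => (((AMBO.growth hc.hg hc.hg1 hx).apply i).apply j).mul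
    ((hwa.apply j).add (hwb.apply j))
  have h3 := fun j k => ((AMBO.H hc hx i j k).mul
    (AMBO.quad (hwa.add hwb) (hwa.add hwb) 2 j k)).weaken 0 1 le_rfl (by norm_num)
  exact (AMBO.add (by simpa using AMBO.sum Finset.univ h1) (AMBO.sum Finset.univ (fun j =>
    AMBO.sum Finset.univ (h3 j)))).congr (fun p => rfl)

/-- the antithetic cancellation -/
theorem AMBO.M_mid (hc : AMCoef f g C) {x y z : ι → Fin d → ℝ}
    (hz : AMBO G z (-1) 1)
    (hxz : AMBO G (fun p => x p - z p) 0 1) (hyz : AMBO G (fun p => y p - z p) 0 1)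
    (hE : AMBO G (fun p => x p + y p - (2 : ℝ) • z p) 0 2)
    {wa wb : ι → Fin m → ℝ} (hwa : AMBO G wa 1 0) (hwb : AMBO G wb 1 0) (i : Fin d) :
    AMBO G (fun p => amM f g (G.s p) (x p) (wa p) (wb p) i + amM f g (G.s p) (y p) (wb p) (wa p) i
      - 2 * amMc g (G.s p) (z p) (wa p) (wb p) i) 1 2 := by
  have hx : AMBO G x (-1) 1 := by
    simpa using (hxz.weaken (-1) 1 le_rfl (by norm_num)).add hz
  have hy : AMBO G y (-1) 1 := by
    simpa using (hyz.weaken (-1) 1 le_rfl (by norm_num)).add hz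
  have hxy : AMBO G (fun p => x p - y p) 0 1 := by simpa using hxz.sub hyz
  have h1 := fun j => (((AMBO.mid hc.hg hc.hg1 hc.hg2 hxy hE).apply i).apply j).mul
    ((hwa.apply j).add (hwb.apply j))
  have k1 := AMBO.H_sub hc hz hxz i
  have k2 := AMBO.H_sub hc hz hyz i
  have h2 := fun j k => ((k1 j k).add (k2 j k)).mul ((AMBO.quad1 hwa hwa j k).add
    (AMBO.quad1 hwb hwb j k))
  have h3 := fun j k => ((k1 j k).mul ((hwa.apply j).mul (hwb.apply k))).const_mul 2
  have h4 := fun j k => ((k2 j k).mul ((hwb.apply j).mul (hwa.apply k))).const_mul 2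
  have h5 := (AMBO.R_two hc hx hwa hwb i).add (AMBO.R_two hc hy hwb hwa i)
  have h6 := (((AMBO.sum Finset.univ h1).add (AMBO.sum Finset.univ (fun j =>
    AMBO.sum Finset.univ (h2 j)))).add ((AMBO.sum Finset.univ (fun j =>
    AMBO.sum Finset.univ (h3 j))).add (AMBO.sum Finset.univ (fun j =>
    AMBO.sum Finset.univ (h4 j))))).add h5
  refine h6.congr (fun p => ?_)
  rw [am_M_eq hc.hg, am_M_eq hc.hg, amMc]
  have e1 : ∑ j, g (x p) i j * (wa p j + wb p j) + ∑ j, g (y p) i j * (wb p j + wa p j)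
      - 2 * ∑ j, g (z p) i j * (wa p j + wb p j)
      = ∑ j, (g (x p) + g (y p) - (2 : ℝ) • g (z p)) i j * (wa p j + wb p j) := by
    rw [Finset.mul_sum, ← Finset.sum_add_distrib, ← Finset.sum_sub_distrib]
    refine Finset.sum_congr rfl (fun j _ => ?_)
    simp only [Pi.sub_apply, Pi.add_apply, Pi.smul_apply, smul_eq_mul]
    ring
  rw [← e1]
  have e2 : ∀ (a b c e : Fin m → Fin m → ℝ), (∀ j k, a j k + b j k - 2 * c j k = e j k) →
      ∑ j, ∑ k, a j k + ∑ j, ∑ k, b j k - 2 * ∑ j, ∑ k, c j k = ∑ j, ∑ k, e j k := by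
    intro a b c e h
    simp only [← h, Finset.sum_add_distrib, Finset.sum_sub_distrib, Finset.mul_sum]
  have e3 := e2 (fun j k => milsteinH g (x p) i j k *
        ((wa p j * wa p k - if j = k then G.s p ^ 2 else 0)
          + (wb p j * wb p k - if j = k then G.s p ^ 2 else 0) + 2 * (wa p j * wb p k)))
      (fun j k => milsteinH g (y p) i j k *
        ((wb p j * wb p k - if j = k then G.s p ^ 2 else 0)
          + (wa p j * wa p k - if j = k then G.s p ^ 2 else 0) + 2 * (wb p j * wa p k)))
      (fun j k => milsteinH g (z p) i j k *
        ((wa p j + wb p j) * (wa p k + wb p k) - if j = k then 2 * G.s p ^ 2 else 0))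
      (fun j k => (milsteinH g (x p) i j k - milsteinH g (z p) i j k
          + (milsteinH g (y p) i j k - milsteinH g (z p) i j k)) *
          (wa p j * wa p k - (if j = k then G.s p ^ 2 else 0)
          + (wb p j * wb p k - if j = k then G.s p ^ 2 else 0))
        + (2 * ((milsteinH g (x p) i j k - milsteinH g (z p) i j k) * (wa p j * wb p k))
        + 2 * ((milsteinH g (y p) i j k - milsteinH g (z p) i j k) * (wb p j * wa p k))))
      (fun j k => by split_ifs <;> ring)
  simp only [Finset.sum_add_distrib] at e3 ⊢
  linear_combination e3

end

section
variable {ι : Type*} {G : AMGauge ι} {d m : ℕ} {f : (Fin d → ℝ) → Fin d → ℝ}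
    {g : (Fin d → ℝ) → Fin d → Fin m → ℝ} {C : ℝ}

/-- Size assumptions on the state and the noise. -/
structure AMState (G : AMGauge ι) (xf xa xc : ι → Fin d → ℝ) (w1 w2 : ι → Fin m → ℝ) : Prop where
  hxc : AMBO G xc (-1) 1
  hF : AMBO G (fun p => xf p - xc p) 0 1
  hA : AMBO G (fun p => xa p - xc p) 0 1
  hE : AMBO G (fun p => xf p + xa p - (2 : ℝ) • xc p) 0 2
  hw1 : AMBO G w1 1 0
  hw2 : AMBO G w2 1 0

variable {xf xa xc : ι → Fin d → ℝ} {w1 w2 : ι → Fin m → ℝ}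

theorem AMState.hxf (h : AMState G xf xa xc w1 w2) : AMBO G xf (-1) 1 := by
  simpa using (h.hF.weaken (-1) 1 le_rfl (by norm_num)).add h.hxc

theorem AMState.hxa (h : AMState G xf xa xc w1 w2) : AMBO G xa (-1) 1 := by
  simpa using (h.hA.weaken (-1) 1 le_rfl (by norm_num)).add h.hxc

theorem AMState.symm (h : AMState G xf xa xc w1 w2) : AMState G xa xf xc w2 w1 :=
  ⟨h.hxc, h.hA, h.hF, h.hE.congr (fun p => by rw [add_comm]), h.hw2, h.hw1⟩

theorem AMBO.B_growth (hc : AMCoef f g C) {x : ι → Fin d → ℝ} (hx : AMBO G x (-1) 1)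
    {w : ι → Fin m → ℝ} (hw : AMBO G w 1 0) (i : Fin d) :
    AMBO G (fun p => amB f g (G.s p) (x p) (w p) i) 1 1 := by
  have h1 := (AMBO.sq_scale.mul ((AMBO.growth hc.hf hc.hf1 hx).apply i)).const_mul 2
  have h2 := (AMBO.B_one hc hx hw i).weaken 1 1 le_rfl (by norm_num)
  exact (AMBO.add (by simpa using h1) h2).congr (fun p => by ring)

theorem AMState.fine_F (hc : AMCoef f g C) (h : AMState G xf xa xc w1 w2) (i : Fin d) :
    AMBO G (fun p =>
      (milsteinStep f g (G.s p ^ 2) (milsteinStep f g (G.s p ^ 2) (xf p) (w1 p)) (w2 p) i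
        - milsteinStep f g (2 * G.s p ^ 2) (xc p) (w1 p + w2 p) i) ^ 4
      - (xf p i - xc p i) ^ 4 - 4 * (xf p i - xc p i) ^ 3 *
        (amM f g (G.s p) (xf p) (w1 p) (w2 p) i - amMc g (G.s p) (xc p) (w1 p) (w2 p) i)) 2 4 := by
  have hM := AMBO.M_sub hc h.hxf h.hxc h.hF h.hw1 h.hw2 i
  have hB1 := (AMBO.sq_scale.mul ((AMBO.lip hc.hf hc.hf1 h.hF).apply i)).const_mul 2
  have hB := (AMBO.B_one hc h.hxf h.hw1 i).add (by simpa using hB1)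
  refine (AMBO.ito_four (h.hF.apply i) hB hM).congr (fun p => ?_)
  rw [am_fine_eq, am_coarse_eq]
  simp only [Pi.sub_apply]
  ring

theorem AMState.coarse_swap (s : ℝ) (x : Fin d → ℝ) (w1 w2 : Fin m → ℝ) (i : Fin d) :
    amMc g s x w1 w2 i = amMc g s x w2 w1 i := by
  simp only [amMc, add_comm]

theorem AMState.fine_E (hc : AMCoef f g C) (h : AMState G xf xa xc w1 w2) (i : Fin d) :
    AMBO G (fun p =>
      (milsteinStep f g (G.s p ^ 2) (milsteinStep f g (G.s p ^ 2) (xf p) (w1 p)) (w2 p) i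
        + milsteinStep f g (G.s p ^ 2) (milsteinStep f g (G.s p ^ 2) (xa p) (w2 p)) (w1 p) i
        - 2 * milsteinStep f g (2 * G.s p ^ 2) (xc p) (w1 p + w2 p) i) ^ 2
      - (xf p i + xa p i - 2 * xc p i) ^ 2 - 2 * (xf p i + xa p i - 2 * xc p i) *
        (amM f g (G.s p) (xf p) (w1 p) (w2 p) i + amM f g (G.s p) (xa p) (w2 p) (w1 p) i
        - 2 * amMc g (G.s p) (xc p) (w1 p) (w2 p) i)) 2 4 := by
  have hM := AMBO.M_mid hc h.hxc h.hF h.hA h.hE h.hw1 h.hw2 i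
  have hxy : AMBO G (fun p => xf p - xa p) 0 1 := by simpa using h.hF.sub h.hA
  have hB1 := (AMBO.sq_scale.mul ((AMBO.mid hc.hf hc.hf1 hc.hf2 hxy h.hE).apply i)).const_mul 2
  have hB := ((AMBO.B_two hc h.hxf h.hw1 i).add (AMBO.B_two hc h.hxa h.hw2 i)).add
    (by simpa using hB1)
  refine (AMBO.ito_two (h.hE.apply i) hB hM).congr (fun p => ?_)
  rw [am_fine_eq, am_fine_eq, am_coarse_eq]
  simp only [Pi.sub_apply, Pi.add_apply, Pi.smul_apply, smul_eq_mul]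
  ring

theorem AMState.fine_X (hc : AMCoef f g C) (h : AMState G xf xa xc w1 w2) (i : Fin d) :
    AMBO G (fun p => (G.s p *
      milsteinStep f g (G.s p ^ 2) (milsteinStep f g (G.s p ^ 2) (xf p) (w1 p)) (w2 p) i) ^ 4
      - (G.s p * xf p i) ^ 4 - 4 * (G.s p * xf p i) ^ 3 * G.s p *
        (amM f g (G.s p) (xf p) (w1 p) (w2 p) i)) 2 4 := by
  have hM := ((AMBO.M_sub hc h.hxf h.hxc h.hF h.hw1 h.hw2 i).weaken 0 1 le_rfl (by norm_num)).add
    (AMBO.M_growth hc h.hxc h.hw1 h.hw2 i)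
  have hB := AMBO.B_growth hc h.hxf h.hw1 i
  have hs := AMBO.scale (G := G)
  refine (AMBO.ito_four (by simpa using hs.mul (h.hxf.apply i)) (by simpa using hs.mul hB)
    (by simpa using hs.mul hM)).congr (fun p => ?_)
  rw [am_fine_eq]
  ring

theorem AMState.coarse_X (hc : AMCoef f g C) (h : AMState G xf xa xc w1 w2) (i : Fin d) :
    AMBO G (fun p => (G.s p * milsteinStep f g (2 * G.s p ^ 2) (xc p) (w1 p + w2 p) i) ^ 4
      - (G.s p * xc p i) ^ 4 - 4 * (G.s p * xc p i) ^ 3 * G.s p *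
        (amMc g (G.s p) (xc p) (w1 p) (w2 p) i)) 2 4 := by
  have hM := (AMBO.M_growth hc h.hxc h.hw1 h.hw2 i)
  have hB := (AMBO.sq_scale.mul ((AMBO.growth hc.hf hc.hf1 h.hxc).apply i)).const_mul 2
  have hs := AMBO.scale (G := G)
  have hsB := hs.mul hB
  refine (AMBO.ito_four (by simpa using hs.mul (h.hxc.apply i)) (by simpa using hsB)
    (by simpa using hs.mul hM)).congr (fun p => ?_)
  rw [am_coarse_eq]
  ring

/-- Pathwise Lyapunov estimate. -/
theorem AMState.lyapunov (hc : AMCoef f g C) (h : AMState G xf xa xc w1 w2) :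
    AMBO G (fun p => amV (G.s p)
      (milsteinStep f g (G.s p ^ 2) (milsteinStep f g (G.s p ^ 2) (xf p) (w1 p)) (w2 p))
      (milsteinStep f g (G.s p ^ 2) (milsteinStep f g (G.s p ^ 2) (xa p) (w2 p)) (w1 p))
      (milsteinStep f g (2 * G.s p ^ 2) (xc p) (w1 p + w2 p))
      - amV (G.s p) (xf p) (xa p) (xc p)
      - amMart f g (G.s p) (xf p) (xa p) (xc p) (w1 p) (w2 p)) 2 4 := by
  have hall := AMBO.sum Finset.univ (fun i => ((((((h.fine_E hc i).add (h.fine_F hc i)).add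
    (h.symm.fine_F hc i)).add (h.fine_X hc i)).add (h.symm.fine_X hc i)).add (h.coarse_X hc i)))
  refine hall.congr (fun p => ?_)
  simp only [amV, amMart]
  rw [add_sub_add_right_eq_sub, ← Finset.sum_sub_distrib, ← Finset.sum_sub_distrib]
  refine Finset.sum_congr rfl (fun i _ => ?_)
  rw [add_comm (w2 p) (w1 p), AMState.coarse_swap (g := g) (G.s p) (xc p) (w2 p) (w1 p), amCf,
    amCf, amCc]
  ring

theorem AMState.cf (h : AMState G xf xa xc w1 w2) (i : Fin d) :
    AMBO G (fun p => amCf (G.s p) (xf p) (xa p) (xc p) i) (-1) 3 := by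
  have h1 := ((h.hE.apply i).weaken (-1) 3 (by norm_num) (by norm_num)).const_mul 2
  have h2 := ((h.hF.apply i).pow_three.weaken (-1) 3 (by norm_num) (by norm_num)).const_mul 4
  have h3 := ((((AMBO.scale (G := G)).mul (h.hxf.apply i)).pow_three.mul AMBO.scale).weaken (-1) 3
    (by norm_num) (by norm_num)).const_mul 4
  refine ((h1.add h2).add h3).congr (fun p => ?_)
  simp only [amCf, Pi.sub_apply, Pi.add_apply, Pi.smul_apply, smul_eq_mul]
  ring

theorem AMState.cc (h : AMState G xf xa xc w1 w2) (i : Fin d) :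
    AMBO G (fun p => amCc (G.s p) (xf p) (xa p) (xc p) i) (-1) 3 := by
  have h1 := ((h.hE.apply i).weaken (-1) 3 (by norm_num) (by norm_num)).const_mul (-4)
  have h2 := ((h.hF.apply i).pow_three.weaken (-1) 3 (by norm_num) (by norm_num)).const_mul 4
  have h2' := ((h.hA.apply i).pow_three.weaken (-1) 3 (by norm_num) (by norm_num)).const_mul 4
  have h3 := ((((AMBO.scale (G := G)).mul (h.hxc.apply i)).pow_three.mul AMBO.scale).weaken (-1) 3
    (by norm_num) (by norm_num)).const_mul 4
  refine (((h1.sub h2).sub h2').add h3).congr (fun p => ?_)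
  simp only [amCc, Pi.sub_apply, Pi.add_apply, Pi.smul_apply, smul_eq_mul]
  ring

/-- midpoint: difference of the two fine paths -/
theorem AMState.mid_D (hc : AMCoef f g C) (h : AMState G xf xa xc w1 w2) :
    AMBO G (fun p => milsteinStep f g (G.s p ^ 2) (xf p) (w1 p)
      - milsteinStep f g (G.s p ^ 2) (xa p) (w2 p)) 0 1 := by
  have h1 := AMBO.step hc h.hxf h.hw1
  have h2 := AMBO.step hc h.hxa h.hw2
  exact ((h1.sub h2).add (h.hF.sub h.hA)).congr (fun p => by abel)

/-- midpoint: average of the fine paths against the average of the coarse path -/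
theorem AMState.mid_E (hc : AMCoef f g C) (h : AMState G xf xa xc w1 w2) :
    AMBO G (fun p => milsteinStep f g (G.s p ^ 2) (xf p) (w1 p)
      + milsteinStep f g (G.s p ^ 2) (xa p) (w2 p)
      - xc p - milsteinStep f g (2 * G.s p ^ 2) (xc p) (w1 p + w2 p)) 0 2 := by
  refine AMBO.pi (fun i => ?_)
  have h1 := ((AMBO.step_lin hc h.hxf h.hw1).apply i).weaken 0 2 (by norm_num) (by norm_num)
  have h2 := ((AMBO.step_lin hc h.hxa h.hw2).apply i).weaken 0 2 (by norm_num) (by norm_num)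
  have h3 := h.hE.apply i
  have hB := (AMBO.sq_scale.mul ((AMBO.growth hc.hf hc.hf1 h.hxc).apply i)).const_mul 2
  have hB' := AMBO.weaken hB 0 2 (by norm_num) (by norm_num)
  have hH := fun j k => (AMBO.H hc h.hxc i j k).mul
    (AMBO.quad (h.hw1.add h.hw2) (h.hw1.add h.hw2) 2 j k)
  have hH' := AMBO.weaken (AMBO.sum Finset.univ (fun j => AMBO.sum Finset.univ (hH j))) 0 2
    (by norm_num) (by norm_num)
  have hg1 := (AMBO.sum Finset.univ (fun j => (((AMBO.lip hc.hg hc.hg1 h.hF).apply i).apply j).mul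
    (h.hw1.apply j))).weaken 0 2 (by norm_num) (by norm_num)
  have hg2 := (AMBO.sum Finset.univ (fun j => (((AMBO.lip hc.hg hc.hg1 h.hA).apply i).apply j).mul
    (h.hw2.apply j))).weaken 0 2 (by norm_num) (by norm_num)
  refine ((((h1.add h2).add h3).sub (hB'.add hH')).add (hg1.add hg2)).congr (fun p => ?_)
  simp only [Pi.sub_apply, Pi.add_apply, Pi.smul_apply, smul_eq_mul, am_coarse_eq, amMc, sub_mul,
    mul_add, Finset.sum_sub_distrib, Finset.sum_add_distrib]
  ring

end

/-- normalised size of the noise -/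
noncomputable def amZ {m : ℕ} (s : ℝ) (w1 w2 : Fin m → ℝ) : ℝ :=
  1 + (∑ j, |w1 j|) / s + (∑ j, |w2 j|) / s

theorem amV_ge {d : ℕ} (s : ℝ) (xf xa xc : Fin d → ℝ) : s ^ 4 ≤ amV s xf xa xc := by
  unfold amV
  have : 0 ≤ (∑ i, ((xf i + xa i - 2 * xc i) ^ 2 + (xf i - xc i) ^ 4 + (xa i - xc i) ^ 4
    + (s * xf i) ^ 4 + (s * xa i) ^ 4 + (s * xc i) ^ 4)) :=
    Finset.sum_nonneg (fun i _ => by positivity)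
  linarith

theorem amV_nonneg {d : ℕ} (s : ℝ) (xf xa xc : Fin d → ℝ) : 0 ≤ amV s xf xa xc :=
  le_trans (by positivity) (amV_ge s xf xa xc)

theorem amV_coord {d : ℕ} (s : ℝ) (xf xa xc : Fin d → ℝ) (i : Fin d) :
    (xf i + xa i - 2 * xc i) ^ 2 + (xf i - xc i) ^ 4 + (xa i - xc i) ^ 4
    + (s * xf i) ^ 4 + (s * xa i) ^ 4 + (s * xc i) ^ 4 ≤ amV s xf xa xc := by
  unfold amV
  have := Finset.single_le_sum (s := Finset.univ)
    (f := fun i => ((xf i + xa i - 2 * xc i) ^ 2 + (xf i - xc i) ^ 4 + (xa i - xc i) ^ 4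
    + (s * xf i) ^ 4 + (s * xa i) ^ 4 + (s * xc i) ^ 4)) (fun i _ => by positivity)
    (Finset.mem_univ i)
  have h4 : 0 ≤ s ^ 4 := by positivity
  linarith

theorem am_abs_le_root {a V : ℝ} (h : a ^ 4 ≤ V) : |a| ≤ √(√V) := by
  apply Real.abs_le_sqrt
  apply Real.le_sqrt_of_sq_le
  calc _ = a ^ 4 := by ring
    _ ≤ V := h

theorem am_root_pow {V : ℝ} (h : 0 ≤ V) : √(√V) ^ 4 = V := by
  calc √(√V) ^ 4 = (√(√V) ^ 2) ^ 2 := by ring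
    _ = V := by rw [Real.sq_sqrt (Real.sqrt_nonneg _), Real.sq_sqrt h]

/-- The gauge attached to a family of states and noises. -/
noncomputable def amGauge {ι : Type*} {d m : ℕ} (S0 : ℝ) (s : ι → ℝ) (hs : ∀ p, 0 < s p)
    (hs' : ∀ p, s p ≤ S0)
    (xf xa xc : ι → Fin d → ℝ) (w1 w2 : ι → Fin m → ℝ) : AMGauge ι where
  s := s
  v := fun p => √(√(amV (s p) (xf p) (xa p) (xc p)))
  z := fun p => amZ (s p) (w1 p) (w2 p)
  S0 := S0
  s_pos := hs
  s_le := hs'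
  s_le_v := fun p => (le_abs_self _).trans (am_abs_le_root (amV_ge _ _ _ _))
  one_le_z := fun p => by
    have := hs p
    have h1 : 0 ≤ (∑ j, |w1 p j|) / s p := by positivity
    have h2 : 0 ≤ (∑ j, |w2 p j|) / s p := by positivity
    unfold amZ; linarith

section
variable {ι : Type*} {d m : ℕ} {S0 : ℝ} {s : ι → ℝ} {hs : ∀ p, 0 < s p}
    {hs' : ∀ p, s p ≤ S0}
    {xf xa xc : ι → Fin d → ℝ} {w1 w2 : ι → Fin m → ℝ}

theorem amZ_abs {s : ℝ} (hs : 0 < s) (w1 w2 : Fin m → ℝ) (j : Fin m) :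
    |w1 j| ≤ s * amZ s w1 w2 ∧ |w2 j| ≤ s * amZ s w1 w2 := by
  have e : s * amZ s w1 w2 = s + (∑ j, |w1 j|) + ∑ j, |w2 j| := by
    unfold amZ; field_simp
  have h1 := Finset.single_le_sum (s := Finset.univ) (f := fun j => |w1 j|)
    (fun _ _ => abs_nonneg _) (Finset.mem_univ j)
  have h2 := Finset.single_le_sum (s := Finset.univ) (f := fun j => |w2 j|)
    (fun _ _ => abs_nonneg _) (Finset.mem_univ j)
  have h3 := abs_nonneg (w1 j)
  have h4 := abs_nonneg (w2 j)
  rw [e]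
  constructor <;> linarith

theorem amState : AMState (amGauge S0 s hs hs' xf xa xc w1 w2) xf xa xc w1 w2 := by
  refine ⟨AMBO.pi fun i => ?_, AMBO.pi fun i => ?_, AMBO.pi fun i => ?_, AMBO.pi fun i => ?_,
    AMBO.pi fun i => ?_, AMBO.pi fun i => ?_⟩
  · refine ⟨0, 1, zero_le_one, fun p => ?_⟩
    have h := amV_coord (s p) (xf p) (xa p) (xc p) i
    have h1 : |s p * xc p i| ≤ √(√(amV (s p) (xf p) (xa p) (xc p))) :=
      am_abs_le_root (le_trans (by
        have : 0 ≤ (xf p i + xa p i - 2 * xc p i) ^ 2 + (xf p i - xc p i) ^ 4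
          + (xa p i - xc p i) ^ 4 + (s p * xf p i) ^ 4 + (s p * xa p i) ^ 4 := by positivity
        linarith) h)
    rw [abs_mul, abs_of_pos (hs p)] at h1
    have h2 := hs p
    simp only [amGauge, Real.norm_eq_abs, zpow_neg_one, pow_one, pow_zero, mul_one, one_mul]
    rw [inv_mul_eq_div, le_div_iff₀ h2]
    linarith
  · refine ⟨0, 1, zero_le_one, fun p => ?_⟩
    have h := amV_coord (s p) (xf p) (xa p) (xc p) i
    have h1 : |xf p i - xc p i| ≤ √(√(amV (s p) (xf p) (xa p) (xc p))) :=
      am_abs_le_root (le_trans (by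
        have : 0 ≤ (xf p i + xa p i - 2 * xc p i) ^ 2
          + (xa p i - xc p i) ^ 4 + (s p * xf p i) ^ 4 + (s p * xa p i) ^ 4
          + (s p * xc p i) ^ 4 := by positivity
        linarith) h)
    simpa [amGauge] using h1
  · refine ⟨0, 1, zero_le_one, fun p => ?_⟩
    have h := amV_coord (s p) (xf p) (xa p) (xc p) i
    have h1 : |xa p i - xc p i| ≤ √(√(amV (s p) (xf p) (xa p) (xc p))) :=
      am_abs_le_root (le_trans (by
        have : 0 ≤ (xf p i + xa p i - 2 * xc p i) ^ 2
          + (xf p i - xc p i) ^ 4 + (s p * xf p i) ^ 4 + (s p * xa p i) ^ 4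
          + (s p * xc p i) ^ 4 := by positivity
        linarith) h)
    simpa [amGauge] using h1
  · refine ⟨0, 1, zero_le_one, fun p => ?_⟩
    have h := amV_coord (s p) (xf p) (xa p) (xc p) i
    have h1 : |xf p i + xa p i - 2 * xc p i| ≤ √(amV (s p) (xf p) (xa p) (xc p)) :=
      Real.abs_le_sqrt (le_trans (by
        have : 0 ≤ (xf p i - xc p i) ^ 4
          + (xa p i - xc p i) ^ 4 + (s p * xf p i) ^ 4 + (s p * xa p i) ^ 4
          + (s p * xc p i) ^ 4 := by positivity
        linarith) h)
    simpa [amGauge] using h1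
  · refine ⟨1, 1, zero_le_one, fun p => ?_⟩
    simpa [amGauge] using (amZ_abs (hs p) (w1 p) (w2 p) i).1
  · refine ⟨1, 1, zero_le_one, fun p => ?_⟩
    simpa [amGauge] using (amZ_abs (hs p) (w1 p) (w2 p) i).2

end

/-- parameter space for the uniform estimates -/
structure AMPar (d m : ℕ) (S0 : ℝ) where
  s : ℝ
  hs : 0 < s
  hs' : s ≤ S0
  xf : Fin d → ℝ
  xa : Fin d → ℝ
  xc : Fin d → ℝ
  w1 : Fin m → ℝ
  w2 : Fin m → ℝ

/-- The uniform pathwise estimates. -/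
theorem am_pathwise {d m : ℕ} {f : (Fin d → ℝ) → Fin d → ℝ}
    {g : (Fin d → ℝ) → Fin d → Fin m → ℝ} {C : ℝ} (hc : AMCoef f g C) (S0 : ℝ) :
    ∃ (q : ℕ) (K : ℝ), 0 ≤ K ∧ ∀ (s : ℝ) (xf xa xc : Fin d → ℝ) (w1 w2 : Fin m → ℝ),
      0 < s → s ≤ S0 →
      amV s (milsteinStep f g (s ^ 2) (milsteinStep f g (s ^ 2) xf w1) w2)
        (milsteinStep f g (s ^ 2) (milsteinStep f g (s ^ 2) xa w2) w1)
        (milsteinStep f g (2 * s ^ 2) xc (w1 + w2))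
        ≤ amV s xf xa xc + amMart f g s xf xa xc w1 w2
          + K * s ^ 2 * (amV s xf xa xc * amZ s w1 w2 ^ q) ∧
      ‖milsteinStep f g (s ^ 2) xf w1 - milsteinStep f g (s ^ 2) xa w2‖ ^ 4
        ≤ K * (amV s xf xa xc * amZ s w1 w2 ^ q) ∧
      ‖milsteinStep f g (s ^ 2) xf w1 + milsteinStep f g (s ^ 2) xa w2
        - xc - milsteinStep f g (2 * s ^ 2) xc (w1 + w2)‖ ^ 2
        ≤ K * (amV s xf xa xc * amZ s w1 w2 ^ q) := by
  set G := amGauge S0 (fun p : AMPar d m S0 => p.s) (fun p => p.hs) (fun p => p.hs')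
    (fun p => p.xf) (fun p => p.xa) (fun p => p.xc) (fun p => p.w1) (fun p => p.w2) with hG
  have hS : AMState G (fun p => p.xf) (fun p => p.xa) (fun p => p.xc) (fun p => p.w1)
    (fun p => p.w2) := amState
  obtain ⟨q1, K1, hK1, h1⟩ := hS.lyapunov hc
  have hD := (hS.mid_D hc).norm
  obtain ⟨q2, K2, hK2, h2⟩ := hD.pow_three.mul hD
  obtain ⟨q3, K3, hK3, h3⟩ := (hS.mid_E hc).norm.pow_two
  refine ⟨q1 + q2 + q3, K1 + K2 + K3, by positivity, fun s xf xa xc w1 w2 hs hs' => ?_⟩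
  let p : AMPar d m S0 := ⟨s, hs, hs', xf, xa, xc, w1, w2⟩
  have h1 := h1 p
  have h2 := h2 p
  have h3 := h3 p
  have hz : 1 ≤ amZ s w1 w2 := G.one_le_z p
  have hV := amV_nonneg s xf xa xc
  have hv : G.v p ^ 4 = amV s xf xa xc := am_root_pow hV
  have hz1 : amZ s w1 w2 ^ q1 ≤ amZ s w1 w2 ^ (q1 + q2 + q3) := pow_le_pow_right₀ hz (by omega)
  have hz2 : amZ s w1 w2 ^ q2 ≤ amZ s w1 w2 ^ (q1 + q2 + q3) := pow_le_pow_right₀ hz (by omega)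
  have hz3 : amZ s w1 w2 ^ q3 ≤ amZ s w1 w2 ^ (q1 + q2 + q3) := pow_le_pow_right₀ hz (by omega)
  refine ⟨?_, ?_, ?_⟩
  · rw [hv] at h1
    change |amV s (milsteinStep f g (s ^ 2) (milsteinStep f g (s ^ 2) xf w1) w2)
        (milsteinStep f g (s ^ 2) (milsteinStep f g (s ^ 2) xa w2) w1)
        (milsteinStep f g (2 * s ^ 2) xc (w1 + w2)) - amV s xf xa xc
        - amMart f g s xf xa xc w1 w2| ≤ K1 * (s ^ (2 : ℤ) * amV s xf xa xc * amZ s w1 w2 ^ q1) at h1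
    have h1' := (le_abs_self _).trans h1
    have : K1 * (s ^ (2 : ℤ) * amV s xf xa xc * amZ s w1 w2 ^ q1)
        ≤ (K1 + K2 + K3) * s ^ 2 * (amV s xf xa xc * amZ s w1 w2 ^ (q1 + q2 + q3)) := by
      calc _ = K1 * s ^ 2 * (amV s xf xa xc * amZ s w1 w2 ^ q1) := by
            rw [show (2 : ℤ) = ((2 : ℕ) : ℤ) from rfl, zpow_natCast]; ring
        _ ≤ _ := by gcongr; linarith
    linarith
  · norm_num at h2
    rw [hv] at h2
    change ‖milsteinStep f g (s ^ 2) xf w1 - milsteinStep f g (s ^ 2) xa w2‖ ^ 3 *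
      ‖milsteinStep f g (s ^ 2) xf w1 - milsteinStep f g (s ^ 2) xa w2‖
        ≤ K2 * (amV s xf xa xc * amZ s w1 w2 ^ q2) at h2
    calc _ = ‖milsteinStep f g (s ^ 2) xf w1 - milsteinStep f g (s ^ 2) xa w2‖ ^ 3 *
      ‖milsteinStep f g (s ^ 2) xf w1 - milsteinStep f g (s ^ 2) xa w2‖ := by ring
      _ ≤ _ := h2
      _ ≤ _ := by gcongr; linarith
  · norm_num at h3
    rw [hv] at h3
    refine le_trans h3 ?_
    change K3 * (amV s xf xa xc * amZ s w1 w2 ^ q3) ≤ _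
    gcongr; linarith

section
variable {Ω : Type*} {mΩ : MeasurableSpace Ω} {d m : ℕ} {f : (Fin d → ℝ) → Fin d → ℝ}
    {g : (Fin d → ℝ) → Fin d → Fin m → ℝ} {C : ℝ}

theorem am_meas_g (hc : AMCoef f g C) {x : Ω → Fin d → ℝ} (hx : Measurable x) (i : Fin d)
    (j : Fin m) : Measurable (fun ω => g (x ω) i j) := by
  have h : Continuous (fun y => g y i j) := by
    have := hc.hg.continuous; fun_prop
  exact h.measurable.comp hx

theorem am_cont_H (hc : AMCoef f g C) (i : Fin d) (j k : Fin m) :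
    Continuous (fun x => milsteinH g x i j k) := by
  simp only [am_H_eq hc.hg]
  have h1 := hc.hg.continuous
  have h2 : Continuous (fderiv ℝ g) := hc.hg.continuous_fderiv (by norm_num)
  fun_prop

theorem am_meas_H (hc : AMCoef f g C) {x : Ω → Fin d → ℝ} (hx : Measurable x) (i : Fin d)
    (j k : Fin m) : Measurable (fun ω => milsteinH g (x ω) i j k) :=
  (am_cont_H hc i j k).measurable.comp hx

theorem am_meas_jac (hc : AMCoef f g C) {x : Ω → Fin d → ℝ} (hx : Measurable x) (i : Fin d)
    (j : Fin m) : Measurable (fun ω => amJac f g (x ω) i j) := by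
  have h : Continuous (fun y => amJac f g y i j) := by
    unfold amJac
    have h1 := hc.hg.continuous
    have h2 : Continuous (fderiv ℝ f) := hc.hf.continuous_fderiv (by norm_num)
    fun_prop
  exact h.measurable.comp hx

theorem am_meas_step (hc : AMCoef f g C) {x : Ω → Fin d → ℝ} (hx : Measurable x)
    {w : Ω → Fin m → ℝ} (hw : Measurable w) (dt : ℝ) :
    Measurable (fun ω => milsteinStep f g dt (x ω) (w ω)) := by
  refine measurable_pi_lambda _ (fun i => ?_)
  unfold milsteinStep
  have h1 : Measurable (fun ω => f (x ω) i) := by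
    have h : Continuous (fun y => f y i) := by
      have := hc.hf.continuous; fun_prop
    exact h.measurable.comp hx
  have h2 := fun j => am_meas_g hc hx i j
  have h3 := fun j k => am_meas_H hc hx i j k
  have h4 := fun j => (measurable_pi_apply j).comp hw
  have h5 := (measurable_pi_apply i).comp hx
  refine ((h5.add (h1.mul_const _)).add (Finset.measurable_fun_sum _ fun j _ => (h2 j).mul (h4 j))).add
    (Finset.measurable_fun_sum _ fun j _ => Finset.measurable_fun_sum _ fun k _ =>
      (h3 j k).mul (((h4 j).mul (h4 k)).sub_const _))

theorem am_meas_V {xf xa xc : Ω → Fin d → ℝ} (hxf : Measurable xf) (hxa : Measurable xa)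
    (hxc : Measurable xc) (s : ℝ) : Measurable (fun ω => amV s (xf ω) (xa ω) (xc ω)) := by
  unfold amV; fun_prop

theorem am_meas_cf {xf xa xc : Ω → Fin d → ℝ} (hxf : Measurable xf) (hxa : Measurable xa)
    (hxc : Measurable xc) (s : ℝ) (i : Fin d) :
    Measurable (fun ω => amCf s (xf ω) (xa ω) (xc ω) i) := by
  unfold amCf; fun_prop

theorem am_meas_cc {xf xa xc : Ω → Fin d → ℝ} (hxf : Measurable xf) (hxa : Measurable xa)
    (hxc : Measurable xc) (s : ℝ) (i : Fin d) :
    Measurable (fun ω => amCc s (xf ω) (xa ω) (xc ω) i) := by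
  unfold amCc; fun_prop

theorem am_meas_Z {w1 w2 : Ω → Fin m → ℝ} (h1 : Measurable w1) (h2 : Measurable w2) (s : ℝ) :
    Measurable (fun ω => amZ s (w1 ω) (w2 ω)) := by
  unfold amZ; fun_prop

theorem am_indepFun {μ : Measure Ω} {m1 m2 : MeasurableSpace Ω} (h : Indep m1 m2 μ) {A B : Ω → ℝ}
    (hA : Measurable[m1] A) (hB : Measurable[m2] B) : IndepFun A B μ :=
  (IndepFun_iff_Indep _ _ _).2 (indep_of_indep_of_le h hA.comap_le hB.comap_le)

/-- Probabilistic setting for one step. -/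
structure AMProb (μ : Measure Ω) (FS G1 G2 : MeasurableSpace Ω) (s : ℝ)
    (xf xa xc : Ω → Fin d → ℝ) (w1 w2 : Ω → Fin m → ℝ) : Prop where
  hs : 0 < s
  leS : FS ≤ mΩ
  le1 : G1 ≤ mΩ
  le2 : G2 ≤ mΩ
  mxf : Measurable[FS] xf
  mxa : Measurable[FS] xa
  mxc : Measurable[FS] xc
  mw1 : Measurable[G1] w1
  mw2 : Measurable[G2] w2
  indS : Indep FS (G1 ⊔ G2) μ
  ind1 : Indep (FS ⊔ G1) G2 μ
  ind2 : Indep (FS ⊔ G2) G1 μ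
  zint : ∀ q : ℕ, Integrable (fun ω => amZ s (w1 ω) (w2 ω) ^ q) μ
  mean1 : ∀ j, ∫ ω, w1 ω j ∂μ = 0
  mean2 : ∀ j, ∫ ω, w2 ω j ∂μ = 0
  cov1 : ∀ j k, ∫ ω, (w1 ω j * w1 ω k - if j = k then s ^ 2 else 0) ∂μ = 0
  cov2 : ∀ j k, ∫ ω, (w2 ω j * w2 ω k - if j = k then s ^ 2 else 0) ∂μ = 0

namespace AMProb
variable {μ : Measure Ω} {FS G1 G2 : MeasurableSpace Ω} {s : ℝ}
    {xf xa xc : Ω → Fin d → ℝ} {w1 w2 : Ω → Fin m → ℝ}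

theorem symm (h : AMProb μ FS G1 G2 s xf xa xc w1 w2) : AMProb μ FS G2 G1 s xa xf xc w2 w1 where
  hs := h.hs
  leS := h.leS
  le1 := h.le2
  le2 := h.le1
  mxf := h.mxa
  mxa := h.mxf
  mxc := h.mxc
  mw1 := h.mw2
  mw2 := h.mw1
  indS := by rw [sup_comm]; exact h.indS
  ind1 := h.ind2
  ind2 := h.ind1
  zint := fun q => by
    have e : ∀ ω, amZ s (w2 ω) (w1 ω) = amZ s (w1 ω) (w2 ω) := fun ω => by unfold amZ; ring
    simpa only [e] using h.zint q
  mean1 := h.mean2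
  mean2 := h.mean1
  cov1 := h.cov2
  cov2 := h.cov1

/-- the gauge -/
noncomputable def G (h : AMProb μ FS G1 G2 s xf xa xc w1 w2) : AMGauge Ω :=
  amGauge s (fun _ => s) (fun _ => h.hs) (fun _ => le_rfl) xf xa xc w1 w2

theorem state (h : AMProb μ FS G1 G2 s xf xa xc w1 w2) : AMState h.G xf xa xc w1 w2 := amState

theorem int_VZ (h : AMProb μ FS G1 G2 s xf xa xc w1 w2)
    (hV : Integrable (fun ω => amV s (xf ω) (xa ω) (xc ω)) μ) (q : ℕ) :
    Integrable (fun ω => amV s (xf ω) (xa ω) (xc ω) * amZ s (w1 ω) (w2 ω) ^ q) μ ∧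
    ∫ ω, amV s (xf ω) (xa ω) (xc ω) * amZ s (w1 ω) (w2 ω) ^ q ∂μ
      = (∫ ω, amV s (xf ω) (xa ω) (xc ω) ∂μ) * ∫ ω, amZ s (w1 ω) (w2 ω) ^ q ∂μ := by
  have hi : IndepFun (fun ω => amV s (xf ω) (xa ω) (xc ω))
      (fun ω => amZ s (w1 ω) (w2 ω) ^ q) μ := by
    refine am_indepFun h.indS (am_meas_V h.mxf h.mxa h.mxc s) ?_
    exact (am_meas_Z (h.mw1.mono le_sup_left le_rfl) (h.mw2.mono le_sup_right le_rfl) s).pow_const q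
  exact ⟨hi.integrable_mul hV (h.zint q),
    hi.integral_fun_mul_eq_mul_integral hV.aestronglyMeasurable (h.zint q).aestronglyMeasurable⟩

theorem integrable (h : AMProb μ FS G1 G2 s xf xa xc w1 w2)
    (hV : Integrable (fun ω => amV s (xf ω) (xa ω) (xc ω)) μ) {Y : Ω → ℝ} (hY : Measurable[mΩ] Y)
    {a : ℤ} (hB : AMBO h.G Y a 4) : Integrable Y μ := by
  obtain ⟨q, K, hK, hB⟩ := hB
  refine (((h.int_VZ hV q).1.const_mul (K * s ^ a))).mono' hY.aestronglyMeasurable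
    (Filter.Eventually.of_forall fun ω => (hB ω).trans (le_of_eq ?_))
  have : h.G.v ω ^ 4 = amV s (xf ω) (xa ω) (xc ω) := am_root_pow (amV_nonneg _ _ _ _)
  rw [this]
  change K * (s ^ a * _ * amZ s (w1 ω) (w2 ω) ^ q) = _
  ring

end AMProb

/-- integrable with mean zero -/
def AMZero (μ : Measure Ω) (Y : Ω → ℝ) : Prop := Integrable Y μ ∧ ∫ ω, Y ω ∂μ = 0

theorem AMZero.add {μ : Measure Ω} {X Y : Ω → ℝ} (hX : AMZero μ X) (hY : AMZero μ Y) :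
    AMZero μ (fun ω => X ω + Y ω) :=
  ⟨hX.1.add hY.1, by rw [integral_add hX.1 hY.1, hX.2, hY.2, add_zero]⟩

theorem AMZero.sum {μ : Measure Ω} {κ : Type*} {t : Finset κ} {X : κ → Ω → ℝ}
    (hX : ∀ k, AMZero μ (X k)) : AMZero μ (fun ω => ∑ k ∈ t, X k ω) :=
  ⟨integrable_finsetSum _ fun k _ => (hX k).1, by
    rw [integral_finsetSum _ fun k _ => (hX k).1]; exact Finset.sum_eq_zero fun k _ => (hX k).2⟩

namespace AMProb
variable {μ : Measure Ω} {FS G1 G2 : MeasurableSpace Ω} {s : ℝ}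
    {xf xa xc : Ω → Fin d → ℝ} {w1 w2 : Ω → Fin m → ℝ}

theorem piece (h : AMProb μ FS G1 G2 s xf xa xc w1 w2)
    (hV : Integrable (fun ω => amV s (xf ω) (xa ω) (xc ω)) μ) {mA mB : MeasurableSpace Ω}
    (hmA : mA ≤ mΩ) (hmB : mB ≤ mΩ) (hi : Indep mA mB μ) {A B : Ω → ℝ}
    (hA : Measurable[mA] A) (hB : Measurable[mB] B) (hB0 : ∫ ω, B ω ∂μ = 0) {a : ℤ}
    (hO : AMBO h.G (fun ω => A ω * B ω) a 4) : AMZero μ (fun ω => A ω * B ω) := by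
  have hA' : Measurable[mΩ] A := hA.mono hmA le_rfl
  have hB' : Measurable[mΩ] B := hB.mono hmB le_rfl
  refine ⟨h.integrable hV (hA'.mul hB') hO, ?_⟩
  rw [(am_indepFun hi hA hB).integral_fun_mul_eq_mul_integral hA'.aestronglyMeasurable
    hB'.aestronglyMeasurable, hB0, mul_zero]

theorem piece2 (h : AMProb μ FS G1 G2 s xf xa xc w1 w2)
    (hV : Integrable (fun ω => amV s (xf ω) (xa ω) (xc ω)) μ) {A B : Ω → ℝ}
    (hA : Measurable[FS ⊔ G1] A) (hB : Measurable[G2] B) (hB0 : ∫ ω, B ω ∂μ = 0) {a : ℤ}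
    (hO : AMBO h.G (fun ω => A ω * B ω) a 4) : AMZero μ (fun ω => A ω * B ω) :=
  h.piece hV (sup_le h.leS h.le1) h.le2 h.ind1 hA hB hB0 hO

theorem piece1 (h : AMProb μ FS G1 G2 s xf xa xc w1 w2)
    (hV : Integrable (fun ω => amV s (xf ω) (xa ω) (xc ω)) μ) {A B : Ω → ℝ}
    (hA : Measurable[FS ⊔ G2] A) (hB : Measurable[G1] B) (hB0 : ∫ ω, B ω ∂μ = 0) {a : ℤ}
    (hO : AMBO h.G (fun ω => A ω * B ω) a 4) : AMZero μ (fun ω => A ω * B ω) :=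
  h.piece hV (sup_le h.leS h.le2) h.le1 h.ind2 hA hB hB0 hO

theorem M_zero (h : AMProb μ FS G1 G2 s xf xa xc w1 w2) (hc : AMCoef f g C)
    (hV : Integrable (fun ω => amV s (xf ω) (xa ω) (xc ω)) μ) {c : Ω → ℝ} (hcm : Measurable[FS] c)
    (hcO : AMBO h.G c (-1) 3) {x : Ω → Fin d → ℝ} (hx : Measurable[FS] x)
    (hxO : AMBO h.G x (-1) 1) (i : Fin d) :
    AMZero μ (fun ω => c ω * amM f g s (x ω) (w1 ω) (w2 ω) i) := by
  have hw1 : AMBO h.G w1 1 0 := h.state.hw1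
  have hw2 : AMBO h.G w2 1 0 := h.state.hw2
  have mw1 : ∀ j, Measurable[G1] (fun ω => w1 ω j) :=
    fun j => (measurable_pi_apply j).comp h.mw1
  have mw2 : ∀ j, Measurable[G2] (fun ω => w2 ω j) :=
    fun j => (measurable_pi_apply j).comp h.mw2
  have hx' : AMBO h.G (fun ω => milsteinStep f g (s ^ 2) (x ω) (w1 ω)) (-1) 1 := by
    have hs := AMBO.step hc hxO hw1
    have := (hs.weaken (-1) 1 le_rfl (by norm_num)).add hxO
    exact this.congr (fun p => (sub_add_cancel _ _).symm)
  have mx' : Measurable[FS ⊔ G1] (fun ω => milsteinStep f g (s ^ 2) (x ω) (w1 ω)) :=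
    am_meas_step (mΩ := FS ⊔ G1) hc (hx.mono le_sup_left le_rfl) (h.mw1.mono le_sup_right le_rfl) _
  have mc1 : Measurable[FS ⊔ G1] c := hcm.mono le_sup_left le_rfl
  have mc2 : Measurable[FS ⊔ G2] c := hcm.mono le_sup_left le_rfl
  have mx2 : Measurable[FS ⊔ G2] x := hx.mono le_sup_left le_rfl
  have hq1 := fun j k => AMBO.quad1 hw1 hw1 j k
  have hq2 := fun j k => AMBO.quad1 hw2 hw2 j k
  have hgj : ∀ j, AMBO h.G (fun ω => g (x ω) i j + s ^ 2 * amJac f g (x ω) i j) (-1) 1 := fun j =>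
    (((AMBO.growth hc.hg hc.hg1 hxO).apply i).apply j).add ((AMBO.jac hc hxO i j).const_mul _)
  have e1 : AMZero μ (fun ω => ∑ j, (c ω * (g (x ω) i j + s ^ 2 * amJac f g (x ω) i j)) * w1 ω j) :=
    AMZero.sum fun j => h.piece1 hV
      (mc2.mul ((am_meas_g hc mx2 i j).add ((am_meas_jac hc mx2 i j).const_mul _)))
      (mw1 j) (h.mean1 j) ((hcO.mul (hgj j)).mul (hw1.apply j))
  have e2 : AMZero μ (fun ω => ∑ j, ∑ k, (c ω * milsteinH g (x ω) i j k) *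
      (w1 ω j * w1 ω k - if j = k then s ^ 2 else 0)) :=
    AMZero.sum fun j => AMZero.sum fun k => h.piece1 hV
      (mc2.mul (am_meas_H hc mx2 i j k))
      (((mw1 j).mul (mw1 k)).sub_const _) (h.cov1 j k)
        ((hcO.mul (AMBO.H hc hxO i j k)).mul (hq1 j k))
  have e3 : AMZero μ (fun ω => ∑ j,
      (c ω * g (milsteinStep f g (s ^ 2) (x ω) (w1 ω)) i j) * w2 ω j) :=
    AMZero.sum fun j => h.piece2 hV
      (mc1.mul (am_meas_g hc mx' i j))
      (mw2 j) (h.mean2 j)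
        ((hcO.mul (((AMBO.growth hc.hg hc.hg1 hx').apply i).apply j)).mul (hw2.apply j))
  have e4 : AMZero μ (fun ω => ∑ j, ∑ k,
      (c ω * milsteinH g (milsteinStep f g (s ^ 2) (x ω) (w1 ω)) i j k) *
      (w2 ω j * w2 ω k - if j = k then s ^ 2 else 0)) :=
    AMZero.sum fun j => AMZero.sum fun k => h.piece2 hV
      (mc1.mul (am_meas_H hc mx' i j k))
      (((mw2 j).mul (mw2 k)).sub_const _) (h.cov2 j k)
        ((hcO.mul (AMBO.H hc hx' i j k)).mul (hq2 j k))
  have e := ((e1.add e2).add e3).add e4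
  convert e using 2 with ω
  rw [amM, mul_add, mul_add, mul_add]
  simp only [Finset.mul_sum, mul_assoc]

theorem Mc_zero (h : AMProb μ FS G1 G2 s xf xa xc w1 w2) (hc : AMCoef f g C)
    (hV : Integrable (fun ω => amV s (xf ω) (xa ω) (xc ω)) μ) {c : Ω → ℝ} (hcm : Measurable[FS] c)
    (hcO : AMBO h.G c (-1) 3) {x : Ω → Fin d → ℝ} (hx : Measurable[FS] x)
    (hxO : AMBO h.G x (-1) 1) (i : Fin d) :
    AMZero μ (fun ω => c ω * amMc g s (x ω) (w1 ω) (w2 ω) i) := by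
  have hw1 : AMBO h.G w1 1 0 := h.state.hw1
  have hw2 : AMBO h.G w2 1 0 := h.state.hw2
  have mw1 : ∀ j, Measurable[G1] (fun ω => w1 ω j) :=
    fun j => (measurable_pi_apply j).comp h.mw1
  have mw2 : ∀ j, Measurable[G2] (fun ω => w2 ω j) :=
    fun j => (measurable_pi_apply j).comp h.mw2
  have mc1 : Measurable[FS ⊔ G1] c := hcm.mono le_sup_left le_rfl
  have mc2 : Measurable[FS ⊔ G2] c := hcm.mono le_sup_left le_rfl
  have mx1 : Measurable[FS ⊔ G1] x := hx.mono le_sup_left le_rfl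
  have mx2 : Measurable[FS ⊔ G2] x := hx.mono le_sup_left le_rfl
  have hq1 := fun j k => AMBO.quad1 hw1 hw1 j k
  have hq2 := fun j k => AMBO.quad1 hw2 hw2 j k
  have hg : ∀ j, AMBO h.G (fun ω => g (x ω) i j) (-1) 1 := fun j =>
    ((AMBO.growth hc.hg hc.hg1 hxO).apply i).apply j
  have hH := fun j k => AMBO.H hc hxO i j k
  have e1 : ∀ j, AMZero μ (fun ω => (c ω * g (x ω) i j) * w1 ω j) := fun j =>
    h.piece1 hV (mc2.mul (am_meas_g hc mx2 i j))
      (mw1 j) (h.mean1 j) ((hcO.mul (hg j)).mul (hw1.apply j))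
  have e2 : ∀ j, AMZero μ (fun ω => (c ω * g (x ω) i j) * w2 ω j) := fun j =>
    h.piece2 hV (mc1.mul (am_meas_g hc mx1 i j))
      (mw2 j) (h.mean2 j) ((hcO.mul (hg j)).mul (hw2.apply j))
  have e3 : ∀ j k, AMZero μ (fun ω => (c ω * milsteinH g (x ω) i j k) *
      (w1 ω j * w1 ω k - if j = k then s ^ 2 else 0)) := fun j k =>
    h.piece1 hV (mc2.mul (am_meas_H hc mx2 i j k))
      (((mw1 j).mul (mw1 k)).sub_const _) (h.cov1 j k) ((hcO.mul (hH j k)).mul (hq1 j k))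
  have e4 : ∀ j k, AMZero μ (fun ω => (c ω * milsteinH g (x ω) i j k) *
      (w2 ω j * w2 ω k - if j = k then s ^ 2 else 0)) := fun j k =>
    h.piece2 hV (mc1.mul (am_meas_H hc mx1 i j k))
      (((mw2 j).mul (mw2 k)).sub_const _) (h.cov2 j k) ((hcO.mul (hH j k)).mul (hq2 j k))
  have e5 : ∀ j k, AMZero μ (fun ω => (c ω * milsteinH g (x ω) i j k * w1 ω j) * w2 ω k) :=
    fun j k => h.piece2 hV ((mc1.mul (am_meas_H hc mx1 i j k)).mul
      ((mw1 j).mono le_sup_right le_rfl)) (mw2 k) (h.mean2 k)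
      (((hcO.mul (hH j k)).mul (hw1.apply j)).mul (hw2.apply k))
  have e6 : ∀ j k, AMZero μ (fun ω => (c ω * milsteinH g (x ω) i j k * w2 ω j) * w1 ω k) :=
    fun j k => h.piece1 hV ((mc2.mul (am_meas_H hc mx2 i j k)).mul
      ((mw2 j).mono le_sup_right le_rfl)) (mw1 k) (h.mean1 k)
      (((hcO.mul (hH j k)).mul (hw2.apply j)).mul (hw1.apply k))
  have e := (AMZero.sum (t := Finset.univ) fun j => (e1 j).add (e2 j)).add
    (AMZero.sum (t := Finset.univ) fun j => AMZero.sum (t := Finset.univ) fun k =>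
      ((e3 j k).add (e4 j k)).add ((e5 j k).add (e6 j k)))
  convert e using 2 with ω
  simp only [amMc, mul_add, Finset.mul_sum]
  congr 1
  · exact Finset.sum_congr rfl fun j _ => by ring
  · refine Finset.sum_congr rfl fun j _ => Finset.sum_congr rfl fun k _ => ?_
    by_cases hjk : j = k
    · simp only [hjk, if_true]; ring
    · simp only [hjk, if_false]; ring

theorem mart_zero (h : AMProb μ FS G1 G2 s xf xa xc w1 w2) (hc : AMCoef f g C)
    (hV : Integrable (fun ω => amV s (xf ω) (xa ω) (xc ω)) μ) :
    AMZero μ (fun ω => amMart f g s (xf ω) (xa ω) (xc ω) (w1 ω) (w2 ω)) := by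
  have hV' : Integrable (fun ω => amV s (xa ω) (xf ω) (xc ω)) μ := by
    convert hV using 2 with ω
    unfold amV
    congr 1
    exact Finset.sum_congr rfl fun i _ => by ring
  unfold amMart
  refine AMZero.sum fun i => AMZero.add (AMZero.add ?_ ?_) ?_
  · exact h.M_zero hc hV (am_meas_cf h.mxf h.mxa h.mxc s i) (h.state.cf i) h.mxf h.state.hxf i
  · exact h.symm.M_zero hc hV' (am_meas_cf h.mxa h.mxf h.mxc s i) (h.symm.state.cf i) h.mxa
      h.symm.state.hxf i
  · exact h.Mc_zero hc hV (am_meas_cc h.mxf h.mxa h.mxc s i) (h.state.cc i) h.mxc h.state.hxc i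

/-- One step of the Lyapunov estimate in expectation. -/
theorem step (h : AMProb μ FS G1 G2 s xf xa xc w1 w2) (hc : AMCoef f g C)
    (hV : Integrable (fun ω => amV s (xf ω) (xa ω) (xc ω)) μ) {q : ℕ} {K M : ℝ} (hK : 0 ≤ K)
    (hM : ∫ ω, amZ s (w1 ω) (w2 ω) ^ q ∂μ ≤ M) {yf ya yc : Ω → Fin d → ℝ}
    (hyf : ∀ ω, yf ω = milsteinStep f g (s ^ 2) (milsteinStep f g (s ^ 2) (xf ω) (w1 ω)) (w2 ω))
    (hya : ∀ ω, ya ω = milsteinStep f g (s ^ 2) (milsteinStep f g (s ^ 2) (xa ω) (w2 ω)) (w1 ω))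
    (hyc : ∀ ω, yc ω = milsteinStep f g (2 * s ^ 2) (xc ω) (w1 ω + w2 ω))
    (hp : ∀ ω, amV s (yf ω) (ya ω) (yc ω) ≤ amV s (xf ω) (xa ω) (xc ω)
      + amMart f g s (xf ω) (xa ω) (xc ω) (w1 ω) (w2 ω)
      + K * s ^ 2 * (amV s (xf ω) (xa ω) (xc ω) * amZ s (w1 ω) (w2 ω) ^ q)) :
    Integrable (fun ω => amV s (yf ω) (ya ω) (yc ω)) μ ∧
    ∫ ω, amV s (yf ω) (ya ω) (yc ω) ∂μ
      ≤ (1 + K * s ^ 2 * M) * ∫ ω, amV s (xf ω) (xa ω) (xc ω) ∂μ := by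
  have hz := h.mart_zero hc hV
  obtain ⟨hi, he⟩ := h.int_VZ hV q
  have mxf : Measurable[mΩ] xf := h.mxf.mono h.leS le_rfl
  have mxa : Measurable[mΩ] xa := h.mxa.mono h.leS le_rfl
  have mxc : Measurable[mΩ] xc := h.mxc.mono h.leS le_rfl
  have mw1 : Measurable[mΩ] w1 := h.mw1.mono h.le1 le_rfl
  have mw2 : Measurable[mΩ] w2 := h.mw2.mono h.le2 le_rfl
  have myf : Measurable[mΩ] yf := by
    rw [funext hyf]; exact am_meas_step hc (am_meas_step hc mxf mw1 _) mw2 _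
  have mya : Measurable[mΩ] ya := by
    rw [funext hya]; exact am_meas_step hc (am_meas_step hc mxa mw2 _) mw1 _
  have myc : Measurable[mΩ] yc := by
    rw [funext hyc]; exact am_meas_step hc mxc (mw1.add mw2) _
  have hI1 : Integrable (fun ω => amV s (xf ω) (xa ω) (xc ω)
      + amMart f g s (xf ω) (xa ω) (xc ω) (w1 ω) (w2 ω)) μ := hV.add hz.1
  have hI2 := hi.const_mul (K * s ^ 2)
  have hI := hI1.add hI2
  have hY : Integrable (fun ω => amV s (yf ω) (ya ω) (yc ω)) μ := by
    refine hI.mono' (am_meas_V myf mya myc s).aestronglyMeasurable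
      (Filter.Eventually.of_forall fun ω => ?_)
    rw [Real.norm_of_nonneg (amV_nonneg _ _ _ _)]
    exact hp ω
  refine ⟨hY, ?_⟩
  have h0 : 0 ≤ ∫ ω, amV s (xf ω) (xa ω) (xc ω) ∂μ := integral_nonneg fun ω => amV_nonneg _ _ _ _
  have hle := integral_mono hY hI hp
  have e1 : ∫ ω, (amV s (xf ω) (xa ω) (xc ω)
      + amMart f g s (xf ω) (xa ω) (xc ω) (w1 ω) (w2 ω)
      + K * s ^ 2 * (amV s (xf ω) (xa ω) (xc ω) * amZ s (w1 ω) (w2 ω) ^ q)) ∂μ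
      = (∫ ω, amV s (xf ω) (xa ω) (xc ω) ∂μ) + K * s ^ 2 *
        ((∫ ω, amV s (xf ω) (xa ω) (xc ω) ∂μ) * ∫ ω, amZ s (w1 ω) (w2 ω) ^ q ∂μ) := by
    rw [integral_add hI1 hI2, integral_add hV hz.1, hz.2, integral_const_mul, he, add_zero]
  refine hle.trans (e1.le.trans ?_)
  have : K * s ^ 2 *
        ((∫ ω, amV s (xf ω) (xa ω) (xc ω) ∂μ) * ∫ ω, amZ s (w1 ω) (w2 ω) ^ q ∂μ)
      ≤ K * s ^ 2 * ((∫ ω, amV s (xf ω) (xa ω) (xc ω) ∂μ) * M) := by gcongr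
  linarith

end AMProb

end

/-- absolute moments of the standard Gaussian -/
noncomputable def amGam (q : ℕ) : ℝ := ∫ x, |x| ^ q ∂(gaussianReal 0 1)

/-- bound for the moments of the noise -/
noncomputable def amMom (m q : ℕ) : ℝ := (2 * m + 1) ^ q * (1 + 2 * m * amGam (q + 1))

section
variable {Ω : Type*} {mΩ : MeasurableSpace Ω} {μ : Measure Ω}

theorem am_gauss_int (q : ℕ) : Integrable (fun x => |x| ^ q) (gaussianReal 0 1) := by
  have h := (memLp_id_gaussianReal (μ := 0) (v := 1) (q : NNReal)).integrable_norm_pow'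
  simpa using h

theorem am_gauss_std {X : Ω → ℝ} (hX : Measurable X) {s : ℝ} (hs : 0 < s)
    (hmap : μ.map X = gaussianReal 0 (Real.toNNReal (s ^ 2))) :
    μ.map (fun ω => s⁻¹ * X ω) = gaussianReal 0 1 := by
  have h1 : μ.map (fun ω => s⁻¹ * X ω) = (μ.map X).map (fun x => s⁻¹ * x) := by
    rw [Measure.map_map (by fun_prop) hX]; rfl
  rw [h1, hmap, gaussianReal_map_const_mul]
  congr 1
  · simp
  · ext
    simp [Real.coe_toNNReal _ (sq_nonneg s)]
    field_simp

theorem am_gauss_moment {X : Ω → ℝ} (hX : Measurable X) {s : ℝ} (hs : 0 < s)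
    (hmap : μ.map X = gaussianReal 0 (Real.toNNReal (s ^ 2))) (q : ℕ) :
    Integrable (fun ω => (|X ω| / s) ^ q) μ ∧ ∫ ω, (|X ω| / s) ^ q ∂μ = amGam q := by
  have h1 := am_gauss_std hX hs hmap
  have e : (fun ω => (|X ω| / s) ^ q) = (fun x => |x| ^ q) ∘ (fun ω => s⁻¹ * X ω) := by
    funext ω
    simp only [Function.comp, abs_mul, abs_inv, abs_of_pos hs]
    rw [inv_mul_eq_div]
  have hm : Measurable (fun ω => s⁻¹ * X ω) := hX.const_mul _
  have hI := am_gauss_int q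
  rw [← h1] at hI
  constructor
  · rw [e]
    exact hI.comp_measurable hm
  · rw [amGam, ← h1, integral_map hm.aemeasurable hI.aestronglyMeasurable, e]; rfl

theorem am_gauss_mean {X : Ω → ℝ} (hX : Measurable X) {v : NNReal}
    (hmap : μ.map X = gaussianReal 0 v) : ∫ ω, X ω ∂μ = 0 := by
  have h : ∫ x, x ∂(μ.map X) = ∫ ω, X ω ∂μ := integral_map hX.aemeasurable (by fun_prop)
  rw [← h, hmap, integral_id_gaussianReal]

theorem am_gauss_sq {X : Ω → ℝ} (hX : Measurable X) {v : NNReal}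
    (hmap : μ.map X = gaussianReal 0 v) : ∫ ω, X ω * X ω ∂μ = v := by
  have h : ∫ x, x * x ∂(μ.map X) = ∫ ω, X ω * X ω ∂μ :=
    integral_map hX.aemeasurable (by fun_prop)
  have h2 := variance_id_gaussianReal (μ := 0) (v := v)
  rw [variance_eq_integral (by fun_prop)] at h2
  simp only [id, integral_id_gaussianReal, sub_zero] at h2
  rw [← h, hmap, ← h2]
  congr 1
  funext x; ring

theorem am_gauss_l2 {X : Ω → ℝ} (hX : Measurable X) {v : NNReal}
    (hmap : μ.map X = gaussianReal 0 v) : MemLp X 2 μ := by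
  have h := memLp_id_gaussianReal (μ := 0) (v := v) 2
  rw [← hmap] at h
  exact h.comp_measurePreserving ⟨hX, rfl⟩

variable {m : ℕ} {w1 w2 : Ω → Fin m → ℝ} {s : ℝ}

theorem amZ_pow_le {s : ℝ} (hs : 0 < s) (w1 w2 : Fin m → ℝ) (q : ℕ) :
    amZ s w1 w2 ^ q ≤ (2 * m + 1 : ℝ) ^ q *
      (1 + ((∑ j, (|w1 j| / s) ^ (q + 1)) + ∑ j, (|w2 j| / s) ^ (q + 1))) := by
  let u : Option (Fin m ⊕ Fin m) → ℝ := fun o =>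
    o.elim 1 (Sum.elim (fun j => |w1 j| / s) (fun j => |w2 j| / s))
  have hu : ∀ o, 0 ≤ u o := by
    rintro (_ | _ | _) <;> simp only [u, Option.elim, Sum.elim_inl, Sum.elim_inr] <;> positivity
  have hsum : ∑ o, u o = amZ s w1 w2 := by
    rw [Fintype.sum_option, Fintype.sum_sum_type]
    simp only [u, Option.elim, Sum.elim_inl, Sum.elim_inr, amZ, Finset.sum_div]
    ring
  have hsum2 : ∑ o, u o ^ (q + 1) = 1 + ((∑ j, (|w1 j| / s) ^ (q + 1))
      + ∑ j, (|w2 j| / s) ^ (q + 1)) := by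
    rw [Fintype.sum_option, Fintype.sum_sum_type]
    simp only [u, Option.elim, Sum.elim_inl, Sum.elim_inr, one_pow]
  have hz : 1 ≤ amZ s w1 w2 := by
    rw [← hsum]
    exact Finset.single_le_sum (f := u) (fun o _ => hu o) (Finset.mem_univ none)
  have h := pow_sum_div_card_le_sum_pow (s := Finset.univ) (f := u) (fun o _ => hu o) q
  rw [hsum, hsum2, div_le_iff₀ (by positivity)] at h
  have hcard : ((Finset.univ : Finset (Option (Fin m ⊕ Fin m))).card : ℝ) = 2 * m + 1 := by
    simp; ring
  rw [hcard, mul_comm] at h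
  exact (pow_le_pow_right₀ hz (Nat.le_succ q)).trans h

theorem amZ_moment [IsProbabilityMeasure μ] (hs : 0 < s) (hw1 : ∀ j, Measurable fun ω => w1 ω j)
    (hw2 : ∀ j, Measurable fun ω => w2 ω j)
    (h1 : ∀ j, μ.map (fun ω => w1 ω j) = gaussianReal 0 (Real.toNNReal (s ^ 2)))
    (h2 : ∀ j, μ.map (fun ω => w2 ω j) = gaussianReal 0 (Real.toNNReal (s ^ 2))) (q : ℕ) :
    Integrable (fun ω => amZ s (w1 ω) (w2 ω) ^ q) μ ∧
      ∫ ω, amZ s (w1 ω) (w2 ω) ^ q ∂μ ≤ amMom m q := by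
  have hm := (am_meas_Z (measurable_pi_iff.2 hw1) (measurable_pi_iff.2 hw2) s).pow_const q
  have i1 : Integrable (fun ω => ∑ j, (|w1 ω j| / s) ^ (q + 1)) μ :=
    integrable_finsetSum _ fun j _ => (am_gauss_moment (hw1 j) hs (h1 j) (q + 1)).1
  have i2 : Integrable (fun ω => ∑ j, (|w2 ω j| / s) ^ (q + 1)) μ :=
    integrable_finsetSum _ fun j _ => (am_gauss_moment (hw2 j) hs (h2 j) (q + 1)).1
  have i12 : Integrable (fun ω => (∑ j, (|w1 ω j| / s) ^ (q + 1))
      + ∑ j, (|w2 ω j| / s) ^ (q + 1)) μ := i1.add i2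
  have i3 : Integrable (fun ω => (2 * m + 1 : ℝ) ^ q *
      (1 + ((∑ j, (|w1 ω j| / s) ^ (q + 1)) + ∑ j, (|w2 ω j| / s) ^ (q + 1)))) μ :=
    ((integrable_const 1).add i12).const_mul _
  have hz : ∀ ω, 0 ≤ amZ s (w1 ω) (w2 ω) := fun ω => by unfold amZ; positivity
  have hI : Integrable (fun ω => amZ s (w1 ω) (w2 ω) ^ q) μ := by
    refine i3.mono' hm.aestronglyMeasurable (Filter.Eventually.of_forall fun ω => ?_)
    rw [Real.norm_of_nonneg (pow_nonneg (hz ω) _)]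
    exact amZ_pow_le hs _ _ q
  refine ⟨hI, (integral_mono hI i3 fun ω => amZ_pow_le hs _ _ q).trans (le_of_eq ?_)⟩
  rw [integral_const_mul, integral_add (integrable_const 1) i12, integral_add i1 i2,
    integral_finsetSum _ fun j _ => (am_gauss_moment (hw1 j) hs (h1 j) (q + 1)).1,
    integral_finsetSum _ fun j _ => (am_gauss_moment (hw2 j) hs (h2 j) (q + 1)).1]
  simp only [(am_gauss_moment (hw1 _) hs (h1 _) (q + 1)).2,
    (am_gauss_moment (hw2 _) hs (h2 _) (q + 1)).2]
  rw [amMom]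
  congr 1
  simp
  ring

theorem am_cov {w : Ω → Fin m → ℝ} [IsProbabilityMeasure μ] (hw : ∀ j, Measurable fun ω => w ω j)
    (h : ∀ j, μ.map (fun ω => w ω j) = gaussianReal 0 (Real.toNNReal (s ^ 2)))
    (hi : ∀ j k, j ≠ k → IndepFun (fun ω => w ω j) (fun ω => w ω k) μ) (j k : Fin m) :
    ∫ ω, (w ω j * w ω k - if j = k then s ^ 2 else 0) ∂μ = 0 := by
  have hI : Integrable (fun ω => w ω j * w ω k) μ :=
    (am_gauss_l2 (hw j) (h j)).integrable_mul (am_gauss_l2 (hw k) (h k))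
  rw [integral_sub hI (integrable_const _)]
  by_cases hjk : j = k
  · subst hjk
    simp [am_gauss_sq (hw j) (h j), Real.coe_toNNReal _ (sq_nonneg s)]
  · rw [(hi j k hjk).integral_fun_mul_eq_mul_integral (hw j).aestronglyMeasurable
      (hw k).aestronglyMeasurable, am_gauss_mean (hw j) (h j)]
    simp [hjk]

end

section
variable {Ω : Type*} {m N : ℕ}

/-- sigma-algebra generated by some of the increments -/
def amFil (W : Fin N → Bool → Ω → Fin m → ℝ) (A : Set (Fin N × Bool × Fin m)) :
    MeasurableSpace Ω :=
  ⨆ q ∈ A, MeasurableSpace.comap (fun ω => W q.1 q.2.1 ω q.2.2) inferInstance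

theorem amFil_mono (W : Fin N → Bool → Ω → Fin m → ℝ) {A B : Set (Fin N × Bool × Fin m)}
    (h : A ⊆ B) : amFil W A ≤ amFil W B := biSup_mono h

theorem amFil_sup (W : Fin N → Bool → Ω → Fin m → ℝ) (A B : Set (Fin N × Bool × Fin m)) :
    amFil W A ⊔ amFil W B = amFil W (A ∪ B) := iSup_union.symm

theorem amFil_meas (W : Fin N → Bool → Ω → Fin m → ℝ) {A : Set (Fin N × Bool × Fin m)}
    {n : Fin N} {b : Bool} (h : ∀ j, (n, b, j) ∈ A) : Measurable[amFil W A] (W n b) := by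
  refine @measurable_pi_lambda _ _ _ (amFil W A) _ _ fun j => ?_
  refine Measurable.of_comap_le ?_
  exact le_iSup₂_of_le (n, b, j) (h j) le_rfl

theorem amFil_le {mΩ : MeasurableSpace Ω} {W : Fin N → Bool → Ω → Fin m → ℝ}
    (hW : ∀ n b j, Measurable fun ω => W n b ω j) (A : Set (Fin N × Bool × Fin m)) :
    amFil W A ≤ mΩ := iSup₂_le fun q _ => (hW q.1 q.2.1 q.2.2).comap_le

theorem amFil_indep {mΩ : MeasurableSpace Ω} {μ : Measure Ω} {W : Fin N → Bool → Ω → Fin m → ℝ}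
    (hW : ∀ n b j, Measurable fun ω => W n b ω j)
    (hI : iIndepFun (m := fun _ : Fin N × Bool × Fin m => inferInstance)
          (fun q : Fin N × Bool × Fin m => fun ω => W q.1 q.2.1 ω q.2.2) μ)
    {A B : Set (Fin N × Bool × Fin m)} (h : Disjoint A B) : Indep (amFil W A) (amFil W B) μ :=
  indep_iSup_of_disjoint (m := fun q : Fin N × Bool × Fin m =>
    MeasurableSpace.comap (fun ω => W q.1 q.2.1 ω q.2.2) inferInstance)
    (fun q => (hW q.1 q.2.1 q.2.2).comap_le) ((iIndepFun_iff_iIndep _ _ _).1 hI) h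

/-- indices of increments before step `n` -/
def amPast (N m n : ℕ) : Set (Fin N × Bool × Fin m) := {q | (q.1 : ℕ) < n}

/-- indices of increments at step `n` -/
def amNow {N : ℕ} (m : ℕ) (n : Fin N) (b : Bool) : Set (Fin N × Bool × Fin m) :=
  {q | q.1 = n ∧ q.2.1 = b}

/-- The full setting. -/
structure AMSys {d : ℕ} {mΩ : MeasurableSpace Ω} (f : (Fin d → ℝ) → Fin d → ℝ)
    (g : (Fin d → ℝ) → Fin d → Fin m → ℝ) (x₀ : Fin d → ℝ) (μ : Measure Ω) (s : ℝ)
    (W : Fin N → Bool → Ω → Fin m → ℝ) (Xf Xa Xc : ℕ → Ω → Fin d → ℝ) : Prop where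
  prob : IsProbabilityMeasure μ
  hs : 0 < s
  hW : ∀ n b j, Measurable fun ω => W n b ω j
  hG : ∀ n b j, μ.map (fun ω => W n b ω j) = gaussianReal 0 (Real.toNNReal (s ^ 2))
  hI : iIndepFun (m := fun _ : Fin N × Bool × Fin m => inferInstance)
          (fun q : Fin N × Bool × Fin m => fun ω => W q.1 q.2.1 ω q.2.2) μ
  f0 : ∀ ω, Xf 0 ω = x₀
  a0 : ∀ ω, Xa 0 ω = x₀
  c0 : ∀ ω, Xc 0 ω = x₀
  f1 : ∀ (n : Fin N) ω, Xf (2 * (n : ℕ) + 1) ω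
            = milsteinStep f g (s ^ 2) (Xf (2 * (n : ℕ)) ω) (W n false ω)
  f2 : ∀ (n : Fin N) ω, Xf (2 * (n : ℕ) + 2) ω
            = milsteinStep f g (s ^ 2) (Xf (2 * (n : ℕ) + 1) ω) (W n true ω)
  a1 : ∀ (n : Fin N) ω, Xa (2 * (n : ℕ) + 1) ω
            = milsteinStep f g (s ^ 2) (Xa (2 * (n : ℕ)) ω) (W n true ω)
  a2 : ∀ (n : Fin N) ω, Xa (2 * (n : ℕ) + 2) ω
            = milsteinStep f g (s ^ 2) (Xa (2 * (n : ℕ) + 1) ω) (W n false ω)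
  c1 : ∀ (n : Fin N) ω, Xc ((n : ℕ) + 1) ω
            = milsteinStep f g (2 * s ^ 2) (Xc (n : ℕ) ω) (W n false ω + W n true ω)

namespace AMSys
variable {d : ℕ} {mΩ : MeasurableSpace Ω} {f : (Fin d → ℝ) → Fin d → ℝ}
    {g : (Fin d → ℝ) → Fin d → Fin m → ℝ} {x₀ : Fin d → ℝ} {μ : Measure Ω} {s : ℝ}
    {W : Fin N → Bool → Ω → Fin m → ℝ} {Xf Xa Xc : ℕ → Ω → Fin d → ℝ} {C : ℝ}

theorem meas (h : AMSys f g x₀ μ s W Xf Xa Xc) (hc : AMCoef f g C) (n : ℕ) (hn : n ≤ N) :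
    Measurable[amFil W (amPast N m n)] (Xf (2 * n)) ∧
    Measurable[amFil W (amPast N m n)] (Xa (2 * n)) ∧
    Measurable[amFil W (amPast N m n)] (Xc n) := by
  induction n with
  | zero =>
    simp only [mul_zero, funext h.f0, funext h.a0, funext h.c0]
    exact ⟨measurable_const, measurable_const, measurable_const⟩
  | succ n ih =>
    obtain ⟨i1, i2, i3⟩ := ih (by omega)
    have hle : amFil W (amPast N m n) ≤ amFil W (amPast N m (n + 1)) :=
      amFil_mono W fun q (hq : (q.1 : ℕ) < n) => (show (q.1 : ℕ) < n + 1 by omega)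
    replace i1 := i1.mono hle le_rfl
    replace i2 := i2.mono hle le_rfl
    replace i3 := i3.mono hle le_rfl
    let k : Fin N := ⟨n, by omega⟩
    have mw : ∀ b, Measurable[amFil W (amPast N m (n + 1))] (W k b) := fun b =>
      amFil_meas W fun j => show n < n + 1 by omega
    have e1 := funext (h.f1 k)
    have e2 := funext (h.f2 k)
    have e3 := funext (h.a1 k)
    have e4 := funext (h.a2 k)
    have e5 := funext (h.c1 k)
    refine ⟨?_, ?_, ?_⟩
    · change Measurable[amFil W (amPast N m (n + 1))] (Xf (2 * (k : ℕ) + 2))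
      rw [e2, e1]
      exact am_meas_step hc (am_meas_step hc i1 (mw _) _) (mw _) _
    · change Measurable[amFil W (amPast N m (n + 1))] (Xa (2 * (k : ℕ) + 2))
      rw [e4, e3]
      exact am_meas_step hc (am_meas_step hc i2 (mw _) _) (mw _) _
    · change Measurable[amFil W (amPast N m (n + 1))] (Xc ((k : ℕ) + 1))
      rw [e5]
      exact am_meas_step hc i3 ((mw _).add (mw _)) _

theorem moment (h : AMSys f g x₀ μ s W Xf Xa Xc) (n : Fin N) (q : ℕ) :
    Integrable (fun ω => amZ s (W n false ω) (W n true ω) ^ q) μ ∧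
      ∫ ω, amZ s (W n false ω) (W n true ω) ^ q ∂μ ≤ amMom m q :=
  have := h.prob
  amZ_moment h.hs (h.hW n false) (h.hW n true) (h.hG n false) (h.hG n true) q

theorem toProb (h : AMSys f g x₀ μ s W Xf Xa Xc) (hc : AMCoef f g C) (n : Fin N) :
    AMProb μ (amFil W (amPast N m n)) (amFil W (amNow m n false)) (amFil W (amNow m n true)) s
      (Xf (2 * (n : ℕ))) (Xa (2 * (n : ℕ))) (Xc n) (W n false) (W n true) := by
  have := h.prob
  have hm := h.meas hc n n.2.le
  have hi : ∀ b j k, j ≠ k → IndepFun (fun ω => W n b ω j) (fun ω => W n b ω k) μ :=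
    fun b j k hjk => h.hI.indepFun (i := (n, b, j)) (j := (n, b, k)) (by simpa using hjk)
  refine ⟨h.hs, amFil_le h.hW _, amFil_le h.hW _, amFil_le h.hW _, hm.1, hm.2.1, hm.2.2,
    amFil_meas W fun j => ⟨rfl, rfl⟩, amFil_meas W fun j => ⟨rfl, rfl⟩, ?_, ?_, ?_,
    fun q => (h.moment n q).1, fun j => am_gauss_mean (h.hW n _ j) (h.hG n _ j),
    fun j => am_gauss_mean (h.hW n _ j) (h.hG n _ j),
    fun j k => am_cov (h.hW n false) (h.hG n false) (hi false) j k,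
    fun j k => am_cov (h.hW n true) (h.hG n true) (hi true) j k⟩
  · rw [amFil_sup]
    refine amFil_indep h.hW h.hI (Set.disjoint_left.2 ?_)
    rintro q hq (⟨h1, -⟩ | ⟨h1, -⟩) <;> exact absurd hq (by simp [amPast, h1])
  · rw [amFil_sup]
    refine amFil_indep h.hW h.hI (Set.disjoint_left.2 ?_)
    rintro q (hq | ⟨-, hq⟩) ⟨h1, h2⟩
    · exact absurd hq (by simp [amPast, h1])
    · simp [hq] at h2
  · rw [amFil_sup]
    refine amFil_indep h.hW h.hI (Set.disjoint_left.2 ?_)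
    rintro q (hq | ⟨-, hq⟩) ⟨h1, h2⟩
    · exact absurd hq (by simp [amPast, h1])
    · simp [hq] at h2

theorem iterate (h : AMSys f g x₀ μ s W Xf Xa Xc) (hc : AMCoef f g C) {q : ℕ} {K S0 : ℝ}
    (hK : 0 ≤ K) (hS : s ≤ S0)
    (hp : ∀ (s : ℝ) (xf xa xc : Fin d → ℝ) (w1 w2 : Fin m → ℝ), 0 < s → s ≤ S0 →
      amV s (milsteinStep f g (s ^ 2) (milsteinStep f g (s ^ 2) xf w1) w2)
        (milsteinStep f g (s ^ 2) (milsteinStep f g (s ^ 2) xa w2) w1)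
        (milsteinStep f g (2 * s ^ 2) xc (w1 + w2))
        ≤ amV s xf xa xc + amMart f g s xf xa xc w1 w2
          + K * s ^ 2 * (amV s xf xa xc * amZ s w1 w2 ^ q)) (n : ℕ) (hn : n ≤ N) :
    Integrable (fun ω => amV s (Xf (2 * n) ω) (Xa (2 * n) ω) (Xc n ω)) μ ∧
    ∫ ω, amV s (Xf (2 * n) ω) (Xa (2 * n) ω) (Xc n ω) ∂μ
      ≤ (1 + K * s ^ 2 * |amMom m q|) ^ n * amV s x₀ x₀ x₀ := by
  have := h.prob
  induction n with
  | zero => simp [h.f0, h.a0, h.c0]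
  | succ n ih =>
    obtain ⟨i1, i2⟩ := ih (by omega)
    let k : Fin N := ⟨n, by omega⟩
    have e1 : ∀ ω, Xf (2 * (n + 1)) ω = milsteinStep f g (s ^ 2)
        (milsteinStep f g (s ^ 2) (Xf (2 * (k : ℕ)) ω) (W k false ω)) (W k true ω) := fun ω => by
      rw [← h.f1 k, ← h.f2 k]; rfl
    have e2 : ∀ ω, Xa (2 * (n + 1)) ω = milsteinStep f g (s ^ 2)
        (milsteinStep f g (s ^ 2) (Xa (2 * (k : ℕ)) ω) (W k true ω)) (W k false ω) := fun ω => by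
      rw [← h.a1 k, ← h.a2 k]; rfl
    have e3 : ∀ ω, Xc (n + 1) ω = milsteinStep f g (2 * s ^ 2) (Xc k ω)
        (W k false ω + W k true ω) := fun ω => by rw [← h.c1 k]
    obtain ⟨j1, j2⟩ := (h.toProb hc k).step hc i1 hK
      ((h.moment k q).2.trans (le_abs_self _)) e1 e2 e3 (fun ω => by
        rw [e1, e2, e3]; exact hp s _ _ _ _ _ h.hs hS)
    refine ⟨j1, j2.trans ?_⟩
    have h0 : 0 ≤ 1 + K * s ^ 2 * |amMom m q| := by positivity
    exact (mul_le_mul_of_nonneg_left i2 h0).trans (le_of_eq (by ring))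

end AMSys
end

theorem am_avg {E : Type*} [NormedAddCommGroup E] [NormedSpace ℝ E] {N : ℕ} (hN : 1 ≤ N)
    (e : ℕ → E) (k : ℕ) :
    ‖(N : ℝ)⁻¹ • ∑ n ∈ Finset.range N, e n‖ ^ (k + 1)
      ≤ (N : ℝ)⁻¹ * ∑ n ∈ Finset.range N, ‖e n‖ ^ (k + 1) := by
  have hN' : (0 : ℝ) < N := by exact_mod_cast hN
  have h1 := pow_sum_div_card_le_sum_pow (s := Finset.range N) (f := fun n => ‖e n‖)
    (fun n _ => norm_nonneg _) k
  rw [Finset.card_range, div_le_iff₀ (by positivity)] at h1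
  rw [norm_smul, norm_inv, Real.norm_natCast, mul_pow]
  have h2 : ‖∑ n ∈ Finset.range N, e n‖ ^ (k + 1) ≤ (∑ n ∈ Finset.range N, ‖e n‖) ^ (k + 1) :=
    pow_le_pow_left₀ (norm_nonneg _) (norm_sum_le _ _) _
  calc ((N : ℝ)⁻¹) ^ (k + 1) * ‖∑ n ∈ Finset.range N, e n‖ ^ (k + 1)
      ≤ ((N : ℝ)⁻¹) ^ (k + 1) * ((∑ n ∈ Finset.range N, ‖e n‖ ^ (k + 1)) * N ^ k) := by
        gcongr; exact h2.trans h1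
    _ = _ := by
        rw [pow_succ, inv_pow]; field_simp

theorem amV_E {d : ℕ} (s : ℝ) (xf xa xc : Fin d → ℝ) :
    ‖xf + xa - (2 : ℝ) • xc‖ ^ 2 ≤ amV s xf xa xc := by
  have h0 := amV_nonneg s xf xa xc
  have : ‖xf + xa - (2 : ℝ) • xc‖ ≤ √(amV s xf xa xc) := by
    rw [pi_norm_le_iff_of_nonneg (Real.sqrt_nonneg _)]
    intro i
    rw [Real.norm_eq_abs]
    refine Real.abs_le_sqrt (le_trans ?_ (amV_coord s xf xa xc i))
    simp only [Pi.sub_apply, Pi.add_apply, Pi.smul_apply, smul_eq_mul]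
    have : 0 ≤ (xf i - xc i) ^ 4 + (xa i - xc i) ^ 4
      + (s * xf i) ^ 4 + (s * xa i) ^ 4 + (s * xc i) ^ 4 := by positivity
    linarith
  calc _ ≤ √(amV s xf xa xc) ^ 2 := by gcongr
    _ = _ := Real.sq_sqrt h0

theorem amV_D {d : ℕ} (s : ℝ) (xf xa xc : Fin d → ℝ) :
    ‖xf - xa‖ ^ 4 ≤ 16 * amV s xf xa xc := by
  have h0 := amV_nonneg s xf xa xc
  have : ‖xf - xa‖ ≤ 2 * √(√(amV s xf xa xc)) := by
    rw [pi_norm_le_iff_of_nonneg (by positivity)]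
    intro i
    rw [Real.norm_eq_abs]
    have h1 : |xf i - xc i| ≤ √(√(amV s xf xa xc)) := by
      refine am_abs_le_root (le_trans ?_ (amV_coord s xf xa xc i))
      have : 0 ≤ (xf i + xa i - 2 * xc i) ^ 2 + (xa i - xc i) ^ 4
        + (s * xf i) ^ 4 + (s * xa i) ^ 4 + (s * xc i) ^ 4 := by positivity
      linarith
    have h2 : |xa i - xc i| ≤ √(√(amV s xf xa xc)) := by
      refine am_abs_le_root (le_trans ?_ (amV_coord s xf xa xc i))
      have : 0 ≤ (xf i + xa i - 2 * xc i) ^ 2 + (xf i - xc i) ^ 4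
        + (s * xf i) ^ 4 + (s * xa i) ^ 4 + (s * xc i) ^ 4 := by positivity
      linarith
    have h3 : (xf - xa) i = (xf i - xc i) - (xa i - xc i) := by simp
    rw [h3]
    have := abs_sub (xf i - xc i) (xa i - xc i)
    linarith
  calc _ ≤ (2 * √(√(amV s xf xa xc))) ^ 4 := by gcongr
    _ = 16 * √(√(amV s xf xa xc)) ^ 4 := by ring
    _ = _ := by rw [am_root_pow h0]

theorem am_comb_two {E : Type*} [NormedAddCommGroup E] [NormedSpace ℝ E] (a b c : E) :
    ‖(4⁻¹ : ℝ) • a + (4⁻¹ : ℝ) • b + (2⁻¹ : ℝ) • c‖ ^ 2 ≤ ‖a‖ ^ 2 + ‖b‖ ^ 2 + ‖c‖ ^ 2 := by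
  have h : ‖(4⁻¹ : ℝ) • a + (4⁻¹ : ℝ) • b + (2⁻¹ : ℝ) • c‖ ≤ 4⁻¹ * ‖a‖ + 4⁻¹ * ‖b‖ + 2⁻¹ * ‖c‖ := by
    refine (norm_add₃_le).trans (le_of_eq ?_)
    simp [norm_smul]
  have := norm_nonneg a; have := norm_nonneg b; have := norm_nonneg c
  refine (pow_le_pow_left₀ (norm_nonneg _) h 2).trans ?_
  nlinarith [sq_nonneg (‖a‖ - ‖b‖), sq_nonneg (‖a‖ - ‖c‖), sq_nonneg (‖b‖ - ‖c‖),
    sq_nonneg ‖a‖, sq_nonneg ‖b‖, sq_nonneg ‖c‖]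

theorem am_comb_four {E : Type*} [NormedAddCommGroup E] [NormedSpace ℝ E] (a b c : E) :
    ‖(4⁻¹ : ℝ) • a + (4⁻¹ : ℝ) • b + (2⁻¹ : ℝ) • c‖ ^ 4 ≤ ‖a‖ ^ 4 + ‖b‖ ^ 4 + ‖c‖ ^ 4 := by
  set y := ‖(4⁻¹ : ℝ) • a + (4⁻¹ : ℝ) • b + (2⁻¹ : ℝ) • c‖ with hy
  have h : y ≤ 4⁻¹ * ‖a‖ + 4⁻¹ * ‖b‖ + 2⁻¹ * ‖c‖ := by
    refine (norm_add₃_le).trans (le_of_eq ?_)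
    simp [norm_smul]
  have h0 : 0 ≤ y := norm_nonneg _
  obtain ⟨t, ht, ht4⟩ : ∃ t, (4⁻¹ * ‖a‖ + 4⁻¹ * ‖b‖ + 2⁻¹ * ‖c‖ ≤ t) ∧
      t ^ 4 ≤ ‖a‖ ^ 4 + ‖b‖ ^ 4 + ‖c‖ ^ 4 := by
    refine ⟨max ‖a‖ (max ‖b‖ ‖c‖), ?_, ?_⟩
    · have h1 := le_max_left ‖a‖ (max ‖b‖ ‖c‖)
      have h2 := (le_max_left ‖b‖ ‖c‖).trans (le_max_right ‖a‖ (max ‖b‖ ‖c‖))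
      have h3 := (le_max_right ‖b‖ ‖c‖).trans (le_max_right ‖a‖ (max ‖b‖ ‖c‖))
      linarith
    · have h1 : 0 ≤ ‖a‖ ^ 4 := by positivity
      have h2 : 0 ≤ ‖b‖ ^ 4 := by positivity
      have h3 : 0 ≤ ‖c‖ ^ 4 := by positivity
      rcases max_choice ‖a‖ (max ‖b‖ ‖c‖) with e | e
      · rw [e]; linarith
      · rw [e]
        rcases max_choice ‖b‖ ‖c‖ with e | e <;> rw [e] <;> linarith
  exact (pow_le_pow_left₀ h0 (h.trans ht) 4).trans ht4

/-- pathwise bound on the error of the payoff -/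
theorem am_payoff {d : ℕ} {P : (Fin d → ℝ) → ℝ} (hP : ContDiff ℝ 2 P) {CP : ℝ}
    (hP1 : ∀ x, ‖fderiv ℝ P x‖ ≤ CP) (hP2 : ∀ x, ‖iteratedFDeriv ℝ 2 P x‖ ≤ CP) :
    ∃ C', 0 ≤ C' ∧ ∀ a b c : Fin d → ℝ, (1 / 2 * (P a + P b) - P c) ^ 2
      ≤ C' * (‖a + b - (2 : ℝ) • c‖ ^ 2 + ‖a - b‖ ^ 4) := by
  refine ⟨CP ^ 2, by positivity, fun a b c => ?_⟩
  have h := am_mid hP hP1 hP2 a b c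
  rw [Real.norm_eq_abs, smul_eq_mul] at h
  have e : 1 / 2 * (P a + P b) - P c = 1 / 2 * (P a + P b - 2 * P c) := by ring
  rw [e, mul_pow, ← sq_abs (P a + P b - 2 * P c)]
  have h2 := pow_le_pow_left₀ (abs_nonneg _) h 2
  nlinarith [sq_nonneg (CP * ‖a + b - (2 : ℝ) • c‖ - CP * ‖a - b‖ ^ 2),
    sq_nonneg (CP * ‖a + b - (2 : ℝ) • c‖), sq_nonneg (CP * ‖a - b‖ ^ 2)]

theorem am_avg_bound {d N : ℕ} (hN : 1 ≤ N) (xf xa xc : ℕ → Fin d → ℝ) (R : ℕ → ℝ)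
    (hR : ∀ n, n < N →
      ‖xf (2 * n) + xa (2 * n) - (2 : ℝ) • xc n‖ ^ 2
        + ‖xf (2 * n + 2) + xa (2 * n + 2) - (2 : ℝ) • xc (n + 1)‖ ^ 2
        + ‖xf (2 * n + 1) + xa (2 * n + 1) - xc n - xc (n + 1)‖ ^ 2
        + (‖xf (2 * n) - xa (2 * n)‖ ^ 4 + ‖xf (2 * n + 2) - xa (2 * n + 2)‖ ^ 4
        + ‖xf (2 * n + 1) - xa (2 * n + 1)‖ ^ 4) ≤ R n) :
    ‖((N : ℝ)⁻¹ • ∑ n ∈ Finset.range N,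
          (4⁻¹ : ℝ) • (xf (2 * n) + (2 : ℝ) • xf (2 * n + 1) + xf (2 * n + 2)))
        + ((N : ℝ)⁻¹ • ∑ n ∈ Finset.range N,
          (4⁻¹ : ℝ) • (xa (2 * n) + (2 : ℝ) • xa (2 * n + 1) + xa (2 * n + 2)))
        - (2 : ℝ) • ((N : ℝ)⁻¹ • ∑ n ∈ Finset.range N, (2⁻¹ : ℝ) • (xc n + xc (n + 1)))‖ ^ 2
      + ‖((N : ℝ)⁻¹ • ∑ n ∈ Finset.range N,
          (4⁻¹ : ℝ) • (xf (2 * n) + (2 : ℝ) • xf (2 * n + 1) + xf (2 * n + 2)))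
        - ((N : ℝ)⁻¹ • ∑ n ∈ Finset.range N,
          (4⁻¹ : ℝ) • (xa (2 * n) + (2 : ℝ) • xa (2 * n + 1) + xa (2 * n + 2)))‖ ^ 4
      ≤ (N : ℝ)⁻¹ * ∑ n ∈ Finset.range N, R n := by
  have e1 : ((N : ℝ)⁻¹ • ∑ n ∈ Finset.range N,
          (4⁻¹ : ℝ) • (xf (2 * n) + (2 : ℝ) • xf (2 * n + 1) + xf (2 * n + 2)))
        + ((N : ℝ)⁻¹ • ∑ n ∈ Finset.range N,
          (4⁻¹ : ℝ) • (xa (2 * n) + (2 : ℝ) • xa (2 * n + 1) + xa (2 * n + 2)))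
        - (2 : ℝ) • ((N : ℝ)⁻¹ • ∑ n ∈ Finset.range N, (2⁻¹ : ℝ) • (xc n + xc (n + 1)))
      = (N : ℝ)⁻¹ • ∑ n ∈ Finset.range N,
        ((4⁻¹ : ℝ) • (xf (2 * n) + xa (2 * n) - (2 : ℝ) • xc n)
          + (4⁻¹ : ℝ) • (xf (2 * n + 2) + xa (2 * n + 2) - (2 : ℝ) • xc (n + 1))
          + (2⁻¹ : ℝ) • (xf (2 * n + 1) + xa (2 * n + 1) - xc n - xc (n + 1))) := by
    rw [smul_comm (2 : ℝ), ← smul_add, ← smul_sub, Finset.smul_sum, ← Finset.sum_add_distrib,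
      ← Finset.sum_sub_distrib]
    congr 1
    refine Finset.sum_congr rfl fun n _ => ?_
    module
  have e2 : ((N : ℝ)⁻¹ • ∑ n ∈ Finset.range N,
          (4⁻¹ : ℝ) • (xf (2 * n) + (2 : ℝ) • xf (2 * n + 1) + xf (2 * n + 2)))
        - ((N : ℝ)⁻¹ • ∑ n ∈ Finset.range N,
          (4⁻¹ : ℝ) • (xa (2 * n) + (2 : ℝ) • xa (2 * n + 1) + xa (2 * n + 2)))
      = (N : ℝ)⁻¹ • ∑ n ∈ Finset.range N,
        ((4⁻¹ : ℝ) • (xf (2 * n) - xa (2 * n))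
          + (4⁻¹ : ℝ) • (xf (2 * n + 2) - xa (2 * n + 2))
          + (2⁻¹ : ℝ) • (xf (2 * n + 1) - xa (2 * n + 1))) := by
    rw [← smul_sub, ← Finset.sum_sub_distrib]
    congr 1
    refine Finset.sum_congr rfl fun n _ => ?_
    module
  rw [e1, e2]
  refine (add_le_add (am_avg hN _ 1) (am_avg hN _ 3)).trans ?_
  rw [← mul_add, ← Finset.sum_add_distrib]
  refine mul_le_mul_of_nonneg_left (Finset.sum_le_sum fun n hn => ?_) (by positivity)
  exact (add_le_add (am_comb_two _ _ _) (am_comb_four _ _ _)).trans (hR n (Finset.mem_range.1 hn))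

theorem am_int_lin {Ω : Type*} {mΩ : MeasurableSpace Ω} {μ : Measure Ω} {X Y Z : Ω → ℝ}
    (hX : Integrable X μ) (hY : Integrable Y μ) (hZ : Integrable Z μ) (a b c : ℝ) :
    ∫ ω, (a * X ω + b * Y ω + c * Z ω) ∂μ
      = a * (∫ ω, X ω ∂μ) + b * (∫ ω, Y ω ∂μ) + c * ∫ ω, Z ω ∂μ := by
  have h1 : Integrable (fun ω => a * X ω + b * Y ω) μ := (hX.const_mul a).add (hY.const_mul b)
  rw [integral_add h1 (hZ.const_mul c), integral_add (hX.const_mul a) (hY.const_mul b),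
    integral_const_mul, integral_const_mul, integral_const_mul]

theorem AMSys.final {Ω : Type*} {m N d : ℕ} {mΩ : MeasurableSpace Ω}
    {f : (Fin d → ℝ) → Fin d → ℝ}
    {g : (Fin d → ℝ) → Fin d → Fin m → ℝ} {x₀ : Fin d → ℝ} {μ : Measure Ω} {s : ℝ}
    {W : Fin N → Bool → Ω → Fin m → ℝ} {Xf Xa Xc : ℕ → Ω → Fin d → ℝ} {C : ℝ}
    (h : AMSys f g x₀ μ s W Xf Xa Xc) (hc : AMCoef f g C) (hN : 1 ≤ N) {q : ℕ} {K M B C' : ℝ}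
    (hK : 0 ≤ K) (hM : amMom m q ≤ M) (hM0 : 0 ≤ M) (hC' : 0 ≤ C')
    (hp : ∀ (xf xa xc : Fin d → ℝ) (w1 w2 : Fin m → ℝ),
      ‖milsteinStep f g (s ^ 2) xf w1 - milsteinStep f g (s ^ 2) xa w2‖ ^ 4
        ≤ K * (amV s xf xa xc * amZ s w1 w2 ^ q) ∧
      ‖milsteinStep f g (s ^ 2) xf w1 + milsteinStep f g (s ^ 2) xa w2
        - xc - milsteinStep f g (2 * s ^ 2) xc (w1 + w2)‖ ^ 2
        ≤ K * (amV s xf xa xc * amZ s w1 w2 ^ q))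
    (hV : ∀ n, n ≤ N → Integrable (fun ω => amV s (Xf (2 * n) ω) (Xa (2 * n) ω) (Xc n ω)) μ ∧
      ∫ ω, amV s (Xf (2 * n) ω) (Xa (2 * n) ω) (Xc n ω) ∂μ ≤ B)
    {P : (Fin d → ℝ) → ℝ} (hP : ∀ a b c : Fin d → ℝ, (1 / 2 * (P a + P b) - P c) ^ 2
      ≤ C' * (‖a + b - (2 : ℝ) • c‖ ^ 2 + ‖a - b‖ ^ 4)) :
    (∫ ω, (1 / 2 * (P ((N : ℝ)⁻¹ • ∑ n ∈ Finset.range N,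
                  (4⁻¹ : ℝ) • (Xf (2 * n) ω + (2 : ℝ) • Xf (2 * n + 1) ω + Xf (2 * n + 2) ω))
              + P ((N : ℝ)⁻¹ • ∑ n ∈ Finset.range N,
                  (4⁻¹ : ℝ) • (Xa (2 * n) ω + (2 : ℝ) • Xa (2 * n + 1) ω + Xa (2 * n + 2) ω)))
            - P ((N : ℝ)⁻¹ • ∑ n ∈ Finset.range N,
                  (2⁻¹ : ℝ) • (Xc n ω + Xc (n + 1) ω))) ^ 2 ∂μ)
          ≤ C' * ((34 + 2 * K * M) * B) := by
  have hN' : (0 : ℝ) < N := by exact_mod_cast hN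
  have hR : ∀ n, n < N → ∃ R : Ω → ℝ, Integrable R μ ∧ ∫ ω, R ω ∂μ ≤ (34 + 2 * K * M) * B ∧
      ∀ ω, ‖Xf (2 * n) ω + Xa (2 * n) ω - (2 : ℝ) • Xc n ω‖ ^ 2
        + ‖Xf (2 * n + 2) ω + Xa (2 * n + 2) ω - (2 : ℝ) • Xc (n + 1) ω‖ ^ 2
        + ‖Xf (2 * n + 1) ω + Xa (2 * n + 1) ω - Xc n ω - Xc (n + 1) ω‖ ^ 2
        + (‖Xf (2 * n) ω - Xa (2 * n) ω‖ ^ 4 + ‖Xf (2 * n + 2) ω - Xa (2 * n + 2) ω‖ ^ 4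
        + ‖Xf (2 * n + 1) ω - Xa (2 * n + 1) ω‖ ^ 4) ≤ R ω := by
    intro n hn
    let k : Fin N := ⟨n, hn⟩
    obtain ⟨i1, b1⟩ := hV n hn.le
    obtain ⟨i2, b2⟩ := hV (n + 1) hn
    obtain ⟨i3, b3⟩ := (h.toProb hc k).int_VZ i1 q
    obtain ⟨i4, b4⟩ := h.moment k q
    refine ⟨fun ω => 17 * amV s (Xf (2 * n) ω) (Xa (2 * n) ω) (Xc n ω)
      + 17 * amV s (Xf (2 * (n + 1)) ω) (Xa (2 * (n + 1)) ω) (Xc (n + 1) ω)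
      + (2 * K) * (amV s (Xf (2 * n) ω) (Xa (2 * n) ω) (Xc n ω)
        * amZ s (W k false ω) (W k true ω) ^ q),
      ((i1.const_mul 17).add (i2.const_mul 17)).add (i3.const_mul (2 * K)), ?_, ?_⟩
    · refine (am_int_lin i1 i2 i3 17 17 (2 * K)).trans_le ?_
      have h0 : 0 ≤ ∫ ω, amV s (Xf (2 * n) ω) (Xa (2 * n) ω) (Xc n ω) ∂μ :=
        integral_nonneg fun ω => amV_nonneg _ _ _ _
      have h1 : ∫ ω, amV s (Xf (2 * n) ω) (Xa (2 * n) ω) (Xc n ω)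
          * amZ s (W k false ω) (W k true ω) ^ q ∂μ ≤ B * M := by
        refine b3.trans_le ?_
        exact (mul_le_mul_of_nonneg_left (b4.trans hM) h0).trans (mul_le_mul_of_nonneg_right b1 hM0)
      have h2 := mul_le_mul_of_nonneg_left h1 (by positivity : 0 ≤ 2 * K)
      change 17 * (∫ ω, amV s (Xf (2 * n) ω) (Xa (2 * n) ω) (Xc n ω) ∂μ)
        + 17 * (∫ ω, amV s (Xf (2 * (n + 1)) ω) (Xa (2 * (n + 1)) ω) (Xc (n + 1) ω) ∂μ)
        + 2 * K * (∫ ω, amV s (Xf (2 * n) ω) (Xa (2 * n) ω) (Xc n ω)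
          * amZ s (W k false ω) (W k true ω) ^ q ∂μ) ≤ _
      linarith
    · intro ω
      have a1 := amV_E s (Xf (2 * n) ω) (Xa (2 * n) ω) (Xc n ω)
      have a2 := amV_E s (Xf (2 * (n + 1)) ω) (Xa (2 * (n + 1)) ω) (Xc (n + 1) ω)
      have a3 := amV_D s (Xf (2 * n) ω) (Xa (2 * n) ω) (Xc n ω)
      have a4 := amV_D s (Xf (2 * (n + 1)) ω) (Xa (2 * (n + 1)) ω) (Xc (n + 1) ω)
      obtain ⟨a5, a6⟩ := hp (Xf (2 * n) ω) (Xa (2 * n) ω) (Xc n ω) (W k false ω) (W k true ω)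
      have e1 : Xf (2 * n + 1) ω = _ := h.f1 k ω
      have e2 : Xa (2 * n + 1) ω = _ := h.a1 k ω
      have e3 : Xc (n + 1) ω = _ := h.c1 k ω
      have e4 : 2 * (n + 1) = 2 * n + 2 := by ring
      rw [← e1, ← e2] at a5
      rw [← e1, ← e2, ← e3] at a6
      rw [e4] at a2 a4
      rw [e4]
      linarith
  choose! R hR1 hR2 hR3 using hR
  have hIntg : Integrable (fun ω => C' * ((N : ℝ)⁻¹ * ∑ n ∈ Finset.range N, R n ω)) μ :=
    ((integrable_finsetSum _ fun n hn => hR1 n (Finset.mem_range.1 hn)).const_mul _).const_mul _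
  refine (integral_mono_of_nonneg (Filter.Eventually.of_forall fun ω => sq_nonneg _) hIntg
    (Filter.Eventually.of_forall fun ω => ?_)).trans ?_
  · refine (hP _ _ _).trans (mul_le_mul_of_nonneg_left ?_ hC')
    exact am_avg_bound hN (fun n => Xf n ω) (fun n => Xa n ω) (fun n => Xc n ω) (fun n => R n ω)
      fun n hn => hR3 n hn ω
  · rw [integral_const_mul, integral_const_mul,
      integral_finsetSum _ fun n hn => hR1 n (Finset.mem_range.1 hn)]
    refine mul_le_mul_of_nonneg_left ?_ hC'
    rw [inv_mul_le_iff₀ hN']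
    refine (Finset.sum_le_sum fun n hn => hR2 n (Finset.mem_range.1 hn)).trans (le_of_eq ?_)
    simp

/-- in the antithetic Milstein setting, with the path averages
`Xc_ave = N⁻¹ ∑_{n<N} ½(Xc_n + Xc_{n+1})`,
`Xf_ave = N⁻¹ ∑_{n<N} ¼(Xf_n + 2 Xf_{n+½} + Xf_{n+1})` and
`Xa_ave = N⁻¹ ∑_{n<N} ¼(Xa_n + 2 Xa_{n+½} + Xa_{n+1})` (the fine path being indexed on the
fine grid, so `Xf (2n)` is the value at coarse time `n Δt` and `Xf (2n+1)` at `(n+½) Δt`),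
for any payoff `P : ℝ^d → ℝ` which is `C²` with uniformly bounded first and second
derivatives there is a constant `K`, independent of `N`, such that
`E[(½(P(Xf_ave) + P(Xa_ave)) − P(Xc_ave))²] ≤ K Δt²` for every `N ≥ 1`, `Δt = T/N`. -/
theorem antithetic_milstein_asian_variance
    {d m : ℕ} (hd : 0 < d) (hm : 0 < m) (T : ℝ) (hT : 0 < T)
    (f : (Fin d → ℝ) → Fin d → ℝ) (g : (Fin d → ℝ) → Fin d → Fin m → ℝ)
    (hf : ContDiff ℝ 2 f) (hg : ContDiff ℝ 2 g) (Cfg : ℝ)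
    (hf1 : ∀ x, ‖fderiv ℝ f x‖ ≤ Cfg) (hf2 : ∀ x, ‖iteratedFDeriv ℝ 2 f x‖ ≤ Cfg)
    (hg1 : ∀ x, ‖fderiv ℝ g x‖ ≤ Cfg) (hg2 : ∀ x, ‖iteratedFDeriv ℝ 2 g x‖ ≤ Cfg)
    (x₀ : Fin d → ℝ)
    (P : (Fin d → ℝ) → ℝ) (hP : ContDiff ℝ 2 P) (CP : ℝ)
    (hP1 : ∀ x, ‖fderiv ℝ P x‖ ≤ CP) (hP2 : ∀ x, ‖iteratedFDeriv ℝ 2 P x‖ ≤ CP) :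
    ∃ K : ℝ, ∀ N : ℕ, 1 ≤ N →
      ∀ (Ω : Type) (_ : MeasurableSpace Ω) (μ : Measure Ω), IsProbabilityMeasure μ →
      ∀ (W : Fin N → Bool → Ω → Fin m → ℝ) (Xf Xa Xc : ℕ → Ω → Fin d → ℝ),
        (∀ n b j, Measurable fun ω => W n b ω j) →
        (∀ n b j, μ.map (fun ω => W n b ω j) = gaussianReal 0 (Real.toNNReal (T / N / 2))) →
        iIndepFun (m := fun _ : Fin N × Bool × Fin m => inferInstance)
          (fun q : Fin N × Bool × Fin m => fun ω => W q.1 q.2.1 ω q.2.2) μ →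
        (∀ ω, Xf 0 ω = x₀) → (∀ ω, Xa 0 ω = x₀) → (∀ ω, Xc 0 ω = x₀) →
        (∀ (n : Fin N) ω, Xf (2 * (n : ℕ) + 1) ω
            = milsteinStep f g (T / N / 2) (Xf (2 * (n : ℕ)) ω) (W n false ω)) →
        (∀ (n : Fin N) ω, Xf (2 * (n : ℕ) + 2) ω
            = milsteinStep f g (T / N / 2) (Xf (2 * (n : ℕ) + 1) ω) (W n true ω)) →
        (∀ (n : Fin N) ω, Xa (2 * (n : ℕ) + 1) ω
            = milsteinStep f g (T / N / 2) (Xa (2 * (n : ℕ)) ω) (W n true ω)) →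
        (∀ (n : Fin N) ω, Xa (2 * (n : ℕ) + 2) ω
            = milsteinStep f g (T / N / 2) (Xa (2 * (n : ℕ) + 1) ω) (W n false ω)) →
        (∀ (n : Fin N) ω, Xc ((n : ℕ) + 1) ω
            = milsteinStep f g (T / N) (Xc (n : ℕ) ω) (W n false ω + W n true ω)) →
        (∫ ω, (1 / 2 * (P ((N : ℝ)⁻¹ • ∑ n ∈ Finset.range N,
                  (4⁻¹ : ℝ) • (Xf (2 * n) ω + (2 : ℝ) • Xf (2 * n + 1) ω + Xf (2 * n + 2) ω))
              + P ((N : ℝ)⁻¹ • ∑ n ∈ Finset.range N,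
                  (4⁻¹ : ℝ) • (Xa (2 * n) ω + (2 : ℝ) • Xa (2 * n + 1) ω + Xa (2 * n + 2) ω)))
            - P ((N : ℝ)⁻¹ • ∑ n ∈ Finset.range N,
                  (2⁻¹ : ℝ) • (Xc n ω + Xc (n + 1) ω))) ^ 2 ∂μ)
          ≤ K * (T / N) ^ 2 := by
  have hc : AMCoef f g Cfg := ⟨hf, hg, hf1, hf2, hg1, hg2⟩
  obtain ⟨q, K, hK, hp⟩ := am_pathwise hc (√T)
  obtain ⟨C', hC', hpay⟩ := am_payoff hP hP1 hP2
  set M := |amMom m q| with hM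
  have hM0 : 0 ≤ M := abs_nonneg _
  set A : ℝ := 1 + 3 * ∑ i, x₀ i ^ 4 with hA
  have hA0 : 0 ≤ A := by positivity
  refine ⟨C' * ((34 + 2 * K * M) * (Real.exp (K * M * T / 2) * A / 4)), ?_⟩
  intro N hN Ω mΩ μ hμ W Xf Xa Xc hW hG hI f0 a0 c0 f1 f2 a1 a2 c1
  have hN' : (1 : ℝ) ≤ N := by exact_mod_cast hN
  have hNp : (0 : ℝ) < N := by linarith
  set s := √(T / N / 2) with hs
  have hs2 : s ^ 2 = T / N / 2 := Real.sq_sqrt (by positivity)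
  have hs2' : 2 * s ^ 2 = T / N := by rw [hs2]; ring
  have hspos : 0 < s := Real.sqrt_pos.2 (by positivity)
  have hsT : s ≤ √T := by
    refine Real.sqrt_le_sqrt ?_
    have : T / N ≤ T := div_le_self hT.le hN'
    linarith
  have h : AMSys f g x₀ μ s W Xf Xa Xc := by
    refine ⟨hμ, hspos, hW, ?_, hI, f0, a0, c0, ?_, ?_, ?_, ?_, ?_⟩
    · rw [hs2]; exact hG
    · rw [hs2]; exact f1
    · rw [hs2]; exact f2
    · rw [hs2]; exact a1
    · rw [hs2]; exact a2
    · rw [hs2']; exact c1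
  have hV0 : amV s x₀ x₀ x₀ = A * s ^ 4 := by
    have e : ∀ i, (x₀ i + x₀ i - 2 * x₀ i) ^ 2 + (x₀ i - x₀ i) ^ 4 + (x₀ i - x₀ i) ^ 4
      + (s * x₀ i) ^ 4 + (s * x₀ i) ^ 4 + (s * x₀ i) ^ 4 = (3 * s ^ 4) * x₀ i ^ 4 := fun i => by ring
    unfold amV
    simp only [e]
    rw [← Finset.mul_sum, hA]
    ring
  have hV : ∀ n, n ≤ N → Integrable (fun ω => amV s (Xf (2 * n) ω) (Xa (2 * n) ω) (Xc n ω)) μ ∧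
      ∫ ω, amV s (Xf (2 * n) ω) (Xa (2 * n) ω) (Xc n ω) ∂μ
        ≤ Real.exp (K * M * T / 2) * (A * s ^ 4) := by
    intro n hn
    obtain ⟨i1, b1⟩ := h.iterate hc hK hsT
      (fun s xf xa xc w1 w2 h1 h2 => (hp s xf xa xc w1 w2 h1 h2).1) n hn
    refine ⟨i1, b1.trans ?_⟩
    rw [hV0, ← hM]
    refine mul_le_mul_of_nonneg_right ?_ (by positivity)
    have h0 : 0 ≤ K * s ^ 2 * M := by positivity
    calc (1 + K * s ^ 2 * M) ^ n ≤ (1 + K * s ^ 2 * M) ^ N :=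
          pow_le_pow_right₀ (by linarith) hn
      _ ≤ (Real.exp (K * s ^ 2 * M)) ^ N := by
          refine pow_le_pow_left₀ (by linarith) ?_ N
          rw [add_comm]; exact Real.add_one_le_exp _
      _ = Real.exp (K * M * T / 2) := by
          rw [← Real.exp_nat_mul, hs2]
          congr 1
          field_simp
  refine (h.final hc hN hK (le_abs_self _) hM0 hC'
    (fun xf xa xc w1 w2 => (hp s xf xa xc w1 w2 hspos hsT).2) hV hpay).trans (le_of_eq ?_)
  have : s ^ 4 = (T / N) ^ 2 / 4 := by
    rw [← hs2']; ring
  rw [this, ← hM]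
  ring
end

section
/- In the Clark–Cameron antithetic setting, the following hold: (1) X^f_{1,n} = X^a_{1,n} = X^c_{1,n} for all 0 ≤ n ≤ N; (2) (1/2)(X^f_{2,n} + X^a_{2,n}) = X^c_{2,n} for all 0 ≤ n ≤ N; and (3) E[ (X^f_{2,N} − X^a_{2,N})⁴ ] = (3/4)·T·(T + Δt)·Δt². -/
open MeasureTheory ProbabilityTheory

/-- Functions of disjoint blocks of an independent family are independent. -/
lemma cc_indep_blocks {ι Ω : Type*} [Fintype ι] [DecidableEq ι] [MeasurableSpace Ω]
    {μ : Measure Ω} {X : ι → Ω → ℝ} (hX : iIndepFun X μ) (hm : ∀ i, Measurable (X i))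
    (S T : Finset ι) (hST : Disjoint S T) (F G : (ι → ℝ) → ℝ)
    (hF : Measurable F) (hG : Measurable G)
    (hFS : ∀ x, F x = F (fun i => if i ∈ S then x i else 0))
    (hGT : ∀ x, G x = G (fun i => if i ∈ T then x i else 0)) :
    IndepFun (fun ω => F (fun i => X i ω)) (fun ω => G (fun i => X i ω)) μ := by
  have h := hX.indepFun_finset S T hST hm
  have e : ∀ U : Finset ι, Measurable
      (fun (x : U → ℝ) (i : ι) => if h : i ∈ U then x ⟨i, h⟩ else 0) := by
    intro U
    refine measurable_pi_lambda _ (fun i => ?_)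
    by_cases hi : i ∈ U
    · simpa [hi] using measurable_pi_apply _
    · simp [hi]
  have h2 := h.comp (hF.comp (e S)) (hG.comp (e T))
  convert! h2 using 1
  · funext ω
    rw [hFS]
    simp
  · funext ω
    rw [hGT]
    simp

/-- Centred variable with finite fourth moment and prescribed second and fourth moments. -/
structure CCGood {Ω : Type*} [MeasurableSpace Ω] (μ : Measure Ω) (f : Ω → ℝ) (p q : ℝ) :
    Prop where
  meas : Measurable f
  int1 : Integrable f μ
  int2 : Integrable (fun ω => f ω ^ 2) μ
  int3 : Integrable (fun ω => f ω ^ 3) μ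
  int4 : Integrable (fun ω => f ω ^ 4) μ
  m1 : ∫ ω, f ω ∂μ = 0
  m2 : ∫ ω, f ω ^ 2 ∂μ = p
  m4 : ∫ ω, f ω ^ 4 ∂μ = q

lemma CCGood.indep_pow {Ω : Type*} [MeasurableSpace Ω] {μ : Measure Ω} {f g : Ω → ℝ}
    (h : IndepFun f g μ) (i j : ℕ) :
    IndepFun (fun ω => f ω ^ i) (fun ω => g ω ^ j) μ :=
  h.comp (φ := fun x => x ^ i) (ψ := fun x => x ^ j) (by fun_prop) (by fun_prop)

lemma CCGood.integral_pow {Ω : Type*} [MeasurableSpace Ω] {μ : Measure Ω} {f g : Ω → ℝ}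
    (hf : Measurable f) (hg : Measurable g) (h : IndepFun f g μ) (i j : ℕ) :
    ∫ ω, f ω ^ i * g ω ^ j ∂μ = (∫ ω, f ω ^ i ∂μ) * ∫ ω, g ω ^ j ∂μ :=
  (CCGood.indep_pow h i j).integral_fun_mul_eq_mul_integral
    (by fun_prop) (by fun_prop)

lemma CCGood.mul {Ω : Type*} [MeasurableSpace Ω] {μ : Measure Ω} {f g : Ω → ℝ} {p q r s : ℝ}
    (hf : CCGood μ f p q) (hg : CCGood μ g r s) (h : IndepFun f g μ) :
    CCGood μ (fun ω => f ω * g ω) (p * r) (q * s) where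
  meas := hf.meas.mul hg.meas
  int1 := h.integrable_mul hf.int1 hg.int1
  int2 := by
    simp_rw [mul_pow]; exact (CCGood.indep_pow h 2 2).integrable_mul hf.int2 hg.int2
  int3 := by
    simp_rw [mul_pow]; exact (CCGood.indep_pow h 3 3).integrable_mul hf.int3 hg.int3
  int4 := by
    simp_rw [mul_pow]; exact (CCGood.indep_pow h 4 4).integrable_mul hf.int4 hg.int4
  m1 := by
    have := CCGood.integral_pow hf.meas hg.meas h 1 1
    simp only [pow_one] at this
    rw [this, hf.m1, zero_mul]
  m2 := by
    simp_rw [mul_pow]; rw [CCGood.integral_pow hf.meas hg.meas h 2 2, hf.m2, hg.m2]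
  m4 := by
    simp_rw [mul_pow]; rw [CCGood.integral_pow hf.meas hg.meas h 4 4, hf.m4, hg.m4]

lemma CCGood.neg {Ω : Type*} [MeasurableSpace Ω] {μ : Measure Ω} {f : Ω → ℝ} {p q : ℝ}
    (hf : CCGood μ f p q) : CCGood μ (fun ω => - f ω) p q where
  meas := hf.meas.neg
  int1 := hf.int1.neg
  int2 := by simpa using hf.int2
  int3 := by simpa [Odd.neg_pow (by decide : Odd 3)] using hf.int3.neg
  int4 := by simpa [Even.neg_pow (by decide : Even 4)] using hf.int4
  m1 := by rw [integral_neg, hf.m1, neg_zero]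
  m2 := by simpa using hf.m2
  m4 := by simpa [Even.neg_pow (by decide : Even 4)] using hf.m4

lemma CCGood.add {Ω : Type*} [MeasurableSpace Ω] {μ : Measure Ω} {f g : Ω → ℝ} {p q r s : ℝ}
    (hf : CCGood μ f p q) (hg : CCGood μ g r s) (h : IndepFun f g μ) :
    CCGood μ (fun ω => f ω + g ω) (p + r) (q + 6 * (p * r) + s) := by
  have i11 : Integrable (fun ω => f ω ^ 1 * g ω ^ 1) μ :=
    (CCGood.indep_pow h 1 1).integrable_mul (by simpa using hf.int1) (by simpa using hg.int1)
  have i21 : Integrable (fun ω => f ω ^ 2 * g ω ^ 1) μ :=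
    (CCGood.indep_pow h 2 1).integrable_mul hf.int2 (by simpa using hg.int1)
  have i12 : Integrable (fun ω => f ω ^ 1 * g ω ^ 2) μ :=
    (CCGood.indep_pow h 1 2).integrable_mul (by simpa using hf.int1) hg.int2
  have i31 : Integrable (fun ω => f ω ^ 3 * g ω ^ 1) μ :=
    (CCGood.indep_pow h 3 1).integrable_mul hf.int3 (by simpa using hg.int1)
  have i13 : Integrable (fun ω => f ω ^ 1 * g ω ^ 3) μ :=
    (CCGood.indep_pow h 1 3).integrable_mul (by simpa using hf.int1) hg.int3
  have i22 : Integrable (fun ω => f ω ^ 2 * g ω ^ 2) μ :=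
    (CCGood.indep_pow h 2 2).integrable_mul hf.int2 hg.int2
  have hf1 : ∫ ω, f ω ^ 1 ∂μ = 0 := by simpa using hf.m1
  have hg1 : ∫ ω, g ω ^ 1 ∂μ = 0 := by simpa using hg.m1
  have e2 : (fun ω => (f ω + g ω) ^ 2) =
      fun ω => f ω ^ 2 + 2 * (f ω ^ 1 * g ω ^ 1) + g ω ^ 2 := by funext ω; ring
  have e3 : (fun ω => (f ω + g ω) ^ 3) =
      fun ω => f ω ^ 3 + 3 * (f ω ^ 2 * g ω ^ 1) + 3 * (f ω ^ 1 * g ω ^ 2) + g ω ^ 3 := by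
    funext ω; ring
  have e4 : (fun ω => (f ω + g ω) ^ 4) =
      fun ω => f ω ^ 4 + 4 * (f ω ^ 3 * g ω ^ 1) + 6 * (f ω ^ 2 * g ω ^ 2)
        + 4 * (f ω ^ 1 * g ω ^ 3) + g ω ^ 4 := by funext ω; ring
  have j2a : Integrable (fun ω => f ω ^ 2 + 2 * (f ω ^ 1 * g ω ^ 1)) μ :=
    hf.int2.add (i11.const_mul 2)
  have j4a : Integrable (fun ω => f ω ^ 4 + 4 * (f ω ^ 3 * g ω ^ 1)) μ :=
    hf.int4.add (i31.const_mul 4)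
  have j4b : Integrable (fun ω => f ω ^ 4 + 4 * (f ω ^ 3 * g ω ^ 1)
      + 6 * (f ω ^ 2 * g ω ^ 2)) μ := j4a.add (i22.const_mul 6)
  have j4c : Integrable (fun ω => f ω ^ 4 + 4 * (f ω ^ 3 * g ω ^ 1)
      + 6 * (f ω ^ 2 * g ω ^ 2) + 4 * (f ω ^ 1 * g ω ^ 3)) μ := j4b.add (i13.const_mul 4)
  refine ⟨hf.meas.add hg.meas, hf.int1.add hg.int1, ?_, ?_, ?_, ?_, ?_, ?_⟩
  · rw [e2]; exact j2a.add hg.int2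
  · rw [e3]
    exact ((hf.int3.add (i21.const_mul 3)).add (i12.const_mul 3)).add hg.int3
  · rw [e4]; exact j4c.add hg.int4
  · rw [integral_add hf.int1 hg.int1, hf.m1, hg.m1, add_zero]
  · rw [e2, integral_add j2a hg.int2, integral_add hf.int2 (i11.const_mul 2),
      integral_const_mul, CCGood.integral_pow hf.meas hg.meas h 1 1, hf1, hf.m2, hg.m2]
    ring
  · rw [e4, integral_add j4c hg.int4, integral_add j4b (i13.const_mul 4),
      integral_add j4a (i22.const_mul 6), integral_add hf.int4 (i31.const_mul 4),
      integral_const_mul, integral_const_mul, integral_const_mul,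
      CCGood.integral_pow hf.meas hg.meas h 3 1, CCGood.integral_pow hf.meas hg.meas h 2 2,
      CCGood.integral_pow hf.meas hg.meas h 1 3, hf1, hg1, hf.m2, hg.m2, hf.m4, hg.m4]
    ring

/-- Second and fourth derivative computations for the Gaussian moment generating function. -/
lemma cc_deriv_poly_exp (v : ℝ) (P P' : ℝ → ℝ) (hP : ∀ t, HasDerivAt P (P' t) t) :
    deriv (fun t => P t * Real.exp (v * t ^ 2 / 2)) =
      fun t => (P' t + v * t * P t) * Real.exp (v * t ^ 2 / 2) := by
  funext t
  have h1 : HasDerivAt (fun t : ℝ => v * t ^ 2 / 2) (v * t) t := by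
    have := (((hasDerivAt_id t).pow 2).const_mul v).div_const 2
    convert! this using 1
    simp
    ring
  refine ((hP t).mul h1.exp).deriv.trans ?_
  ring

lemma cc_gaussian_moments (v : NNReal) :
    ∫ x, x ^ 2 ∂(gaussianReal 0 v) = v ∧ ∫ x, x ^ 4 ∂(gaussianReal 0 v) = 3 * (v : ℝ) ^ 2 := by
  have key : ∀ n : ℕ, ∫ x, x ^ n ∂(gaussianReal 0 v)
      = iteratedDeriv n (fun t => 1 * Real.exp ((v : ℝ) * t ^ 2 / 2)) 0 := by
    intro n
    have := iteratedDeriv_mgf_zero (X := fun x : ℝ => x) (μ := gaussianReal 0 v) (by simp) n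
    rw [mgf_fun_id_gaussianReal] at this
    simpa using this.symm
  have d1 := cc_deriv_poly_exp v (fun _ => 1) (fun _ => 0) (fun t => hasDerivAt_const t 1)
  have d2 := cc_deriv_poly_exp v (fun t => 0 + v * t * 1) (fun _ => v) (fun t => by
    simpa using (hasDerivAt_id t).const_mul (v : ℝ))
  have d3 := cc_deriv_poly_exp v (fun t => v + v * t * (0 + v * t * 1))
    (fun t => v ^ 2 * (2 * t)) (fun t => by
    have := (((hasDerivAt_id t).pow 2).const_mul ((v : ℝ) ^ 2)).const_add (v : ℝ)
    convert! this using 1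
    · funext s; simp; ring
    · simp)
  have d4 := cc_deriv_poly_exp v
    (fun t => v ^ 2 * (2 * t) + v * t * (v + v * t * (0 + v * t * 1)))
    (fun t => 3 * v ^ 2 + v ^ 3 * (3 * t ^ 2)) (fun t => by
    have := ((hasDerivAt_id t).const_mul (3 * (v : ℝ) ^ 2)).add
      (((hasDerivAt_id t).pow 3).const_mul ((v : ℝ) ^ 3))
    convert! this using 1
    · funext s; simp; ring
    · simp)
  rw [key, key]
  simp only [iteratedDeriv_succ, iteratedDeriv_zero, d1, d2, d3, d4]
  constructor <;> simp

lemma cc_gaussian_good {Ω : Type*} [MeasurableSpace Ω] {μ : Measure Ω} {f : Ω → ℝ} {v : NNReal}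
    (hm : Measurable f) (hl : μ.map f = gaussianReal 0 v) :
    CCGood μ f v (3 * (v : ℝ) ^ 2) := by
  have hint : ∀ n : ℕ, Integrable (fun ω => f ω ^ n) μ := by
    intro n
    have h1 : Integrable (fun x : ℝ => x ^ n) (μ.map f) := by
      rw [hl]
      have h := memLp_id_gaussianReal' (μ := 0) (v := v) n (by simp)
      have h2 := h.integrable_norm_pow'
      refine (integrable_norm_iff (by fun_prop)).1 ?_
      simpa using h2
    exact h1.comp_measurable hm
  have hval : ∀ n : ℕ, ∫ ω, f ω ^ n ∂μ = ∫ x, x ^ n ∂(gaussianReal 0 v) := by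
    intro n
    rw [← hl, integral_map hm.aemeasurable (by fun_prop)]
  refine ⟨hm, by simpa using hint 1, hint 2, hint 3, hint 4, ?_, ?_, ?_⟩
  · simpa using hval 1
  · rw [hval, (cc_gaussian_moments v).1]
  · rw [hval, (cc_gaussian_moments v).2]

lemma cc_sum_good {N : ℕ} {Ω : Type*} [MeasurableSpace Ω] {μ : Measure Ω}
    [IsProbabilityMeasure μ] {X : Fin N × Fin 4 → Ω → ℝ} {v : NNReal}
    (hm : ∀ q, Measurable (X q)) (hl : ∀ q, μ.map (X q) = gaussianReal 0 v)
    (hi : iIndepFun X μ) (n : ℕ) (hn : n ≤ N) :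
    CCGood μ (fun ω => ∑ i : Fin N, if i.val < n then
        X (i, 0) ω * X (i, 3) ω - X (i, 2) ω * X (i, 1) ω else 0)
      (2 * n * v ^ 2) (12 * n * (n + 1) * v ^ 4) := by
  have hg : ∀ q, CCGood μ (X q) v (3 * (v : ℝ) ^ 2) := fun q => cc_gaussian_good (hm q) (hl q)
  induction n with
  | zero =>
    simp only [not_lt_zero, if_false, Finset.sum_const_zero]
    constructor <;> simp
  | succ n ih =>
    have ih := ih (by omega)
    let k : Fin N := ⟨n, by omega⟩
    have hA := (hg (k, 0)).mul (hg (k, 3)) (hi.indepFun (by simp))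
    have hB := ((hg (k, 2)).mul (hg (k, 1)) (hi.indepFun (by simp))).neg
    have hAB : IndepFun (fun ω => X (k, 0) ω * X (k, 3) ω)
        (fun ω => - (X (k, 2) ω * X (k, 1) ω)) μ :=
      (hi.indepFun_mul_mul hm (k, 0) (k, 3) (k, 2) (k, 1) (by simp) (by simp) (by simp)
        (by simp)).comp (φ := fun x => x) (ψ := fun x => - x) (by fun_prop) (by fun_prop)
    have hL := hA.add hB hAB
    have hI := cc_indep_blocks hi hm
      (Finset.univ.filter (fun q : Fin N × Fin 4 => q.1.val < n))
      (Finset.univ.filter (fun q : Fin N × Fin 4 => q.1 = k))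
      (by
        rw [Finset.disjoint_left]
        intro q h1 h2
        simp only [Finset.mem_filter, Finset.mem_univ, true_and] at h1 h2
        rw [h2] at h1
        simp [k] at h1)
      (fun x => ∑ i : Fin N, if i.val < n then
        x (i, 0) * x (i, 3) - x (i, 2) * x (i, 1) else 0)
      (fun x => x (k, 0) * x (k, 3) + - (x (k, 2) * x (k, 1)))
      (by
        refine Finset.measurable_sum _ (fun i _ => ?_)
        split_ifs <;> fun_prop)
      (by fun_prop)
      (by
        intro x
        refine Finset.sum_congr rfl (fun i _ => ?_)
        by_cases h : i.val < n <;> simp [h])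
      (by intro x; simp)
    have hS := ih.add hL hI
    convert! hS using 1
    · funext ω
      rw [← Finset.sum_erase_add _ _ (Finset.mem_univ k),
        ← Finset.sum_erase_add _ _ (Finset.mem_univ k)]
      have : ∀ i ∈ Finset.univ.erase k, ((i : Fin N).val < n + 1 ↔ i.val < n) := by
        intro i hik
        have : i.val ≠ n := fun h => (Finset.ne_of_mem_erase hik) (Fin.ext h)
        omega
      rw [Finset.sum_congr rfl (fun i hik => by rw [if_congr (this i hik) rfl rfl])]
      simp [k]
      ring
    · push_cast; ring
    · push_cast; ring

/-- the Clark–Cameron antithetic example.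
With `Δt = T/N` and `a n, b n, c n, d n` (`n < N`) 4N independent centred Gaussians of
variance `Δt/2`, and the coarse / fine / antithetic paths defined from `X₁ = X₂ = 0` by
the recursions of the Lévy-area-free and two-half-step Milstein schemes for the
Clark–Cameron SDE `dx₁ = dw₁, dx₂ = x₁ dw₂`, one has:
(1) `Xf₁ n = Xa₁ n = Xc₁ n` for all `n ≤ N`;
(2) `½(Xf₂ n + Xa₂ n) = Xc₂ n` for all `n ≤ N`;
(3) `E[(Xf₂ N − Xa₂ N)⁴] = (3/4) T (T + Δt) Δt²`. -/
theorem clark_cameron_antithetic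
    (T : ℝ) (hT : 0 < T) (N : ℕ) (hN : 0 < N)
    {Ω : Type*} [MeasurableSpace Ω] (μ : Measure Ω) [IsProbabilityMeasure μ]
    (a b c d : Fin N → Ω → ℝ)
    (hmeas : ∀ q : Fin N × Fin 4, Measurable (![a q.1, b q.1, c q.1, d q.1] q.2))
    (hlaw : ∀ q : Fin N × Fin 4,
      μ.map (![a q.1, b q.1, c q.1, d q.1] q.2) = gaussianReal 0 (Real.toNNReal (T / N / 2)))
    (hindep : iIndepFun
      (fun q : Fin N × Fin 4 => ![a q.1, b q.1, c q.1, d q.1] q.2) μ)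
    (Xc₁ Xc₂ Xf₁ Xf₂ Xa₁ Xa₂ : ℕ → Ω → ℝ)
    (hc₀ : ∀ ω, Xc₁ 0 ω = 0 ∧ Xc₂ 0 ω = 0)
    (hf₀ : ∀ ω, Xf₁ 0 ω = 0 ∧ Xf₂ 0 ω = 0)
    (ha₀ : ∀ ω, Xa₁ 0 ω = 0 ∧ Xa₂ 0 ω = 0)
    (hc₁ : ∀ (n : Fin N) ω, Xc₁ (n + 1) ω = Xc₁ n ω + (a n ω + b n ω))
    (hc₂ : ∀ (n : Fin N) ω, Xc₂ (n + 1) ω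
      = Xc₂ n ω + Xc₁ n ω * (c n ω + d n ω)
        + 1 / 2 * ((a n ω + b n ω) * (c n ω + d n ω)))
    (hf₁ : ∀ (n : Fin N) ω, Xf₁ (n + 1) ω = Xf₁ n ω + (a n ω + b n ω))
    (hf₂ : ∀ (n : Fin N) ω, Xf₂ (n + 1) ω
      = Xf₂ n ω + Xf₁ n ω * (c n ω + d n ω)
        + 1 / 2 * ((a n ω + b n ω) * (c n ω + d n ω))
        + 1 / 2 * (a n ω * d n ω - c n ω * b n ω))
    (ha₁ : ∀ (n : Fin N) ω, Xa₁ (n + 1) ω = Xa₁ n ω + (a n ω + b n ω))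
    (ha₂ : ∀ (n : Fin N) ω, Xa₂ (n + 1) ω
      = Xa₂ n ω + Xa₁ n ω * (c n ω + d n ω)
        + 1 / 2 * ((a n ω + b n ω) * (c n ω + d n ω))
        - 1 / 2 * (a n ω * d n ω - c n ω * b n ω)) :
    (∀ n ≤ N, ∀ ω, Xf₁ n ω = Xa₁ n ω ∧ Xa₁ n ω = Xc₁ n ω) ∧
    (∀ n ≤ N, ∀ ω, 1 / 2 * (Xf₂ n ω + Xa₂ n ω) = Xc₂ n ω) ∧
    (∫ ω, (Xf₂ N ω - Xa₂ N ω) ^ 4 ∂μ)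
      = 3 / 4 * T * (T + T / N) * (T / N) ^ 2 := by
  have h1 : ∀ n ≤ N, ∀ ω, Xf₁ n ω = Xa₁ n ω ∧ Xa₁ n ω = Xc₁ n ω := by
    intro n
    induction n with
    | zero => intro _ ω; simp [(hc₀ ω).1, (hf₀ ω).1, (ha₀ ω).1]
    | succ n ih =>
      intro hn ω
      have e1 := hc₁ ⟨n, hn⟩ ω
      have e2 := hf₁ ⟨n, hn⟩ ω
      have e3 := ha₁ ⟨n, hn⟩ ω
      have := ih (by omega) ω
      simp only at e1 e2 e3
      rw [e1, e2, e3, this.1, this.2]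
      exact ⟨rfl, rfl⟩
  have h2 : ∀ n ≤ N, ∀ ω, 1 / 2 * (Xf₂ n ω + Xa₂ n ω) = Xc₂ n ω := by
    intro n
    induction n with
    | zero => intro _ ω; simp [(hc₀ ω).2, (hf₀ ω).2, (ha₀ ω).2]
    | succ n ih =>
      intro hn ω
      have e1 := hc₂ ⟨n, hn⟩ ω
      have e2 := hf₂ ⟨n, hn⟩ ω
      have e3 := ha₂ ⟨n, hn⟩ ω
      have h := ih (by omega) ω
      have h' := h1 n (by omega) ω
      simp only at e1 e2 e3
      rw [e1, e2, e3, h'.1, h'.2, ← h]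
      ring
  refine ⟨h1, h2, ?_⟩
  have h3 : ∀ n ≤ N, ∀ ω, Xf₂ n ω - Xa₂ n ω = ∑ i : Fin N, if i.val < n then
      a i ω * d i ω - c i ω * b i ω else 0 := by
    intro n
    induction n with
    | zero => intro _ ω; simp [(hf₀ ω).2, (ha₀ ω).2]
    | succ n ih =>
      intro hn ω
      have e2 := hf₂ ⟨n, hn⟩ ω
      have e3 := ha₂ ⟨n, hn⟩ ω
      have h := ih (by omega) ω
      have h' := h1 n (by omega) ω
      simp only at e2 e3
      have hk : ∀ i : Fin N, (if i.val < n + 1 then a i ω * d i ω - c i ω * b i ω else 0)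
          = (if i.val < n then a i ω * d i ω - c i ω * b i ω else 0)
            + (if i = ⟨n, hn⟩ then a i ω * d i ω - c i ω * b i ω else 0) := by
        intro i
        rcases lt_trichotomy i.val n with hi | hi | hi
        · have : i ≠ ⟨n, hn⟩ := fun h => by simp [h] at hi
          simp [hi, this, Nat.lt_succ_of_lt hi]
        · have : i = ⟨n, hn⟩ := Fin.ext hi
          simp [this]
        · have : i ≠ ⟨n, hn⟩ := fun h => by simp [h] at hi
          have h5 : ¬ i.val < n := by omega
          have h6 : ¬ i.val < n + 1 := by omega
          simp [h5, h6, this]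
      rw [Finset.sum_congr rfl (fun i _ => hk i), Finset.sum_add_distrib, ← h,
        Finset.sum_ite_eq' Finset.univ, if_pos (Finset.mem_univ _), e2, e3, h'.1]
      ring
  have hgood := (cc_sum_good hmeas hlaw hindep N le_rfl).m4
  have hpos : (0 : ℝ) < N := by exact_mod_cast hN
  have hv : ((Real.toNNReal (T / N / 2) : NNReal) : ℝ) = T / N / 2 :=
    Real.coe_toNNReal _ (by positivity)
  rw [hv] at hgood
  simp_rw [h3 N le_rfl]
  refine Eq.trans hgood ?_
  field_simp
  ring
end

section
/- Let B_t be the Brownian bridge from a to b over [0,T] with volatility σ, and let U be a random variable uniformly distributed on (0,1). Then the random variable M = (1/2)( a + b − sqrt( (b − a)² − 2σ²T·log U ) ) has the same distribution as inf_{0 ≤ t ≤ T} B_t. -/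
open MeasureTheory ProbabilityTheory

open Filter Topology Set
open scoped NNReal ENNReal

namespace BBMin

set_option linter.unusedSectionVars false

/-- grid points -/
noncomputable def grid (T : ℝ≥0) (N k : ℕ) : ℝ≥0 := (k / N : ℝ≥0) * T

lemma grid_le {T : ℝ≥0} {N k : ℕ} (h : k ≤ N) : grid T N k ≤ T := by
  unfold grid
  have : (k / N : ℝ≥0) ≤ 1 := by
    apply div_le_one_of_le₀ _ (by positivity)
    exact_mod_cast h
  calc (k / N : ℝ≥0) * T ≤ 1 * T := by gcongr
    _ = T := one_mul T

lemma grid_mono (T : ℝ≥0) (N : ℕ) {j k : ℕ} (h : j ≤ k) : grid T N j ≤ grid T N k := by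
  unfold grid
  gcongr

lemma path_hit {g : ℝ≥0 → ℝ} (hg : Continuous g) {T : ℝ≥0} (hT : 0 < T) {p : ℝ} {t : ℝ≥0}
    (ht : t ≤ T) (hp : p < g t) : ∀ᶠ N : ℕ in atTop, ∃ k ≤ N, p < g (grid T N k) := by
  have h1 : Tendsto (fun N : ℕ => (⌊((t / T : ℝ≥0) : ℝ) * (N : ℝ)⌋₊ : ℝ≥0) / (N : ℝ≥0)) atTop
      (𝓝 (t / T)) := by
    rw [← NNReal.tendsto_coe]
    have h := (tendsto_nat_floor_mul_div_atTop (R := ℝ) (a := ((t / T : ℝ≥0) : ℝ))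
      (by positivity)).comp tendsto_natCast_atTop_atTop
    refine h.congr fun N => ?_
    simp [Function.comp]
  have h2 : Tendsto (fun N : ℕ => g (grid T N ⌊((t / T : ℝ≥0) : ℝ) * (N : ℝ)⌋₊)) atTop (𝓝 (g t)) := by
    have h3 := (h1.mul_const T)
    rw [div_mul_cancel₀ _ hT.ne'] at h3
    exact (hg.tendsto t).comp h3
  filter_upwards [h2.eventually (lt_mem_nhds hp)] with N hN
  refine ⟨_, ?_, hN⟩
  apply Nat.floor_le_of_le
  have h4 : ((t / T : ℝ≥0) : ℝ) ≤ 1 := by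
    exact_mod_cast div_le_one_of_le₀ ht (by positivity)
  calc ((t / T : ℝ≥0) : ℝ) * (N : ℝ) ≤ 1 * N := by gcongr
    _ = N := one_mul _

lemma path_first {g : ℝ≥0 → ℝ} (hg : Continuous g) (h0 : g 0 = 0) {T : ℝ≥0} {p δ : ℝ}
    (hp : 0 ≤ p) (hδ : 0 < δ) : ∀ᶠ N : ℕ in atTop, ∀ k ≤ N,
      (∀ j < k, g (grid T N j) ≤ p) → p < g (grid T N k) → |g (grid T N k) - p| < δ := by
  have huc : UniformContinuousOn g (Icc 0 T) :=
    isCompact_Icc.uniformContinuousOn_of_continuous hg.continuousOn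
  rw [Metric.uniformContinuousOn_iff] at huc
  obtain ⟨ε, hε, H⟩ := huc δ hδ
  have hlim : Tendsto (fun N : ℕ => (T : ℝ) / N) atTop (𝓝 0) :=
    tendsto_const_div_atTop_nhds_zero_nat _
  filter_upwards [hlim.eventually (gt_mem_nhds hε), eventually_gt_atTop 0] with N hN hN0 k hk hj hpk
  rcases Nat.eq_zero_or_pos k with rfl | hkpos
  · simp [grid, h0] at hpk; linarith
  obtain ⟨j, rfl⟩ : ∃ j, k = j + 1 := ⟨k - 1, by omega⟩
  have hj' := hj j (by omega)
  have := H (grid T N (j+1)) ⟨zero_le, grid_le hk⟩ (grid T N j) ⟨zero_le, grid_le (by omega)⟩ ?_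
  · rw [Real.dist_eq] at this
    rw [abs_lt] at this ⊢
    constructor <;> linarith
  · rw [NNReal.dist_eq]
    unfold grid
    push_cast
    have : ((j : ℝ) + 1) / N * T - j / N * T = T / N := by ring
    rw [this, abs_of_nonneg (by positivity)]
    exact hN

variable {Ω : Type*} [MeasurableSpace Ω] {μ : Measure Ω} [IsProbabilityMeasure μ]
  {V : ℝ≥0 → Ω → ℝ}

lemma refl_step (hV : IsPreBrownianReal V μ) (hm : ∀ t, Measurable (V t)) {s T : ℝ≥0} (hs : s ≤ T)
    {A : Set (Iic s → ℝ)} (hA : MeasurableSet A) {I : Set ℝ} (hI : MeasurableSet I) :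
    μ {ω | (fun t : Iic s => V t ω) ∈ A ∧ V T ω ∈ I}
      = μ {ω | (fun t : Iic s => V t ω) ∈ A ∧ 2 * V s ω - V T ω ∈ I} := by
  set F : Ω → (Iic s → ℝ) := fun ω t => V t ω with hF
  set D : Ω → ℝ := fun ω => V T ω - V s ω with hD
  have hFm : Measurable F := measurable_pi_lambda _ fun t => hm t
  have hDm : Measurable D := (hm T).sub (hm s)
  have hind : IndepFun D F μ := by
    have hφ : Measurable (fun x : ℝ≥0 → ℝ => x (T - s)) := measurable_pi_apply _
    have h := (hV.indepFun_shift s).comp hφ (measurable_id (α := Iic s → ℝ))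
    convert! h using 1
    ext ω
    simp [hD, add_tsub_cancel_of_le hs]
  have hDm' : Measurable (fun ω => - D ω) := hDm.neg
  have hind2 : IndepFun (fun ω => - D ω) F μ :=
    hind.comp (φ := fun x : ℝ => -x) (ψ := id) measurable_neg measurable_id
  have hlaw : μ.map (fun ω => - D ω) = μ.map D := by
    have h1 := hV.hasLaw_sub T s
    have h2 := gaussianReal_neg h1
    rw [neg_zero] at h2
    exact h2.map_eq.trans h1.map_eq.symm
  have hjoint : μ.map (fun ω => (D ω, F ω)) = μ.map (fun ω => (- D ω, F ω)) := by
    rw [hind.map_prod_eq_prod_map_map hDm.aemeasurable hFm.aemeasurable,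
      hind2.map_prod_eq_prod_map_map hDm'.aemeasurable hFm.aemeasurable, hlaw]
  set S : Set (ℝ × (Iic s → ℝ)) := {x | x.2 ∈ A ∧ x.2 ⟨s, mem_Iic.2 le_rfl⟩ + x.1 ∈ I} with hS
  have hSm : MeasurableSet S := by
    apply MeasurableSet.inter
    · exact measurable_snd hA
    · have hq : Measurable (fun x : ℝ × (Iic s → ℝ) => x.2 ⟨s, mem_Iic.2 le_rfl⟩ + x.1) := by
        fun_prop
      exact hq hI
  have e : μ.map (fun ω => (D ω, F ω)) S = μ.map (fun ω => (- D ω, F ω)) S := by rw [hjoint]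
  rw [Measure.map_apply (hDm.prodMk hFm) hSm, Measure.map_apply (hDm'.prodMk hFm) hSm] at e
  convert e using 2
  · ext ω; simp [hS, hF, hD]
  · ext ω
    simp only [hS, hF, hD, mem_ofPred_eq, mem_preimage]
    rw [show V s ω + -(V T ω - V s ω) = 2 * V s ω - V T ω by ring]

/-- first passage at grid index `k` -/
def First (V : ℝ≥0 → Ω → ℝ) (T : ℝ≥0) (p : ℝ) (N k : ℕ) (ω : Ω) : Prop :=
  (∀ j < k, V (grid T N j) ω ≤ p) ∧ p < V (grid T N k) ω

lemma First.unique {T : ℝ≥0} {p : ℝ} {N k l : ℕ} {ω : Ω} (h : First V T p N k ω)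
    (h' : First V T p N l ω) : k = l := by
  rcases lt_trichotomy k l with hlt | h1 | hlt
  · exact absurd (h'.1 k hlt) (not_le.2 h.2)
  · exact h1
  · exact absurd (h.1 l hlt) (not_le.2 h'.2)

lemma exists_first {T : ℝ≥0} {p : ℝ} {N : ℕ} {ω : Ω} :
    (∃ k ≤ N, p < V (grid T N k) ω) ↔ ∃ k ≤ N, First V T p N k ω := by
  classical
  constructor
  · rintro ⟨k, hk, h⟩
    have hex : ∃ k, p < V (grid T N k) ω := ⟨k, h⟩
    exact ⟨Nat.find hex, (Nat.find_min' hex h).trans hk,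
      fun j hj => not_lt.1 (Nat.find_min hex hj), Nat.find_spec hex⟩
  · rintro ⟨k, hk, h⟩
    exact ⟨k, hk, h.2⟩

lemma measurableSet_first (hm : ∀ t, Measurable (V t)) (T : ℝ≥0) (p : ℝ) (N k : ℕ) :
    MeasurableSet {ω | First V T p N k ω} := by
  have : {ω | First V T p N k ω}
      = (⋂ j : Fin k, {ω | V (grid T N j) ω ≤ p}) ∩ {ω | p < V (grid T N k) ω} := by
    ext ω
    simp only [First, mem_ofPred_eq, mem_inter_iff, mem_iInter]
    exact and_congr_left fun _ => ⟨fun h j => h j j.2, fun h j hj => h ⟨j, hj⟩⟩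
  rw [this]
  exact (MeasurableSet.iInter fun j => measurableSet_le (hm _) measurable_const).inter
    (measurableSet_lt measurable_const (hm _))

lemma refl_grid (hV : IsPreBrownianReal V μ) (hm : ∀ t, Measurable (V t)) (T : ℝ≥0) (p : ℝ) (N : ℕ)
    {I : Set ℝ} (hI : MeasurableSet I) :
    μ {ω | ∃ k ≤ N, First V T p N k ω ∧ V T ω ∈ I}
      = μ {ω | ∃ k ≤ N, First V T p N k ω ∧ 2 * V (grid T N k) ω - V T ω ∈ I} := by
  have key : ∀ f : ℕ → Ω → ℝ, (∀ k, Measurable (f k)) →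
      μ {ω | ∃ k ≤ N, First V T p N k ω ∧ f k ω ∈ I}
        = ∑ k ∈ Finset.range (N+1), μ {ω | First V T p N k ω ∧ f k ω ∈ I} := by
    intro f hf
    rw [← measure_biUnion_finset]
    · congr 1
      ext ω
      simp; grind
    · intro k _ l _ hkl
      simp only [Function.onFun]
      rw [Set.disjoint_left]
      rintro ω ⟨h, _⟩ ⟨h', _⟩
      exact hkl (h.unique h')
    · intro k _
      exact (measurableSet_first hm T p N k).inter (hf k hI)
  rw [key (fun _ => V T) (fun _ => hm T),
    key (fun k ω => 2 * V (grid T N k) ω - V T ω) (fun k => ((hm _).const_mul 2).sub (hm T))]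
  refine Finset.sum_congr rfl fun k hk => ?_
  have hk' : k ≤ N := by simpa [Nat.lt_succ_iff] using hk
  set A : Set (Iic (grid T N k) → ℝ) :=
    (⋂ j : Fin k, {x | x ⟨grid T N j, grid_mono T N j.2.le⟩ ≤ p}) ∩ {x | p < x ⟨grid T N k, mem_Iic.2 le_rfl⟩}
    with hAdef
  have hA : MeasurableSet A :=
    (MeasurableSet.iInter fun j => measurableSet_le (measurable_pi_apply _) measurable_const).inter
      (measurableSet_lt measurable_const (measurable_pi_apply _))
  have hAF : ∀ ω, (fun t : Iic (grid T N k) => V t ω) ∈ A ↔ First V T p N k ω := by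
    intro ω
    simp only [First, hAdef, mem_ofPred_eq, mem_inter_iff, mem_iInter]
    exact and_congr_left fun _ => ⟨fun h j hj => h ⟨j, hj⟩, fun h j => h j j.2⟩
  have := refl_step hV hm (grid_le hk') hA hI
  simpa only [hAF] using this

lemma exists_seq (T : ℝ≥0) : ∃ d : ℕ → ℝ≥0, (∀ n, d n ≤ T) ∧
    ∀ g : ℝ≥0 → ℝ, Continuous g → ((∃ t ≤ T, 0 < g t) ↔ ∃ n, 0 < g (d n)) := by
  have : Nonempty (Iic T) := ⟨⟨T, le_refl T⟩⟩
  refine ⟨fun n => (TopologicalSpace.denseSeq (Iic T) n : ℝ≥0),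
    fun n => (TopologicalSpace.denseSeq (Iic T) n).2, fun g hg => ⟨?_, ?_⟩⟩
  · rintro ⟨t, ht, h⟩
    have ho : IsOpen {x : Iic T | 0 < g x} :=
      isOpen_lt continuous_const (hg.comp continuous_subtype_val)
    exact (TopologicalSpace.denseRange_denseSeq (Iic T)).exists_mem_open ho ⟨⟨t, ht⟩, h⟩
  · rintro ⟨n, h⟩
    exact ⟨_, (TopologicalSpace.denseSeq (Iic T) n).2, h⟩

lemma measurableSet_hit (hm : ∀ t, Measurable (V t)) (hc : ∀ ω, Continuous fun t => V t ω)
    (T : ℝ≥0) (p : ℝ) : MeasurableSet {ω | ∃ t ≤ T, p < V t ω} := by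
  obtain ⟨d, hd, H⟩ := exists_seq T
  have : {ω | ∃ t ≤ T, p < V t ω} = ⋃ n, {ω | p < V (d n) ω} := by
    ext ω
    have := H (fun t => V t ω - p) ((hc ω).sub continuous_const)
    simpa using this
  rw [this]
  exact MeasurableSet.iUnion fun n => measurableSet_lt measurable_const (hm _)

lemma reflection (hV : IsPreBrownianReal V μ) (hm : ∀ t, Measurable (V t))
    (hc : ∀ ω, Continuous fun t => V t ω) (h0 : ∀ ω, V 0 ω = 0) {T : ℝ≥0} (hT : 0 < T) {p y z : ℝ}
    (hp : 0 ≤ p) (hz : z ≤ p) :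
    μ {ω | (∃ t ≤ T, p < V t ω) ∧ V T ω ∈ Ioo y z} = μ {ω | 2 * p - V T ω ∈ Ioo y z} := by
  have hI : MeasurableSet (Ioo y z) := measurableSet_Ioo
  have L1 : Tendsto (fun N : ℕ => μ {ω | ∃ k ≤ N, First V T p N k ω ∧ V T ω ∈ Ioo y z}) atTop
      (𝓝 (μ {ω | (∃ t ≤ T, p < V t ω) ∧ V T ω ∈ Ioo y z})) := by
    apply tendsto_measure_of_ae_tendsto_indicator_of_isFiniteMeasure
    · exact (measurableSet_hit hm hc T p).inter (hm T hI)
    · intro N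
      have : {ω | ∃ k ≤ N, First V T p N k ω ∧ V T ω ∈ Ioo y z}
          = ⋃ k ∈ Finset.range (N+1), {ω | First V T p N k ω ∧ V T ω ∈ Ioo y z} := by
        ext ω; simp; grind
      rw [this]
      exact Finset.measurableSet_biUnion _ fun k _ => (measurableSet_first hm T p N k).inter (hm T hI)
    · refine ae_of_all _ fun ω => ?_
      by_cases h : ∃ t ≤ T, p < V t ω
      · obtain ⟨t, ht, hpt⟩ := h
        filter_upwards [path_hit (hc ω) hT ht hpt] with N hN
        rw [exists_first] at hN
        obtain ⟨k, hk, hf⟩ := hN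
        constructor
        · rintro ⟨k, hk, hf, h⟩
          exact ⟨⟨t, ht, hpt⟩, h⟩
        · rintro ⟨_, h⟩
          exact ⟨k, hk, hf, h⟩
      · refine Eventually.of_forall fun N => ?_
        simp only [mem_ofPred_eq]
        constructor
        · rintro ⟨k, hk, hf, h'⟩
          exact absurd ⟨_, grid_le hk, hf.2⟩ h
        · rintro ⟨h', _⟩
          exact absurd h' h
  have L2 : Tendsto (fun N : ℕ => μ {ω | ∃ k ≤ N, First V T p N k ω ∧
      2 * V (grid T N k) ω - V T ω ∈ Ioo y z}) atTop (𝓝 (μ {ω | 2 * p - V T ω ∈ Ioo y z})) := by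
    apply tendsto_measure_of_ae_tendsto_indicator_of_isFiniteMeasure
    · exact (measurable_const.sub (hm T)) hI
    · intro N
      have : {ω | ∃ k ≤ N, First V T p N k ω ∧ 2 * V (grid T N k) ω - V T ω ∈ Ioo y z}
          = ⋃ k ∈ Finset.range (N+1),
            {ω | First V T p N k ω ∧ 2 * V (grid T N k) ω - V T ω ∈ Ioo y z} := by
        ext ω; simp; grind
      rw [this]
      exact Finset.measurableSet_biUnion _ fun k _ => (measurableSet_first hm T p N k).inter
        ((((hm _).const_mul 2).sub (hm T)) hI)
    · have hne : ∀ c : ℝ, ∀ᵐ ω ∂μ, V T ω ≠ c := by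
        intro c
        have hl := (hV.hasLaw_eval T).map_eq
        have := nullSingletonClass_gaussianReal (μ := 0) hT.ne'
        have : μ.map (V T) {c} = 0 := by rw [hl]; exact measure_singleton c
        rw [Measure.map_apply (hm T) (measurableSet_singleton c)] at this
        rw [ae_iff]
        simpa [preimage] using this
      filter_upwards [hne (2 * p - y), hne (2 * p - z)] with ω hy1 hz1
      by_cases h : 2 * p - V T ω ∈ Ioo y z
      · have hhit : p < V T ω := by have := h.2; linarith
        set δ := min (2 * p - V T ω - y) (z - (2 * p - V T ω)) with hδ
        have hδ0 : 0 < δ := lt_min (by linarith [h.1]) (by linarith [h.2])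
        filter_upwards [path_hit (hc ω) hT le_rfl hhit,
          path_first (T := T) (hc ω) (h0 ω) hp (half_pos hδ0)] with N hN hN2
        rw [exists_first] at hN
        obtain ⟨k, hk, hf⟩ := hN
        refine ⟨fun _ => h, fun _ => ⟨k, hk, hf, ?_⟩⟩
        have h3 := hN2 k hk hf.1 hf.2
        have h1 := min_le_left (2 * p - V T ω - y) (z - (2 * p - V T ω))
        have h2 := min_le_right (2 * p - V T ω - y) (z - (2 * p - V T ω))
        rw [← hδ] at h1 h2
        rw [abs_lt] at h3
        constructor <;> linarith [h3.1, h3.2]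
      · have : 2 * p - V T ω < y ∨ z < 2 * p - V T ω := by
          by_contra hcon
          push Not at hcon
          apply h
          refine ⟨lt_of_le_of_ne hcon.1 ?_, lt_of_le_of_ne hcon.2 ?_⟩
          · intro e; apply hy1; linarith
          · intro e; apply hz1; linarith
        obtain ⟨δ, hδ0, hδ⟩ : ∃ δ > 0, 2 * p - V T ω + δ ≤ y ∨ z ≤ 2 * p - V T ω - δ := by
          rcases this with h | h
          · exact ⟨y - (2 * p - V T ω), by linarith, Or.inl (by linarith)⟩
          · exact ⟨2 * p - V T ω - z, by linarith, Or.inr (by linarith)⟩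
        filter_upwards [path_first (T := T) (hc ω) (h0 ω) hp (half_pos hδ0)] with N hN2
        refine ⟨?_, fun h' => absurd h' h⟩
        rintro ⟨k, hk, hf, h'⟩
        have h3 := hN2 k hk hf.1 hf.2
        rw [abs_lt] at h3
        exfalso
        rcases hδ with hδ | hδ
        · linarith [h3.1, h3.2, h'.1, h'.2]
        · linarith [h3.1, h3.2, h'.1, h'.2]
  have heq := fun N => refl_grid hV hm T p N hI
  simp only [heq] at L1
  exact tendsto_nhds_unique L1 L2

lemma bridge_indep (hV : IsPreBrownianReal V μ) {T : ℝ≥0} (hT : 0 < T) :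
    IndepFun (fun ω (t : Iic T) => V t ω - (t : ℝ≥0) / T * V T ω) (V T) μ := by
  have h : IndepFun (fun ω (t : Iic T) => V t ω - (t : ℝ≥0) / T * V T ω)
      (fun ω (_ : Unit) => V T ω) μ := by
    have mX t := hV.aemeasurable t
    apply IsGaussianProcess.indepFun_of_covariance_eq_zero
      (X := fun (t : Iic T) ω => V t ω - (t : ℝ≥0) / T * V T ω) (Y := fun (_ : Unit) ω => V T ω)
    · apply hV.isGaussianProcess.of_isGaussianProcess
      rintro (⟨t, ht⟩ | t)
      · exact ⟨{t, T},
          { toFun x := x ⟨t, by simp⟩ - (t : ℝ) / T * x ⟨T, by simp⟩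
            map_add' x y := by simp; ring
            map_smul' c x := by simp; ring }, by simp⟩
      · exact ⟨{T},
          { toFun x := x ⟨T, by simp⟩
            map_add' x y := by simp
            map_smul' c x := by simp }, by simp⟩
    · intro t; exact (mX t).sub ((mX T).const_mul _)
    · intro _; exact mX T
    · rintro ⟨t, ht⟩ _
      have ht' : t ≤ T := ht
      have hL := fun t => (hV.isGaussianProcess.hasGaussianLaw_eval t).memLp_two
      have hT' : (T : ℝ) ≠ 0 := by exact_mod_cast hT.ne'
      rw [covariance_fun_sub_left (hL _) ((hL T).const_mul _) (hL T), covariance_const_mul_left,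
        hV.covariance_eval, hV.covariance_eval, min_eq_left ht', min_self]
      field_simp
      simp
  exact h.comp (φ := id) (ψ := fun x : Unit → ℝ => x ()) measurable_id (by fun_prop)

/-- the bridge crosses the line from `p` to `q` -/
def Cross (V : ℝ≥0 → Ω → ℝ) (T : ℝ≥0) (p q : ℝ) : Set Ω :=
  {ω | ∃ t ≤ T, p * (1 - (t : ℝ) / T) + q * ((t : ℝ) / T) < V t ω - (t : ℝ) / T * V T ω}

lemma cross_indep (hV : IsPreBrownianReal V μ) (hc : ∀ ω, Continuous fun t => V t ω)
    {T : ℝ≥0} (hT : 0 < T) (p q : ℝ) {I : Set ℝ} (hI : MeasurableSet I) :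
    μ (Cross V T p q ∩ (V T) ⁻¹' I) = μ (Cross V T p q) * μ ((V T) ⁻¹' I) := by
  obtain ⟨d, hd, H⟩ := exists_seq T
  set A : Set (Iic T → ℝ) := ⋃ n, {x | p * (1 - (d n : ℝ) / T) + q * ((d n : ℝ) / T)
    < x ⟨d n, mem_Iic.2 (hd n)⟩} with hA
  have hAm : MeasurableSet A := MeasurableSet.iUnion fun n =>
    measurableSet_lt measurable_const (measurable_pi_apply _)
  have hE : Cross V T p q = (fun ω (t : Iic T) => V t ω - (t : ℝ≥0) / T * V T ω) ⁻¹' A := by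
    ext ω
    have hcω := hc ω
    have := H (fun t => V t ω - (t : ℝ) / T * V T ω - (p * (1 - (t : ℝ) / T) + q * ((t : ℝ) / T)))
      (by fun_prop)
    simp only [sub_pos] at this
    simp only [hA, mem_preimage, mem_iUnion]
    exact this
  rw [hE]
  exact (bridge_indep hV hT).measure_inter_preimage_eq_mul _ _ hAm hI

lemma pdf_shift {T : ℝ≥0} (hT : 0 < T) (p x : ℝ) :
    gaussianPDF (2 * p) T x = ENNReal.ofReal (Real.exp (-2 * p * (p - x) / T)) * gaussianPDF 0 T x := by
  have hT' : (T : ℝ) ≠ 0 := by exact_mod_cast hT.ne'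
  rw [gaussianPDF, gaussianPDF, ← ENNReal.ofReal_mul (Real.exp_pos _).le]
  congr 1
  rw [gaussianPDFReal, gaussianPDFReal, mul_left_comm, ← Real.exp_add]
  congr 2
  field_simp
  ring

lemma gauss_upper {T : ℝ≥0} (hT : 0 < T) {p : ℝ} {I : Set ℝ} (hI : MeasurableSet I) {c : ℝ}
    (h : ∀ x ∈ I, Real.exp (-2 * p * (p - x) / T) ≤ c) :
    gaussianReal (2 * p) T I ≤ ENNReal.ofReal c * gaussianReal 0 T I := by
  rw [gaussianReal_apply _ hT.ne', gaussianReal_apply _ hT.ne',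
    ← lintegral_const_mul _ (measurable_gaussianPDF _ _)]
  apply setLIntegral_mono' hI
  intro x hx
  rw [pdf_shift hT]
  gcongr
  exact h x hx

lemma gauss_lower {T : ℝ≥0} (hT : 0 < T) {p : ℝ} {I : Set ℝ} (hI : MeasurableSet I) {c : ℝ}
    (h : ∀ x ∈ I, c ≤ Real.exp (-2 * p * (p - x) / T)) :
    ENNReal.ofReal c * gaussianReal 0 T I ≤ gaussianReal (2 * p) T I := by
  rw [gaussianReal_apply _ hT.ne', gaussianReal_apply _ hT.ne',
    ← lintegral_const_mul _ (measurable_gaussianPDF _ _)]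
  apply setLIntegral_mono' hI
  intro x hx
  rw [pdf_shift hT]
  gcongr
  exact h x hx

lemma gauss_pos {T : ℝ≥0} (hT : 0 < T) {y z : ℝ} (h : y < z) : gaussianReal 0 T (Ioo y z) ≠ 0 := by
  intro h0
  have := gaussianReal_absolutelyContinuous' 0 hT.ne' h0
  simp at this
  linarith

lemma cross_upper (hV : IsPreBrownianReal V μ) (hm : ∀ t, Measurable (V t))
    (hc : ∀ ω, Continuous fun t => V t ω) (h0 : ∀ ω, V 0 ω = 0) {T : ℝ≥0} (hT : 0 < T) {p q h : ℝ}
    (hp : 0 ≤ p) (hh : 0 < h) (hq : h ≤ q) :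
    μ (Cross V T p q) ≤ ENNReal.ofReal (Real.exp (-2 * p * (q - h) / T)) := by
  have hTR : (0 : ℝ) < T := by exact_mod_cast hT
  set y := p - q with hy
  have hI : MeasurableSet (Ioo y (y + h)) := measurableSet_Ioo
  have e1 := cross_indep (μ := μ) hV hc hT p q hI
  have e2 := reflection (μ := μ) hV hm hc h0 hT (y := y) hp (show y + h ≤ p by linarith)
  have e3 : μ ((V T) ⁻¹' Ioo y (y + h)) = gaussianReal 0 T (Ioo y (y + h)) := by
    rw [← (hV.hasLaw_eval T).map_eq, Measure.map_apply (hm T) hI]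
  have e4 : μ {ω | 2 * p - V T ω ∈ Ioo y (y + h)} = gaussianReal (2 * p) T (Ioo y (y + h)) := by
    have := gaussianReal_const_sub (hV.hasLaw_eval T) (2 * p)
    rw [sub_zero] at this
    have hm2 : Measurable (fun ω => 2 * p - V T ω) := measurable_const.sub (hm T)
    rw [← this.map_eq, Measure.map_apply hm2 hI]
    rfl
  have hsub : Cross V T p q ∩ (V T) ⁻¹' Ioo y (y + h)
      ⊆ {ω | (∃ t ≤ T, p < V t ω) ∧ V T ω ∈ Ioo y (y + h)} := by
    rintro ω ⟨⟨t, ht, h1⟩, h2⟩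
    refine ⟨⟨t, ht, ?_⟩, h2⟩
    have h3 : 0 ≤ (t : ℝ) / T := by positivity
    have h4 : y < V T ω := h2.1
    have : 0 ≤ (t : ℝ) / T * (V T ω - y) := mul_nonneg h3 (by linarith)
    rw [hy] at this
    linarith
  have key := measure_mono (μ := μ) hsub
  rw [e1, e2, e3, e4] at key
  have key2 := key.trans (gauss_upper hT (c := Real.exp (-2 * p * (q - h) / T)) hI (by
    intro x hx
    apply Real.exp_le_exp.2
    apply div_le_div_of_nonneg_right _ hTR.le
    have : 0 ≤ p * (y + h - x) := mul_nonneg hp (by linarith [hx.2])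
    rw [hy] at this
    nlinarith))
  rwa [ENNReal.mul_le_mul_iff_left (gauss_pos hT (by linarith)) (measure_ne_top _ _)] at key2

lemma cross_lower (hV : IsPreBrownianReal V μ) (hm : ∀ t, Measurable (V t))
    (hc : ∀ ω, Continuous fun t => V t ω) (h0 : ∀ ω, V 0 ω = 0) {T : ℝ≥0} (hT : 0 < T) {p q h : ℝ}
    (hp : 0 ≤ p) (hh : 0 < h) (hq : 0 ≤ q) :
    ENNReal.ofReal (Real.exp (-2 * p * (q + h) / T)) ≤ μ (Cross V T p q) := by
  have hTR : (0 : ℝ) < T := by exact_mod_cast hT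
  set z := p - q with hz
  have hI : MeasurableSet (Ioo (z - h) z) := measurableSet_Ioo
  have e1 := cross_indep (μ := μ) hV hc hT p q hI
  have e2 := reflection (μ := μ) hV hm hc h0 hT (y := z - h) hp (show z ≤ p by linarith)
  have e3 : μ ((V T) ⁻¹' Ioo (z - h) z) = gaussianReal 0 T (Ioo (z - h) z) := by
    rw [← (hV.hasLaw_eval T).map_eq, Measure.map_apply (hm T) hI]
  have e4 : μ {ω | 2 * p - V T ω ∈ Ioo (z - h) z} = gaussianReal (2 * p) T (Ioo (z - h) z) := by
    have := gaussianReal_const_sub (hV.hasLaw_eval T) (2 * p)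
    rw [sub_zero] at this
    have hm2 : Measurable (fun ω => 2 * p - V T ω) := measurable_const.sub (hm T)
    rw [← this.map_eq, Measure.map_apply hm2 hI]
    rfl
  have hsub : {ω | (∃ t ≤ T, p < V t ω) ∧ V T ω ∈ Ioo (z - h) z}
      ⊆ Cross V T p q ∩ (V T) ⁻¹' Ioo (z - h) z := by
    rintro ω ⟨⟨t, ht, h1⟩, h2⟩
    refine ⟨⟨t, ht, ?_⟩, h2⟩
    have h3 : 0 ≤ (t : ℝ) / T := by positivity
    have h4 : V T ω < z := h2.2
    have : 0 ≤ (t : ℝ) / T * (z - V T ω) := mul_nonneg h3 (by linarith)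
    rw [hz] at this
    linarith
  have key := measure_mono (μ := μ) hsub
  rw [e1, e2, e3, e4] at key
  have key2 := (gauss_lower hT (c := Real.exp (-2 * p * (q + h) / T)) hI (by
    intro x hx
    apply Real.exp_le_exp.2
    apply div_le_div_of_nonneg_right _ hTR.le
    have : 0 ≤ p * (x - (z - h)) := mul_nonneg hp (by linarith [hx.1])
    rw [hz] at this
    nlinarith)).trans key
  rwa [ENNReal.mul_le_mul_iff_left (gauss_pos hT (by linarith)) (measure_ne_top _ _)] at key2

lemma cross_eq (hV : IsPreBrownianReal V μ) (hm : ∀ t, Measurable (V t))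
    (hc : ∀ ω, Continuous fun t => V t ω) (h0 : ∀ ω, V 0 ω = 0) {T : ℝ≥0} (hT : 0 < T) {p q : ℝ}
    (hp : 0 ≤ p) (hq : 0 ≤ q) :
    μ (Cross V T p q) = ENNReal.ofReal (Real.exp (-2 * p * q / T)) := by
  apply le_antisymm
  · rcases hq.eq_or_lt with rfl | hq
    · simpa using prob_le_one
    have hcont : Continuous (fun h : ℝ => ENNReal.ofReal (Real.exp (-2 * p * (q - h) / T))) :=
      ENNReal.continuous_ofReal.comp (by fun_prop)
    have hl : Tendsto (fun h : ℝ => ENNReal.ofReal (Real.exp (-2 * p * (q - h) / T))) (𝓝[>] 0)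
        (𝓝 (ENNReal.ofReal (Real.exp (-2 * p * q / T)))) := by
      have := (hcont.tendsto 0).mono_left (nhdsWithin_le_nhds (s := Ioi 0))
      simpa using this
    refine ge_of_tendsto hl ?_
    filter_upwards [Ioc_mem_nhdsGT hq] with h hh
    exact cross_upper hV hm hc h0 hT hp hh.1 hh.2
  · have hcont : Continuous (fun h : ℝ => ENNReal.ofReal (Real.exp (-2 * p * (q + h) / T))) :=
      ENNReal.continuous_ofReal.comp (by fun_prop)
    have hl : Tendsto (fun h : ℝ => ENNReal.ofReal (Real.exp (-2 * p * (q + h) / T))) (𝓝[>] 0)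
        (𝓝 (ENNReal.ofReal (Real.exp (-2 * p * q / T)))) := by
      have := (hcont.tendsto 0).mono_left (nhdsWithin_le_nhds (s := Ioi 0))
      simpa using this
    refine le_of_tendsto hl ?_
    filter_upwards [self_mem_nhdsWithin] with h hh
    exact cross_lower hV hm hc h0 hT hp hh hq

lemma preBrownian_of_real {W : ℝ → Ω → ℝ}
    (hWmeas : ∀ t, Measurable (W t))
    (hW0 : ∀ ω, W 0 ω = 0)
    (hWgauss : ∀ s t : ℝ, 0 ≤ s → s ≤ t →
      μ.map (fun ω => W t ω - W s ω) = gaussianReal 0 (Real.toNNReal (t - s)))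
    (hWindep : ∀ (n : ℕ) (ts : ℕ → ℝ), Monotone ts → (∀ i, 0 ≤ ts i) →
      iIndepFun
        (fun (i : Fin n) ω => W (ts (i + 1)) ω - W (ts i) ω) μ) :
    IsPreBrownianReal (fun (t : ℝ≥0) ω => W t ω) μ := by
  apply HasIndepIncrements.isPreBrownianReal_of_hasLaw
  · intro t
    refine ⟨(hWmeas t).aemeasurable, ?_⟩
    have := hWgauss 0 t le_rfl t.2
    simpa [hW0] using this
  · intro n t ht
    let t' : ℕ → ℝ := fun k => (t ⟨min n k, by omega⟩ : ℝ)
    have := hWindep n t' (fun a b hab => by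
      apply NNReal.coe_le_coe.2
      apply ht
      simp only [Fin.mk_le_mk]
      omega) (fun i => NNReal.coe_nonneg _)
    convert! this using 3 with i ω
    simp only [t']
    have h1 : i.succ = ⟨min n (i + 1), by omega⟩ := by ext; simp
    have h2 : i.castSucc = ⟨min n i, by omega⟩ := by ext; simp
    rw [h1, h2]

lemma uniform_side {U : Ω → ℝ} (hUmeas : Measurable U)
    (hU : μ.map U = volume.restrict (Set.Ioo (0 : ℝ) 1)) {f : ℝ → ℝ} (hf : Measurable f) {m c : ℝ}
    (h : ∀ u ∈ Ioo (0 : ℝ) 1, f u < m ↔ u < c) (hc : c ≤ 1) :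
    μ.map (fun ω => f (U ω)) (Iio m) = ENNReal.ofReal c := by
  have : μ.map (fun ω => f (U ω)) = (μ.map U).map f := by
    rw [Measure.map_map hf hUmeas]; rfl
  rw [this, hU, Measure.map_apply hf measurableSet_Iio,
    Measure.restrict_apply (hf measurableSet_Iio)]
  have hs : f ⁻¹' Iio m ∩ Ioo 0 1 = Ioo 0 c := by
    ext u
    constructor
    · rintro ⟨h1, h2⟩
      exact ⟨h2.1, (h u h2).1 h1⟩
    · rintro ⟨h1, h2⟩
      have h3 : u ∈ Ioo (0 : ℝ) 1 := ⟨h1, h2.trans_le hc⟩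
      exact ⟨(h u h3).2 h2, h3⟩
  rw [hs, Real.volume_Ioo, sub_zero]

end BBMin

/-- sampling the minimum of a Brownian bridge.
With `W` a standard scalar Brownian motion and `B t = a + (t/T)(b − a) + σ(W t − (t/T) W T)`
the Brownian bridge from `a` to `b` over `[0,T]` with volatility `σ`, and `U` uniformly
distributed on `(0,1)`, the random variable
`M = ½(a + b − √((b − a)² − 2σ²T log U))` has the same distribution as `inf_{0≤t≤T} B t`. -/
theorem brownian_bridge_min_sampling
    {Ω : Type*} [MeasurableSpace Ω] (μ : Measure Ω) [IsProbabilityMeasure μ]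
    (W : ℝ → Ω → ℝ)
    (hWmeas : ∀ t, Measurable (W t))
    (hW0 : ∀ ω, W 0 ω = 0)
    (hWcont : ∀ ω, Continuous fun t => W t ω)
    (hWgauss : ∀ s t : ℝ, 0 ≤ s → s ≤ t →
      μ.map (fun ω => W t ω - W s ω) = gaussianReal 0 (Real.toNNReal (t - s)))
    (hWindep : ∀ (n : ℕ) (ts : ℕ → ℝ), Monotone ts → (∀ i, 0 ≤ ts i) →
      iIndepFun
        (fun (i : Fin n) ω => W (ts (i + 1)) ω - W (ts i) ω) μ)
    (T σ a b : ℝ) (hT : 0 < T) (hσ : σ ≠ 0)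
    (U : Ω → ℝ) (hUmeas : Measurable U)
    (hU : μ.map U = volume.restrict (Set.Ioo (0 : ℝ) 1)) :
    μ.map (fun ω => (1 / 2) * (a + b - Real.sqrt ((b - a) ^ 2 - 2 * σ ^ 2 * T * Real.log (U ω))))
      = μ.map (fun ω =>
          sInf ((fun t => a + t / T * (b - a) + σ * (W t ω - t / T * W T ω)) '' Set.Icc 0 T)) := by
  have hσ2 : 0 < σ ^ 2 := by positivity
  have habs : 0 < |σ| := abs_pos.2 hσ
  obtain ⟨T', rfl⟩ : ∃ T' : ℝ≥0, (T' : ℝ) = T := ⟨⟨T, hT.le⟩, rfl⟩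
  have hT' : 0 < T' := by exact_mod_cast hT
  have hB := BBMin.preBrownian_of_real hWmeas hW0 hWgauss hWindep
  -- the driving Brownian motion with the right sign
  set V : ℝ≥0 → Ω → ℝ := fun t ω => -(σ / |σ|) * W t ω with hVdef
  have hV : IsPreBrownianReal V μ := by
    rcases lt_or_gt_of_ne hσ with h | h
    · have : V = fun (t : ℝ≥0) ω => W t ω := by
        funext t ω
        simp only [hVdef, abs_of_neg h]
        field_simp
      rw [this]; exact hB
    · have : V = - fun (t : ℝ≥0) ω => W t ω := by
        funext t ω
        simp only [hVdef, abs_of_pos h, Pi.neg_apply]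
        field_simp
      rw [this]; exact hB.neg
  have hVm : ∀ t, Measurable (V t) := fun t => (hWmeas t).const_mul _
  have hVc : ∀ ω, Continuous fun t => V t ω := fun ω =>
    continuous_const.mul ((hWcont ω).comp NNReal.continuous_coe)
  have hV0 : ∀ ω, V 0 ω = 0 := fun ω => by simp [hVdef, hW0]
  set B : ℝ → Ω → ℝ := fun t ω => a + t / T' * (b - a) + σ * (W t ω - t / T' * W T' ω) with hBdef
  have hBc : ∀ ω, Continuous fun t => B t ω := fun ω => by
    have := hWcont ω
    simp only [hBdef]
    fun_prop
  have hBm : ∀ t, Measurable (B t) := fun t =>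
    measurable_const.add (((hWmeas t).sub ((hWmeas _).const_mul _)).const_mul _)
  set J : Ω → ℝ := fun ω => sInf ((fun t => B t ω) '' Set.Icc 0 (T' : ℝ)) with hJ
  have hJlt : ∀ m ω, J ω < m ↔ ∃ t : ℝ≥0, t ≤ T' ∧ B t ω < m := by
    intro m ω
    rw [hJ]
    simp only
    rw [csInf_lt_iff]
    · constructor
      · rintro ⟨_, ⟨t, ht, rfl⟩, h⟩
        exact ⟨⟨t, ht.1⟩, ht.2, h⟩
      · rintro ⟨t, ht, h⟩
        exact ⟨_, ⟨t, ⟨t.2, ht⟩, rfl⟩, h⟩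
    · exact (isCompact_Icc.image (hBc ω)).bddBelow
    · exact ⟨_, 0, ⟨le_rfl, T'.2⟩, rfl⟩
  have hJm : Measurable J := by
    refine measurable_of_Iio fun m => ?_
    obtain ⟨d, hd, H⟩ := BBMin.exists_seq T'
    have : J ⁻¹' Iio m = ⋃ n, {ω | B (d n) ω < m} := by
      ext ω
      have h := H (fun t => m - B t ω) (continuous_const.sub ((hBc ω).comp NNReal.continuous_coe))
      simp only [sub_pos] at h
      rw [mem_preimage, mem_Iio, hJlt, h]
      simp
    rw [this]
    exact MeasurableSet.iUnion fun n => measurableSet_lt (hBm _) measurable_const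
  set f : ℝ → ℝ := fun u =>
    (1 / 2) * (a + b - Real.sqrt ((b - a) ^ 2 - 2 * σ ^ 2 * T' * Real.log u)) with hf
  have hfm : Measurable f := by
    simp only [hf]
    fun_prop
  change μ.map (fun ω => f (U ω)) = μ.map J
  have key : ∀ m, μ.map (fun ω => f (U ω)) (Iio m) = μ.map J (Iio m) := by
    intro m
    rw [Measure.map_apply hJm measurableSet_Iio]
    by_cases hm : m ≤ a ∧ m ≤ b
    · obtain ⟨hma, hmb⟩ := hm
      have hprod : 0 ≤ (a - m) * (b - m) := mul_nonneg (by linarith) (by linarith)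
      have hset : J ⁻¹' Iio m = BBMin.Cross V T' ((a - m) / |σ|) ((b - m) / |σ|) := by
        ext ω
        rw [mem_preimage, mem_Iio, hJlt]
        refine exists_congr fun t => and_congr_right fun ht => ?_
        have e1 : (a - m) / |σ| * (1 - (t : ℝ) / T') + (b - m) / |σ| * ((t : ℝ) / T')
          = ((a - m) * (1 - (t : ℝ) / T') + (b - m) * ((t : ℝ) / T')) / |σ| := by ring
        have e2 : V t ω - (t : ℝ) / T' * V T' ω
          = (-σ * (W t ω - (t : ℝ) / T' * W T' ω)) / |σ| := by
          simp only [hVdef]; ring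
        rw [e1, e2, div_lt_div_iff_of_pos_right habs]
        simp only [hBdef]
        constructor <;> intro h <;> linarith
      rw [hset, BBMin.cross_eq hV hVm hVc hV0 hT' (div_nonneg (by linarith) habs.le)
        (div_nonneg (by linarith) habs.le)]
      have hexp : -2 * ((a - m) / |σ|) * ((b - m) / |σ|) / (T' : ℝ)
          = -(2 * ((a - m) * (b - m)) / (σ ^ 2 * T')) := by
        rw [← sq_abs σ]; field_simp
      rw [hexp]
      apply BBMin.uniform_side hUmeas hU hfm
      · intro u hu
        rw [← Real.log_lt_iff_lt_exp hu.1]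
        have h1 : f u < m ↔ a + b - 2 * m
            < Real.sqrt ((b - a) ^ 2 - 2 * σ ^ 2 * T' * Real.log u) := by
          simp only [hf]
          constructor <;> intro h <;> linarith
        rw [h1, Real.lt_sqrt (by linarith), ← neg_div, lt_div_iff₀ (by positivity)]
        constructor <;> intro h <;> nlinarith
      · rw [Real.exp_le_one_iff]
        have : 0 ≤ 2 * ((a - m) * (b - m)) / (σ ^ 2 * T') := by positivity
        linarith
    · have hset : J ⁻¹' Iio m = univ := by
        ext ω
        simp only [mem_preimage, mem_Iio, mem_univ, iff_true]
        rw [hJlt]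
        by_cases h : m ≤ a
        · refine ⟨T', le_rfl, ?_⟩
          have hb : b < m := by
            by_contra hcon
            exact hm ⟨h, not_lt.1 hcon⟩
          simp only [hBdef]
          rw [div_self hT.ne']
          linarith
        · refine ⟨0, zero_le, ?_⟩
          push Not at h
          simp [hBdef, hW0, h]
      rw [hset, measure_univ, ← ENNReal.ofReal_one]
      apply BBMin.uniform_side hUmeas hU hfm _ le_rfl
      intro u hu
      refine ⟨fun _ => hu.2, fun _ => ?_⟩
      have hlog : Real.log u ≤ 0 := Real.log_nonpos hu.1.le hu.2.le
      have hge : |b - a| ≤ Real.sqrt ((b - a) ^ 2 - 2 * σ ^ 2 * T' * Real.log u) := by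
        rw [← Real.sqrt_sq_eq_abs]
        apply Real.sqrt_le_sqrt
        have : 0 ≤ 2 * σ ^ 2 * T' * (-Real.log u) := by
          apply mul_nonneg (by positivity) (by linarith)
        linarith
      simp only [hf]
      have h1 := le_abs_self (b - a)
      have h2 := neg_abs_le (b - a)
      by_cases h : m ≤ a
      · have hb : b < m := by
          by_contra hcon
          exact hm ⟨h, not_lt.1 hcon⟩
        linarith
      · push Not at h
        linarith
  have hfU : Measurable (fun ω => f (U ω)) := hfm.comp hUmeas
  have : IsProbabilityMeasure (μ.map (fun ω => f (U ω))) :=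
    Measure.isProbabilityMeasure_map hfU.aemeasurable
  have : IsProbabilityMeasure (μ.map J) := Measure.isProbabilityMeasure_map hJm.aemeasurable
  refine Measure.ext_of_Ici _ _ fun m => ?_
  rw [← compl_Iio, prob_compl_eq_one_sub measurableSet_Iio, prob_compl_eq_one_sub measurableSet_Iio,
    key]
end
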